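/- Let K and L be two algebraically closed fields (possibly of different characteristics) and n, m positive integers. Then for every degree d ≥ 0, the K-dimension of the degree-d homogeneous component of R_K(n,m) = K[Mat_{n,n}^m]^{SL_n × SL_n} equals the L-dimension of the degree-d component of R_L(n,m), and the K-dimension of the degree-d component of S_K(n,m) = K[Mat_{n,n}^m]^{GL_n} equals the L-dimension of the degree-d component of S_L(n,m). Equivalently, the Hilbert series H(R(n,m),t) and H(S(n,m),t) are independent of the underlying algebraically closed field. -/

import Mathlib

open MvPolynomial Matrix

/-- Coordinate functions of an `m`-tuple of `n × n` matrices. -/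
def matCoords {K : Type} [Field K] {n m : ℕ} (X : Fin m → Matrix (Fin n) (Fin n) K) :
    Fin m × Fin n × Fin n → K :=
  fun p => X p.1 p.2.1 p.2.2

/-- The ring of matrix semi-invariants `R(n,m) = K[Mat_{n,n}^m]^{SL_n × SL_n}`, where
`(A,B)` acts by `(X_1, …, X_m) ↦ (A X_1 B⁻¹, …, A X_m B⁻¹)`. -/
noncomputable def matrixSemiInvariants (K : Type) [Field K] (n m : ℕ) :
    Subalgebra K (MvPolynomial (Fin m × Fin n × Fin n) K) :=
  ⨅ (A : SpecialLinearGroup (Fin n) K) (B : SpecialLinearGroup (Fin n) K)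
    (X : Fin m → Matrix (Fin n) (Fin n) K),
      AlgHom.equalizer
        (aeval (matCoords fun i => A.val * X i * (B⁻¹).val))
        (aeval (matCoords X))

/-- The ring of matrix invariants `S(n,m) = K[Mat_{n,n}^m]^{GL_n}`, where `A` acts by
simultaneous conjugation. -/
noncomputable def matrixInvariants (K : Type) [Field K] (n m : ℕ) :
    Subalgebra K (MvPolynomial (Fin m × Fin n × Fin n) K) :=
  ⨅ (A : GeneralLinearGroup (Fin n) K) (X : Fin m → Matrix (Fin n) (Fin n) K),
      AlgHom.equalizer
        (aeval (matCoords fun i => A.val * X i * (A⁻¹).val))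
        (aeval (matCoords X))

/-!
Multiplicities in modules for the general linear group may depend on the characteristic, but the
dimensions of spaces of highest weight vectors in polynomial functions on matrices do not. With
respect to a suitable monomial order the leading exponent of a highest weight vector is always
Yamanouchi (a lattice word). If `M` is a stable space of polynomials, evaluating matrix coefficients
embeds the successive quotients of a filtration of `M` into copies of induced modules, and the
induced module of highest weight `mu` has dimension at most the number of semistandard tableaux of
shape `mu`. On the other hand Stembridge's sign-reversing involution shows, for the `M` considered
here, that the leading exponents of `M` are counted exactly by the pairs of a Yamanouchi exponent
and a tableau of the corresponding shape. So every inequality is an equality, and the leading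
exponents of the highest weight vectors in `M` are exactly the Yamanouchi ones. This applies first
to the rows of the matrices and then, on what is left, to their columns.

Semi-invariants of degree `n * k` are the vectors of highest weight `(k, …, k)` on both sides.
Invariants of degree `d` of `m` matrices are obtained by setting `Z = 1` in the semi-invariants of
`m + 1` matrices `Y₁, …, Yₘ, Z` of weight `det ^ d` and of degree `d` in the `Yᵢ`; the inverse map
substitutes `Yᵢ * adj Z` for `Yᵢ`.
-/

/-! ### Alternants -/

section Alternants

variable {N : ℕ}

/-- The alternant `det (X_i ^ b_j)`, the numerator in the bialternant formula for Schur
polynomials. -/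
noncomputable def alternant (b : Fin (N + 1) → ℕ) : MvPolynomial (Fin (N + 1)) ℤ :=
  (Matrix.of fun i j => X i ^ b j).det

/-- The exponent `ρ = (N, N - 1, …, 0)`, whose alternant is the Vandermonde determinant. -/
def staircase (j : Fin (N + 1)) : ℕ := j.rev

lemma staircase_castSucc (j : Fin N) :
    staircase j.castSucc = staircase j.succ + 1 := by
  simp only [staircase, Fin.val_rev, Fin.val_castSucc, Fin.val_succ]
  lia

lemma alternant_comp_perm (b : Fin (N + 1) → ℕ) (π : Equiv.Perm (Fin (N + 1))) :
    alternant (b ∘ π) = (Equiv.Perm.sign π : MvPolynomial (Fin (N + 1)) ℤ) * alternant b :=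
  Matrix.det_permute' π (Matrix.of fun i j => (X i : MvPolynomial (Fin (N + 1)) ℤ) ^ b j)

lemma alternant_staircase_ne_zero : alternant (staircase (N := N)) ≠ 0 := by
  have vandermonde_ne : alternant (fun j : Fin (N + 1) => (j : ℕ)) ≠ 0 :=
    Matrix.det_vandermonde_ne_zero_iff.mpr X_injective
  have reversed : staircase (N := N) =
      (fun j : Fin (N + 1) => (j : ℕ)) ∘ (Fin.revPerm : Equiv.Perm (Fin (N + 1))) := rfl
  rw [reversed, alternant_comp_perm]
  refine mul_ne_zero ?_ vandermonde_ne
  obtain h | h := Int.units_eq_one_or (Equiv.Perm.sign (Fin.revPerm (n := N + 1))) <;> simp [h]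

lemma alternant_eq_neg_of_swap {b b' : Fin (N + 1) → ℕ} (j : Fin N)
    (h_left : b' j.castSucc = b j.succ) (h_right : b' j.succ = b j.castSucc)
    (h_other : ∀ k, k ≠ j.castSucc → k ≠ j.succ → b' k = b k) :
    alternant b' = -alternant b := by
  have h_swap : b' = b ∘ Equiv.swap j.castSucc j.succ := by
    funext k
    rcases eq_or_ne k j.castSucc with rfl | hk
    · simp [h_left]
    rcases eq_or_ne k j.succ with rfl | hk'
    · simp [h_right]
    · simp [Equiv.swap_apply_of_ne_of_ne hk hk', h_other k hk hk']
  rw [h_swap, alternant_comp_perm, Equiv.Perm.sign_swap Fin.castSucc_lt_succ.ne]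
  simp

lemma alternant_eq_zero {b : Fin (N + 1) → ℕ} {i j : Fin (N + 1)} (hij : i ≠ j) (h : b i = b j) :
    alternant b = 0 :=
  Matrix.det_zero_of_column_eq hij fun k => by simp [h]

lemma alternant_mul_of_symmetric (b : Fin (N + 1) → ℕ) {κ : Type*} (S : Finset κ)
    (w : κ → Fin (N + 1) → ℕ) (h_symm : (∑ a ∈ S, ∏ j, X j ^ w a j :
      MvPolynomial (Fin (N + 1)) ℤ).IsSymmetric) :
    alternant b * ∑ a ∈ S, ∏ j, X j ^ w a j = ∑ a ∈ S, alternant (fun j => w a j + b j) := by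
  simp only [alternant, Matrix.det_apply]
  rw [Finset.sum_comm, Finset.sum_mul]
  refine Finset.sum_congr rfl fun π _ => ?_
  rw [← Finset.smul_sum, smul_mul_assoc, ← h_symm π, map_sum, Finset.mul_sum]
  simp only [map_prod, map_pow, rename_X, Matrix.of_apply, ← Finset.prod_mul_distrib, pow_add,
    mul_comm]

end Alternants

/-! ### Letter-place monomials and Bender–Knuth moves -/

section LetterPlace

variable {σ ι : Type*} {N : ℕ} (e : ι × Fin (N + 1) ≃ σ)

lemma letterPlace_ext {a b : σ →₀ ℕ} (h : ∀ r k, a (e (r, k)) = b (e (r, k))) : a = b := by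
  ext v
  simpa using h (e.symm v).1 (e.symm v).2

/-- Variables are indexed through `e` by a place `r : ι` and a letter `k`; the content of a
monomial counts the occurrences of each letter. -/
def content [Fintype ι] : (σ →₀ ℕ) →+ (Fin (N + 1) → ℕ) where
  toFun a k := ∑ r, a (e (r, k))
  map_zero' := by ext; simp
  map_add' a b := by ext; simp [Finset.sum_add_distrib]

lemma content_apply [Fintype ι] (a : σ →₀ ℕ) (k : Fin (N + 1)) :
    content e a k = ∑ r, a (e (r, k)) := rfl

/-- Overwrite the exponents of the adjacent letters `j` and `j + 1`. -/
noncomputable def replaceLetters [Finite σ] (j : Fin N) (A B : ι → ℕ) (a : σ →₀ ℕ) : σ →₀ ℕ :=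
  Finsupp.equivFunOnFinite.symm fun v =>
    if (e.symm v).2 = j.castSucc then A (e.symm v).1
    else if (e.symm v).2 = j.succ then B (e.symm v).1 else a v

section replaceLetters

variable [Finite σ] (j : Fin N) (A B : ι → ℕ) (a : σ →₀ ℕ) (r : ι)

@[simp] lemma replaceLetters_castSucc : replaceLetters e j A B a (e (r, j.castSucc)) = A r := by
  simp [replaceLetters]

@[simp] lemma replaceLetters_succ : replaceLetters e j A B a (e (r, j.succ)) = B r := by
  simp [replaceLetters, (Fin.castSucc_lt_succ (i := j)).ne']

lemma replaceLetters_of_ne {k : Fin (N + 1)} (hk : k ≠ j.castSucc) (hk' : k ≠ j.succ) :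
    replaceLetters e j A B a (e (r, k)) = a (e (r, k)) := by
  simp [replaceLetters, hk, hk']

variable {e j A B a} in
lemma eq_replaceLetters {b : σ →₀ ℕ} (h_left : ∀ r, b (e (r, j.castSucc)) = A r)
    (h_right : ∀ r, b (e (r, j.succ)) = B r)
    (h_other : ∀ r k, k ≠ j.castSucc → k ≠ j.succ → b (e (r, k)) = a (e (r, k))) :
    b = replaceLetters e j A B a := by
  refine letterPlace_ext e fun r k => ?_
  rcases eq_or_ne k j.castSucc with rfl | hk
  · simp [h_left]
  rcases eq_or_ne k j.succ with rfl | hk'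
  · simp [h_right]
  · rw [h_other r k hk hk', replaceLetters_of_ne e j A B a r hk hk']

end replaceLetters

variable [Fintype ι] [LinearOrder ι]

/-- The letter `j + 1` overtakes the letter `j` when the places up to `r` are read, with the larger
letters of each place read first. -/
def Violates (a : σ →₀ ℕ) (r : ι) (j : Fin N) : Prop :=
  ∑ s with s < r, a (e (s, j.castSucc)) < ∑ s with s ≤ r, a (e (s, j.succ))

/-- The lattice word condition on the monomial read place by place. -/
def IsYamanouchi (a : σ →₀ ℕ) : Prop := ∀ j r, ¬ Violates e a r j

/-- A bracketing of the letters `j` and `j + 1` in the monomials of `S`: at each place some letters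
are locked into pairs and the others are free, and free letters may be exchanged for one another
without leaving `S` or disturbing the locked ones. -/
structure LetterMatching [Finite σ] (S : Set (σ →₀ ℕ)) (j : Fin N) where
  lockedLeft : (σ →₀ ℕ) → ι → ℕ
  lockedRight : (σ →₀ ℕ) → ι → ℕ
  freeLeft : (σ →₀ ℕ) → ι → ℕ
  freeRight : (σ →₀ ℕ) → ι → ℕ
  apply_castSucc : ∀ a ∈ S, ∀ r, a (e (r, j.castSucc)) = lockedLeft a r + freeLeft a r
  apply_succ : ∀ a ∈ S, ∀ r, a (e (r, j.succ)) = lockedRight a r + freeRight a r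
  sum_locked_lt : ∀ a ∈ S, ∀ r, ∑ s with s < r, lockedLeft a s = ∑ s with s ≤ r, lockedRight a s
  sum_locked : ∀ a ∈ S, ∑ s, lockedLeft a s = ∑ s, lockedRight a s
  move_mem : ∀ a ∈ S, ∀ u v : ι → ℕ, (∀ r, u r + v r = freeLeft a r + freeRight a r) →
    replaceLetters e j (lockedLeft a + u) (lockedRight a + v) a ∈ S
  lockedLeft_move : ∀ a ∈ S, ∀ u v : ι → ℕ, (∀ r, u r + v r = freeLeft a r + freeRight a r) →
    lockedLeft (replaceLetters e j (lockedLeft a + u) (lockedRight a + v) a) = lockedLeft a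
  lockedRight_move : ∀ a ∈ S, ∀ u v : ι → ℕ, (∀ r, u r + v r = freeLeft a r + freeRight a r) →
    lockedRight (replaceLetters e j (lockedLeft a + u) (lockedRight a + v) a) = lockedRight a

end LetterPlace

namespace LetterMatching

variable {σ ι : Type*} [Finite σ] [Fintype ι] [LinearOrder ι] {N : ℕ} {e : ι × Fin (N + 1) ≃ σ}
  {S : Set (σ →₀ ℕ)} {j : Fin N} (M : LetterMatching e S j) {a : σ →₀ ℕ} (ha : a ∈ S)

/-- The monomial obtained from `a` by changing its free letters to `u` and `v`. -/
noncomputable def move (a : σ →₀ ℕ) (u v : ι → ℕ) : σ →₀ ℕ :=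
  replaceLetters e j (M.lockedLeft a + u) (M.lockedRight a + v) a

section move

variable {u v : ι → ℕ}

lemma move_apply_of_ne {k : Fin (N + 1)} (hk : k ≠ j.castSucc) (hk' : k ≠ j.succ) (r : ι) :
    M.move a u v (e (r, k)) = a (e (r, k)) :=
  replaceLetters_of_ne e j _ _ a r hk hk'

lemma content_move_castSucc :
    content e (M.move a u v) j.castSucc = ∑ r, M.lockedLeft a r + ∑ r, u r := by
  simp [content_apply, move, Finset.sum_add_distrib]

lemma content_move_succ :
    content e (M.move a u v) j.succ = ∑ r, M.lockedRight a r + ∑ r, v r := by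
  simp [content_apply, move, Finset.sum_add_distrib]

lemma content_move_of_ne {k : Fin (N + 1)} (hk : k ≠ j.castSucc) (hk' : k ≠ j.succ) :
    content e (M.move a u v) k = content e a k :=
  Finset.sum_congr rfl fun r _ => M.move_apply_of_ne hk hk' r

include ha

lemma content_castSucc :
    content e a j.castSucc = ∑ r, M.lockedLeft a r + ∑ r, M.freeLeft a r := by
  simp only [content_apply, M.apply_castSucc a ha, Finset.sum_add_distrib]

lemma content_succ :
    content e a j.succ = ∑ r, M.lockedRight a r + ∑ r, M.freeRight a r := by
  simp only [content_apply, M.apply_succ a ha, Finset.sum_add_distrib]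

lemma move_free : M.move a (M.freeLeft a) (M.freeRight a) = a :=
  (eq_replaceLetters (M.apply_castSucc a ha) (M.apply_succ a ha) fun _ _ _ _ => rfl).symm

variable (huv : ∀ r, u r + v r = M.freeLeft a r + M.freeRight a r)
include huv

lemma freeLeft_move : M.freeLeft (M.move a u v) = u := by
  funext r
  have h := M.apply_castSucc _ (M.move_mem a ha u v huv) r
  rw [M.lockedLeft_move a ha u v huv, replaceLetters_castSucc] at h
  exact (Nat.add_left_cancel h).symm

lemma freeRight_move : M.freeRight (M.move a u v) = v := by
  funext r
  have h := M.apply_succ _ (M.move_mem a ha u v huv) r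
  rw [M.lockedRight_move a ha u v huv, replaceLetters_succ] at h
  exact (Nat.add_left_cancel h).symm

lemma move_move (u' v' : ι → ℕ) : M.move (M.move a u v) u' v' = M.move a u' v' := by
  refine eq_replaceLetters (fun r => ?_) (fun r => ?_) fun r k hk hk' => ?_
  · simp [move, M.lockedLeft_move a ha u v huv]
  · simp [move, M.lockedRight_move a ha u v huv]
  · rw [M.move_apply_of_ne hk hk', M.move_apply_of_ne hk hk']

end move

/-- The Bender–Knuth involution. -/
noncomputable def swap (a : σ →₀ ℕ) : σ →₀ ℕ := M.move a (M.freeRight a) (M.freeLeft a)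

include ha in
lemma swap_mem : M.swap a ∈ S := M.move_mem a ha _ _ fun _ => add_comm _ _

include ha in
lemma swap_swap : M.swap (M.swap a) = a := by
  have huv : ∀ r, M.freeRight a r + M.freeLeft a r = M.freeLeft a r + M.freeRight a r :=
    fun _ => add_comm _ _
  rw [swap, swap, M.freeLeft_move ha huv, M.freeRight_move ha huv, M.move_move ha huv,
    M.move_free ha]

include ha in
lemma content_swap (k : Fin (N + 1)) :
    content e (M.swap a) k = content e a (Equiv.swap j.castSucc j.succ k) := by
  rcases eq_or_ne k j.castSucc with rfl | hk
  · rw [Equiv.swap_apply_left, M.content_succ ha, swap, content_move_castSucc, M.sum_locked a ha]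
  rcases eq_or_ne k j.succ with rfl | hk'
  · rw [Equiv.swap_apply_right, M.content_castSucc ha, swap, content_move_succ, M.sum_locked a ha]
  · rw [Equiv.swap_apply_of_ne_of_ne hk hk', swap, content_move_of_ne _ hk hk']

end LetterMatching

section Symmetry

variable {σ ι : Type*} [Finite σ] [Fintype ι] [LinearOrder ι] {N : ℕ} {e : ι × Fin (N + 1) ≃ σ}
  {S : Finset (σ →₀ ℕ)}

/-- The generating polynomial `∑ a ∈ S, x ^ content a`. -/
noncomputable def contentEnumerator (e : ι × Fin (N + 1) ≃ σ) (S : Finset (σ →₀ ℕ)) :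
    MvPolynomial (Fin (N + 1)) ℤ :=
  ∑ a ∈ S, ∏ k, X k ^ content e a k

lemma LetterMatching.rename_swap_contentEnumerator {j : Fin N}
    (M : LetterMatching e (S : Set (σ →₀ ℕ)) j) :
    rename (Equiv.swap j.castSucc j.succ) (contentEnumerator e S) = contentEnumerator e S := by
  rw [contentEnumerator, map_sum]
  refine Finset.sum_nbij' M.swap M.swap (fun a ha => M.swap_mem ha) (fun a ha => M.swap_mem ha)
    (fun a ha => M.swap_swap ha) (fun a ha => M.swap_swap ha) fun a ha => ?_
  simp only [map_prod, map_pow, rename_X, M.content_swap ha]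
  rw [← Equiv.prod_comp (Equiv.swap j.castSucc j.succ)]
  simp

lemma contentEnumerator_isSymmetric
    (matching : ∀ j, LetterMatching e (S : Set (σ →₀ ℕ)) j) :
    (contentEnumerator e S).IsSymmetric := by
  intro π
  have hπ : π ∈ Submonoid.closure (Set.range fun i : Fin N => Equiv.swap i.castSucc i.succ) := by
    simp [Equiv.Perm.mclosure_swap_castSucc_succ]
  induction hπ using Submonoid.closure_induction with
  | mem x hx =>
    obtain ⟨j, rfl⟩ := hx
    exact (matching j).rename_swap_contentEnumerator
  | one => simp
  | mul x y _ _ hx hy => rw [Equiv.Perm.coe_mul, ← rename_rename, hy, hx]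

lemma contentEnumerator_mul_alternant (matching : ∀ j, LetterMatching e (S : Set (σ →₀ ℕ)) j)
    (b : Fin (N + 1) → ℕ) :
    alternant b * contentEnumerator e S = ∑ a ∈ S, alternant fun k => content e a k + b k :=
  alternant_mul_of_symmetric b S (fun a => content e a) (contentEnumerator_isSymmetric matching)

end Symmetry

section FirstViolation

variable {σ ι : Type*} [Fintype ι] [LinearOrder ι] {N : ℕ} (e : ι × Fin (N + 1) ≃ σ)

/-- The violations of the lattice word condition in reading order: places increase, and within a
place the larger letters come first. -/
def violations (a : σ →₀ ℕ) : Set (ι ×ₗ (Fin N)ᵒᵈ) :=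
  {x | Violates e a (ofLex x).1 (OrderDual.ofDual (ofLex x).2)}

variable {e} in
lemma mem_violations {a : σ →₀ ℕ} {r : ι} {j : Fin N} :
    toLex (r, OrderDual.toDual j) ∈ violations e a ↔ Violates e a r j := Iff.rfl

lemma exists_isLeast_violations {a : σ →₀ ℕ} (ha : ¬ IsYamanouchi e a) :
    ∃ r j, IsLeast (violations e a) (toLex (r, OrderDual.toDual j)) := by
  have nonempty : (violations e a).Nonempty := by
    simp only [IsYamanouchi, not_forall, not_not] at ha
    obtain ⟨j, r, h⟩ := ha
    exact ⟨_, mem_violations.mpr h⟩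
  obtain ⟨x, hx⟩ := (Set.toFinite (violations e a)).exists_minimal nonempty
  exact ⟨_, _, hx.prop, fun y hy => le_of_not_gt (hx.not_lt hy)⟩

variable {e} in
lemma not_isYamanouchi_of_isLeast {a : σ →₀ ℕ} {x : ι ×ₗ (Fin N)ᵒᵈ}
    (hx : IsLeast (violations e a) x) : ¬ IsYamanouchi e a :=
  fun h => h _ _ hx.1

lemma isLeast_violations_iff {a : σ →₀ ℕ} {r : ι} {j : Fin N} :
    IsLeast (violations e a) (toLex (r, OrderDual.toDual j)) ↔
      Violates e a r j ∧ (∀ r' < r, ∀ j', ¬ Violates e a r' j') ∧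
        ∀ j', j < j' → ¬ Violates e a r j' := by
  refine ⟨fun h => ⟨h.1, fun r' hr' j' hv => ?_, fun j' hj' hv => ?_⟩, fun h => ⟨h.1, ?_⟩⟩
  · exact (h.2 (mem_violations.mpr hv)).not_gt (Prod.Lex.toLex_lt_toLex.mpr (Or.inl hr'))
  · exact (h.2 (mem_violations.mpr hv)).not_gt (Prod.Lex.toLex_lt_toLex.mpr (Or.inr ⟨rfl, hj'⟩))
  · intro x hx
    by_contra hlt
    obtain hr | ⟨hr, hj⟩ := Prod.Lex.lt_iff.mp (not_le.mp hlt)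
    · exact h.2.1 _ hr _ hx
    · have hx' : Violates e a (ofLex x).1 _ := hx
      rw [show (ofLex x).1 = r from hr] at hx'
      exact h.2.2 _ hj hx'

end FirstViolation

section PrefixSums

variable {ι M : Type*} [Fintype ι] [LinearOrder ι] [AddCommMonoid M] (f : ι → M)

lemma sum_filter_le_eq_sum_filter_lt_add (r : ι) :
    ∑ s with s ≤ r, f s = ∑ s with s < r, f s + f r := by
  have h_insert : ({s | s ≤ r} : Finset ι) = insert r ({s | s < r} : Finset ι) := by
    ext s
    simp [le_iff_eq_or_lt]
  rw [h_insert, Finset.sum_insert (by simp), add_comm]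

lemma sum_filter_lt_eq_zero_or_eq_sum_filter_le (r : ι) :
    (∀ f : ι → M, ∑ s with s < r, f s = 0) ∨
      ∃ r' < r, ∀ f : ι → M, ∑ s with s < r, f s = ∑ s with s ≤ r', f s := by
  by_cases hr : IsMin r
  · refine Or.inl fun f => Finset.sum_eq_zero fun s hs => ?_
    exact absurd (Finset.mem_filter.mp hs).2 hr.not_lt
  · obtain ⟨r', hr'⟩ := exists_covBy_of_wellFoundedGT hr
    exact Or.inr ⟨r', hr'.lt, fun f => Finset.sum_congr
      (Finset.filter_congr fun s _ => hr'.lt_iff_le_left) fun _ _ => rfl⟩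

end PrefixSums

namespace LetterMatching

variable {σ ι : Type*} [Finite σ] [Fintype ι] [LinearOrder ι] {N : ℕ} {e : ι × Fin (N + 1) ≃ σ}
  {S : Set (σ →₀ ℕ)} {j : Fin N} (M : LetterMatching e S j) {a : σ →₀ ℕ}

lemma violates_iff (ha : a ∈ S) (r : ι) :
    Violates e a r j ↔ ∑ s with s < r, M.freeLeft a s < ∑ s with s ≤ r, M.freeRight a s := by
  simp only [Violates, M.apply_castSucc a ha, M.apply_succ a ha, Finset.sum_add_distrib,
    M.sum_locked_lt a ha, add_lt_add_iff_left]

lemma sum_freeRight_le_sum_freeLeft (ha : a ∈ S) {r : ι} (h : ∀ r' < r, ¬ Violates e a r' j) :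
    ∑ s with s < r, M.freeRight a s ≤ ∑ s with s < r, M.freeLeft a s := by
  obtain h_zero | ⟨r', hr', h_sum⟩ := sum_filter_lt_eq_zero_or_eq_sum_filter_le (M := ℕ) r
  · simp [h_zero]
  · have h_prev := h r' hr'
    rw [M.violates_iff ha, not_lt] at h_prev
    rw [h_sum, h_sum, sum_filter_le_eq_sum_filter_lt_add (M.freeLeft a)]
    exact h_prev.trans (Nat.le_add_right _ _)

/-- Supported at the place `r`: the number of free letters `j + 1` read there up to and including
the one that creates a violation. -/
def excess (a : σ →₀ ℕ) (r : ι) : ι → ℕ :=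
  Pi.single r (∑ s with s < r, M.freeLeft a s + 1 - ∑ s with s < r, M.freeRight a s)

/-- Stembridge's involution: the Bender–Knuth involution applied to the letters that are read
after the violation at the place `r`. -/
noncomputable def toggle (r : ι) (a : σ →₀ ℕ) : σ →₀ ℕ :=
  M.move a
    (fun s => if s < r then M.freeLeft a s else M.freeRight a s - M.excess a r s)
    (fun s => if s < r then M.freeRight a s else M.freeLeft a s + M.excess a r s)

lemma toggle_apply_of_lt (ha : a ∈ S) {r s : ι} (hs : s < r) (k : Fin (N + 1)) :
    M.toggle r a (e (s, k)) = a (e (s, k)) := by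
  rcases eq_or_ne k j.castSucc with rfl | hk
  · simp [toggle, move, hs, M.apply_castSucc a ha]
  rcases eq_or_ne k j.succ with rfl | hk'
  · simp [toggle, move, hs, M.apply_succ a ha]
  · exact M.move_apply_of_ne hk hk' s

lemma content_toggle_of_ne (r : ι) {k : Fin (N + 1)} (hk : k ≠ j.castSucc) (hk' : k ≠ j.succ) :
    content e (M.toggle r a) k = content e a k :=
  M.content_move_of_ne hk hk'

variable {r : ι} (ha : a ∈ S) (h_viol : Violates e a r j) (h_prev : ∀ r' < r, ¬ Violates e a r' j)

include ha h_prev in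
lemma excess_add_sum :
    M.excess a r r + ∑ s with s < r, M.freeRight a s = ∑ s with s < r, M.freeLeft a s + 1 := by
  rw [excess, Pi.single_eq_same]
  exact Nat.sub_add_cancel
    ((M.sum_freeRight_le_sum_freeLeft ha h_prev).trans (Nat.le_add_right _ _))

include ha h_viol in
lemma excess_le_freeRight (s : ι) : M.excess a r s ≤ M.freeRight a s := by
  rcases eq_or_ne s r with rfl | hs
  · rw [M.violates_iff ha, sum_filter_le_eq_sum_filter_lt_add] at h_viol
    rw [excess, Pi.single_eq_same]
    lia
  · simp [excess, hs]

include ha h_viol in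
lemma toggle_balanced (s : ι) :
    ((if s < r then M.freeLeft a s else M.freeRight a s - M.excess a r s) +
      if s < r then M.freeRight a s else M.freeLeft a s + M.excess a r s) =
      M.freeLeft a s + M.freeRight a s := by
  have := M.excess_le_freeRight ha h_viol s
  split_ifs <;> lia

include ha h_viol in
lemma toggle_mem : M.toggle r a ∈ S :=
  M.move_mem a ha _ _ (M.toggle_balanced ha h_viol)

include ha h_viol in
lemma freeLeft_toggle (s : ι) : M.freeLeft (M.toggle r a) s =
    if s < r then M.freeLeft a s else M.freeRight a s - M.excess a r s :=
  congrFun (M.freeLeft_move ha (M.toggle_balanced ha h_viol)) s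

include ha h_viol in
lemma freeRight_toggle (s : ι) : M.freeRight (M.toggle r a) s =
    if s < r then M.freeRight a s else M.freeLeft a s + M.excess a r s :=
  congrFun (M.freeRight_move ha (M.toggle_balanced ha h_viol)) s

include ha h_viol in
lemma sum_freeLeft_toggle :
    ∑ s with s < r, M.freeLeft (M.toggle r a) s = ∑ s with s < r, M.freeLeft a s :=
  Finset.sum_congr rfl fun s hs => by
    rw [M.freeLeft_toggle ha h_viol, if_pos (Finset.mem_filter.mp hs).2]

include ha h_viol in
lemma sum_freeRight_toggle :
    ∑ s with s < r, M.freeRight (M.toggle r a) s = ∑ s with s < r, M.freeRight a s :=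
  Finset.sum_congr rfl fun s hs => by
    rw [M.freeRight_toggle ha h_viol, if_pos (Finset.mem_filter.mp hs).2]

include ha h_viol in
lemma excess_toggle : M.excess (M.toggle r a) r = M.excess a r := by
  rw [excess, excess, M.sum_freeLeft_toggle ha h_viol, M.sum_freeRight_toggle ha h_viol]

include ha h_viol in
lemma toggle_toggle : M.toggle r (M.toggle r a) = a := by
  have h_le := M.excess_le_freeRight ha h_viol
  rw [toggle, excess_toggle M ha h_viol, toggle, M.move_move ha (M.toggle_balanced ha h_viol)]
  refine Eq.trans ?_ (M.move_free ha)
  congr 1 <;> funext s <;> specialize h_le s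
  · rw [← toggle, M.freeLeft_toggle ha h_viol, M.freeRight_toggle ha h_viol]
    split_ifs <;> lia
  · rw [← toggle, M.freeLeft_toggle ha h_viol, M.freeRight_toggle ha h_viol]
    split_ifs <;> lia

include ha h_prev in
lemma content_toggle_succ : content e (M.toggle r a) j.succ = content e a j.castSucc + 1 := by
  have h_split : ∀ f : ι → ℕ, ∑ s, f s = ∑ s with s < r, f s + ∑ s with ¬ s < r, f s :=
    fun f => (Finset.sum_filter_add_sum_filter_not _ _ _).symm
  have h_excess : ∑ s with ¬ s < r, M.excess a r s = M.excess a r r := by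
    rw [excess, Finset.sum_pi_single', if_pos (by simp), Pi.single_eq_same]
  rw [M.content_castSucc ha, toggle, content_move_succ, ← M.sum_locked a ha, Finset.sum_ite,
    Finset.sum_add_distrib, h_excess, h_split (M.freeLeft a)]
  have := M.excess_add_sum ha h_prev
  lia

include ha h_viol h_prev in
lemma content_toggle_castSucc :
    content e (M.toggle r a) j.castSucc + 1 = content e a j.succ := by
  have h_total : content e (M.toggle r a) j.castSucc + content e (M.toggle r a) j.succ =
      content e a j.castSucc + content e a j.succ := by
    have h_free := Finset.sum_congr (rfl : Finset.univ = Finset.univ)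
      fun s (_ : s ∈ Finset.univ) => M.toggle_balanced ha h_viol s
    rw [Finset.sum_add_distrib, Finset.sum_add_distrib] at h_free
    rw [M.content_castSucc ha, M.content_succ ha, toggle, content_move_castSucc,
      content_move_succ]
    lia
  have := M.content_toggle_succ ha h_prev
  lia

include ha h_viol h_prev in
lemma violates_toggle : Violates e (M.toggle r a) r j := by
  rw [M.violates_iff (M.toggle_mem ha h_viol), sum_filter_le_eq_sum_filter_lt_add,
    M.sum_freeLeft_toggle ha h_viol, M.sum_freeRight_toggle ha h_viol,
    M.freeRight_toggle ha h_viol, if_neg (lt_irrefl r)]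
  have := M.excess_add_sum ha h_prev
  lia

include ha in
lemma sum_toggle_lt (k : Fin (N + 1)) {r' : ι} (hr' : r' ≤ r) :
    ∑ s with s < r', M.toggle r a (e (s, k)) = ∑ s with s < r', a (e (s, k)) :=
  Finset.sum_congr rfl fun _ hs =>
    M.toggle_apply_of_lt ha ((Finset.mem_filter.mp hs).2.trans_le hr') k

include ha in
lemma violates_toggle_iff_of_lt {r' : ι} (hr' : r' < r) (j' : Fin N) :
    Violates e (M.toggle r a) r' j' ↔ Violates e a r' j' := by
  simp only [Violates, sum_filter_le_eq_sum_filter_lt_add, M.sum_toggle_lt ha _ hr'.le,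
    M.toggle_apply_of_lt ha hr']

include ha in
lemma violates_toggle_iff_of_gt {j' : Fin N} (hj' : j < j') :
    Violates e (M.toggle r a) r j' ↔ Violates e a r j' := by
  have h_left : j'.succ ≠ j.castSucc :=
    ((Fin.castSucc_lt_castSucc_iff.mpr hj').trans Fin.castSucc_lt_succ).ne'
  have h_right : j'.succ ≠ j.succ := (Fin.succ_lt_succ_iff.mpr hj').ne'
  simp only [Violates, sum_filter_le_eq_sum_filter_lt_add, M.sum_toggle_lt ha _ le_rfl]
  rw [toggle, M.move_apply_of_ne h_left h_right]

include ha in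
lemma isLeast_violations_toggle
    (h_least : IsLeast (violations e a) (toLex (r, OrderDual.toDual j))) :
    IsLeast (violations e (M.toggle r a)) (toLex (r, OrderDual.toDual j)) := by
  rw [isLeast_violations_iff] at h_least ⊢
  obtain ⟨h_viol, h_before, h_larger⟩ := h_least
  refine ⟨M.violates_toggle ha h_viol fun r' hr' => h_before r' hr' j, fun r' hr' j' => ?_,
    fun j' hj' => ?_⟩
  · rw [M.violates_toggle_iff_of_lt ha hr']
    exact h_before r' hr' j'
  · rw [M.violates_toggle_iff_of_gt ha hj']
    exact h_larger j' hj'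

include ha h_viol h_prev in
lemma alternant_toggle :
    (alternant fun k => content e (M.toggle r a) k + staircase k) =
      -alternant fun k => content e a k + staircase k := by
  have h_left := M.content_toggle_castSucc ha h_viol h_prev
  have h_right := M.content_toggle_succ ha h_prev
  refine alternant_eq_neg_of_swap j ?_ ?_ fun k hk hk' => by rw [M.content_toggle_of_ne r hk hk']
  · rw [staircase_castSucc]
    lia
  · rw [staircase_castSucc]
    lia

include ha h_viol h_prev in
lemma alternant_eq_zero_of_toggle_eq (h_fixed : M.toggle r a = a) :
    (alternant fun k => content e a k + staircase k) = 0 := by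
  refine alternant_eq_zero (Fin.castSucc_lt_succ (i := j)).ne ?_
  have h_left := M.content_toggle_castSucc ha h_viol h_prev
  rw [h_fixed] at h_left
  rw [staircase_castSucc]
  lia

end LetterMatching

section Stembridge

variable {σ ι : Type*} [Finite σ] [Fintype ι] [LinearOrder ι] {N : ℕ} {e : ι × Fin (N + 1) ≃ σ}
  {S : Finset (σ →₀ ℕ)}

open Classical in
lemma sum_alternant_not_isYamanouchi (matching : ∀ j, LetterMatching e (S : Set (σ →₀ ℕ)) j) :
    ∑ a ∈ S with ¬ IsYamanouchi e a, alternant (fun k => content e a k + staircase k) = 0 := by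
  have h_least : ∀ a ∈ S.filter (¬ IsYamanouchi e ·), ∃ r j,
      IsLeast (violations e a) (toLex (r, OrderDual.toDual j)) :=
    fun a ha => exists_isLeast_violations e (Finset.mem_filter.mp ha).2
  choose r j h_least using h_least
  have h_viol : ∀ a ha, Violates e a (r a ha) (j a ha) := fun a ha =>
    mem_violations.mp (h_least a ha).1
  have h_prev : ∀ a ha, ∀ r' < r a ha, ¬ Violates e a r' (j a ha) := fun a ha r' hr' =>
    ((isLeast_violations_iff e).mp (h_least a ha)).2.1 r' hr' _
  have h_mem : ∀ a ha, (matching (j a ha)).toggle (r a ha) a ∈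
      S.filter (¬ IsYamanouchi e ·) := fun a ha =>
    have haS := (Finset.mem_filter.mp ha).1
    Finset.mem_filter.mpr ⟨(matching _).toggle_mem haS (h_viol a ha),
      not_isYamanouchi_of_isLeast ((matching _).isLeast_violations_toggle haS (h_least a ha))⟩
  refine Finset.sum_involution (fun a ha => (matching (j a ha)).toggle (r a ha) a) ?_ ?_ h_mem ?_
  · intro a ha
    rw [(matching _).alternant_toggle (Finset.mem_filter.mp ha).1 (h_viol a ha) (h_prev a ha),
      add_neg_cancel]
  · intro a ha h_ne h_fixed
    exact h_ne ((matching _).alternant_eq_zero_of_toggle_eq (Finset.mem_filter.mp ha).1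
      (h_viol a ha) (h_prev a ha) h_fixed)
  · intro a ha
    have haS := (Finset.mem_filter.mp ha).1
    have h_same := ((matching _).isLeast_violations_toggle haS (h_least a ha)).unique
      (h_least _ (h_mem a ha))
    obtain ⟨hr, hj⟩ : r a ha = r _ (h_mem a ha) ∧ j a ha = j _ (h_mem a ha) :=
      Prod.ext_iff.mp (toLex.injective h_same)
    rw [← hr, ← hj]
    exact (matching _).toggle_toggle haS (h_viol a ha)

open Classical in
/-- Stembridge's sign-reversing involution cancels all but the Yamanouchi monomials. -/
theorem alternant_staircase_mul_contentEnumerator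
    (matching : ∀ j, LetterMatching e (S : Set (σ →₀ ℕ)) j) :
    alternant staircase * contentEnumerator e S =
      ∑ a ∈ S with IsYamanouchi e a, alternant fun k => content e a k + staircase k := by
  rw [contentEnumerator_mul_alternant matching,
    ← Finset.sum_filter_add_sum_filter_not S (IsYamanouchi e),
    sum_alternant_not_isYamanouchi matching, add_zero]

end Stembridge

/-! ### Matrix entries as letters -/

section Sums

lemma sum_eq_sum_of_adjacent {N : ℕ} {f g : Fin (N + 1) → ℕ} (j : Fin N)
    (h : f j.castSucc + f j.succ = g j.castSucc + g j.succ)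
    (h_other : ∀ k, k ≠ j.castSucc → k ≠ j.succ → f k = g k) : ∑ k, f k = ∑ k, g k := by
  have h_diff : ∑ k, ((f k : ℤ) - g k) = 0 := by
    rw [Fintype.sum_eq_add j.castSucc j.succ Fin.castSucc_lt_succ.ne fun k hk => by
      rw [h_other k hk.1 hk.2, sub_self]]
    lia
  rw [Finset.sum_sub_distrib, sub_eq_zero] at h_diff
  exact_mod_cast h_diff

lemma sum_filter_lt_eq_of_adjacent {N : ℕ} {f g : Fin (N + 1) → ℕ} (j : Fin N)
    (h : f j.castSucc + f j.succ = g j.castSucc + g j.succ)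
    (h_other : ∀ k, k ≠ j.castSucc → k ≠ j.succ → f k = g k) {c : Fin (N + 1)}
    (hc : c ≠ j.succ) : ∑ k with k < c, f k = ∑ k with k < c, g k := by
  have h_iff : j.succ < c ↔ j.castSucc < c :=
    ⟨Fin.castSucc_lt_succ.trans, fun h => (Fin.castSucc_lt_iff_succ_le.mp h).lt_of_ne hc.symm⟩
  rw [Finset.sum_filter, Finset.sum_filter]
  refine sum_eq_sum_of_adjacent j ?_ fun k hk hk' => by rw [h_other k hk hk']
  simp only [h_iff]
  split_ifs
  exacts [h, rfl]

lemma sum_filter_lt_succ {N : ℕ} (j : Fin N) (f : Fin (N + 1) → ℕ) :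
    ∑ k with k < j.succ, f k = ∑ k with k < j.castSucc, f k + f j.castSucc := by
  rw [← sum_filter_le_eq_sum_filter_lt_add]
  simp only [← Fin.le_castSucc_iff]

variable {α β M : Type*} [Fintype α] [Fintype β] [AddCommMonoid M]

lemma sum_lex (f : α ×ₗ β → M) : ∑ s, f s = ∑ x, ∑ y, f (toLex (x, y)) := by
  rw [← Equiv.sum_comp toLex, Fintype.sum_prod_type]

lemma sum_lex_lt [LinearOrder α] [LinearOrder β] (f : α ×ₗ β → M) (x : α) (y : β) :
    ∑ s with s < toLex (x, y), f s =
      ∑ x' with x' < x, ∑ y', f (toLex (x', y')) + ∑ y' with y' < y, f (toLex (x, y')) := by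
  rw [Finset.sum_filter, sum_lex, ← Finset.sum_filter_add_sum_filter_not Finset.univ (· < x)]
  simp only [Prod.Lex.toLex_lt_toLex]
  congr 1
  · refine Finset.sum_congr rfl fun x' hx' => ?_
    simp [(Finset.mem_filter.mp hx').2]
  · rw [Finset.sum_eq_single_of_mem x (by simp), Finset.sum_filter]
    · simp
    · intro x' hx' hne
      simp [(Finset.mem_filter.mp hx').2, hne]

end Sums

section EntryIndex

variable {m N : ℕ}

/-- The index set of the entries of `m` matrices of size `N + 1`. -/
abbrev EntryIndex (m N : ℕ) := Fin m × Fin (N + 1) × Fin (N + 1)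

/-- The entry `(i, j)` of the `l`-th matrix carries the letter `i` at the place `(l, j)`. -/
def rowLetter (m N : ℕ) : (Fin m ×ₗ Fin (N + 1)) × Fin (N + 1) ≃ EntryIndex m N where
  toFun p := ((ofLex p.1).1, p.2, (ofLex p.1).2)
  invFun v := (toLex (v.1, v.2.2), v.2.1)
  left_inv _ := rfl
  right_inv _ := rfl

/-- The entry `(i, j)` of the `l`-th matrix carries the letter `j` at the place `(l, i)`. -/
def columnLetter (m N : ℕ) : (Fin m ×ₗ Fin (N + 1)) × Fin (N + 1) ≃ EntryIndex m N where
  toFun p := ((ofLex p.1).1, (ofLex p.1).2, p.2)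
  invFun v := (toLex (v.1, v.2.1), v.2.2)
  left_inv _ := rfl
  right_inv _ := rfl

@[simp] lemma rowLetter_apply (l : Fin m) (i j : Fin (N + 1)) :
    rowLetter m N (toLex (l, j), i) = (l, i, j) := rfl

@[simp] lemma columnLetter_apply (l : Fin m) (i j : Fin (N + 1)) :
    columnLetter m N (toLex (l, i), j) = (l, i, j) := rfl

lemma content_rowLetter (a : EntryIndex m N →₀ ℕ) (i : Fin (N + 1)) :
    content (rowLetter m N) a i = ∑ l, ∑ j, a (l, i, j) :=
  sum_lex _

lemma content_columnLetter (a : EntryIndex m N →₀ ℕ) (j : Fin (N + 1)) :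
    content (columnLetter m N) a j = ∑ l, ∑ i, a (l, i, j) :=
  sum_lex _

/-- The degrees of a monomial in each of the `m` matrices. -/
def multidegree (a : EntryIndex m N →₀ ℕ) (l : Fin m) : ℕ := ∑ i, ∑ j, a (l, i, j)

lemma sum_multidegree (a : EntryIndex m N →₀ ℕ) : ∑ l, multidegree a l = ∑ v, a v := by
  simp only [multidegree, Fintype.sum_prod_type]

open Classical in
/-- The monomials of total degree `d` whose multidegree satisfies `P`. -/
noncomputable def monomials (m N d : ℕ) (P : (Fin m → ℕ) → Prop) :
    Finset (EntryIndex m N →₀ ℕ) :=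
  (Finset.univ.finsuppAntidiag d).filter fun a => P (multidegree a)

lemma mem_monomials {d : ℕ} {P : (Fin m → ℕ) → Prop} {a : EntryIndex m N →₀ ℕ} :
    a ∈ monomials m N d P ↔ ∑ l, multidegree a l = d ∧ P (multidegree a) := by
  simp [monomials, ← sum_multidegree]

lemma mem_monomials_congr {d : ℕ} {P : (Fin m → ℕ) → Prop} {a b : EntryIndex m N →₀ ℕ}
    (h : multidegree a = multidegree b) : a ∈ monomials m N d P ↔ b ∈ monomials m N d P := by
  rw [mem_monomials, mem_monomials, h]

lemma sum_replaceLetters {σ ι : Type*} [Finite σ] {e : ι × Fin (N + 1) ≃ σ} {j : Fin N}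
    {A B : ι → ℕ} {a : σ →₀ ℕ} {r : ι}
    (h : A r + B r = a (e (r, j.castSucc)) + a (e (r, j.succ))) :
    ∑ k, replaceLetters e j A B a (e (r, k)) = ∑ k, a (e (r, k)) :=
  sum_eq_sum_of_adjacent j (by simpa using h) fun _ hk hk' =>
    replaceLetters_of_ne e j A B a r hk hk'

lemma multidegree_replaceLetters_rowLetter {j : Fin N} {A B : Fin m ×ₗ Fin (N + 1) → ℕ}
    {a : EntryIndex m N →₀ ℕ}
    (h : ∀ r, A r + B r =
      a (rowLetter m N (r, j.castSucc)) + a (rowLetter m N (r, j.succ))) :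
    multidegree (replaceLetters (rowLetter m N) j A B a) = multidegree a := by
  funext l
  rw [multidegree, multidegree, Finset.sum_comm, Finset.sum_comm (f := fun i j => a (l, i, j))]
  exact Finset.sum_congr rfl fun c _ => sum_replaceLetters (h (toLex (l, c)))

/-- Among all monomials satisfying `P` every letter is free. -/
noncomputable def monomialsMatching (d : ℕ) (P : (Fin m → ℕ) → Prop) (j : Fin N) :
    LetterMatching (rowLetter m N) (monomials m N d P : Set (EntryIndex m N →₀ ℕ)) j where
  lockedLeft _ := 0
  lockedRight _ := 0
  freeLeft a r := a (rowLetter m N (r, j.castSucc))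
  freeRight a r := a (rowLetter m N (r, j.succ))
  apply_castSucc := by simp
  apply_succ := by simp
  sum_locked_lt := by simp
  sum_locked := by simp
  move_mem a ha u v h := (mem_monomials_congr (by
    simpa using multidegree_replaceLetters_rowLetter h)).mpr ha
  lockedLeft_move _ _ _ _ _ := rfl
  lockedRight_move _ _ _ _ _ := rfl

end EntryIndex

section BiYamanouchi

variable {m N : ℕ}

/-- The number of letters `i` at the places before `(l, c)`, in the row-letter encoding. -/
def rowPrefix (a : EntryIndex m N →₀ ℕ) (i : Fin (N + 1)) (l : Fin m) (c : Fin (N + 1)) : ℕ :=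
  ∑ s with s < toLex (l, c), a (rowLetter m N (s, i))

lemma rowPrefix_eq (a : EntryIndex m N →₀ ℕ) (i : Fin (N + 1)) (l : Fin m) (c : Fin (N + 1)) :
    rowPrefix a i l c =
      ∑ l' with l' < l, ∑ c', a (l', i, c') + ∑ c' with c' < c, a (l, i, c') :=
  sum_lex_lt _ l c

lemma rowPrefix_succ (a : EntryIndex m N →₀ ℕ) (i : Fin (N + 1)) (l : Fin m) (j : Fin N) :
    rowPrefix a i l j.succ = rowPrefix a i l j.castSucc + a (l, i, j.castSucc) := by
  rw [rowPrefix_eq, rowPrefix_eq, sum_filter_lt_succ, add_assoc]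

lemma isYamanouchi_rowLetter_iff {a : EntryIndex m N →₀ ℕ} :
    IsYamanouchi (rowLetter m N) a ↔ ∀ (i : Fin N) (l : Fin m) (c : Fin (N + 1)),
      rowPrefix a i.succ l c + a (l, i.succ, c) ≤ rowPrefix a i.castSucc l c := by
  have h_place : ∀ (i : Fin N) (l : Fin m) (c : Fin (N + 1)),
      ¬ Violates (rowLetter m N) a (toLex (l, c)) i ↔
        rowPrefix a i.succ l c + a (l, i.succ, c) ≤ rowPrefix a i.castSucc l c := fun i l c => by
    rw [Violates, not_lt, sum_filter_le_eq_sum_filter_lt_add]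
    rfl
  exact ⟨fun h i l c => (h_place i l c).mp (h i _), fun h i r => (h_place i _ _).mpr (h i _ _)⟩

/-- The number of letters `j` in row `i` of the `l`-th matrix that are paired with letters `j + 1`
in row `i + 1`: changing more of them would break the Yamanouchi condition on row letters. -/
def pairCount (j : Fin N) (a : EntryIndex m N →₀ ℕ) (l : Fin m) (i : Fin N) : ℕ :=
  rowPrefix a i.succ l j.succ + a (l, i.succ, j.succ) - rowPrefix a i.castSucc l j.castSucc

/-- `pairCount` as a function of the place of the letter `j`. -/
def pairedLeft (j : Fin N) (a : EntryIndex m N →₀ ℕ) (s : Fin m ×ₗ Fin (N + 1)) : ℕ :=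
  Fin.lastCases (motive := fun _ => ℕ) 0 (pairCount j a (ofLex s).1) (ofLex s).2

/-- `pairCount` as a function of the place of the letter `j + 1`. -/
def pairedRight (j : Fin N) (a : EntryIndex m N →₀ ℕ) (s : Fin m ×ₗ Fin (N + 1)) : ℕ :=
  Fin.cases (motive := fun _ => ℕ) 0 (pairCount j a (ofLex s).1) (ofLex s).2

section paired

variable (j : Fin N) (a : EntryIndex m N →₀ ℕ) (l : Fin m)

@[simp] lemma pairedLeft_castSucc (i : Fin N) :
    pairedLeft j a (toLex (l, i.castSucc)) = pairCount j a l i := by simp [pairedLeft]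

@[simp] lemma pairedLeft_last : pairedLeft j a (toLex (l, Fin.last N)) = 0 := by
  simp [pairedLeft]

@[simp] lemma pairedRight_succ (i : Fin N) :
    pairedRight j a (toLex (l, i.succ)) = pairCount j a l i := by simp [pairedRight]

@[simp] lemma pairedRight_zero : pairedRight j a (toLex (l, 0)) = 0 := by simp [pairedRight]

lemma sum_pairedLeft_lt_eq_sum_pairedRight_le (i : Fin (N + 1)) :
    ∑ k with k < i, pairedLeft j a (toLex (l, k)) =
      ∑ k with k ≤ i, pairedRight j a (toLex (l, k)) := by
  rw [Finset.sum_filter, Finset.sum_filter, Fin.sum_univ_castSucc, Fin.sum_univ_succ]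
  simp [Fin.castSucc_lt_iff_succ_le]

lemma sum_pairedLeft_eq_sum_pairedRight :
    ∑ k, pairedLeft j a (toLex (l, k)) = ∑ k, pairedRight j a (toLex (l, k)) := by
  rw [Fin.sum_univ_castSucc, Fin.sum_univ_succ]
  simp

end paired

lemma pairedLeft_le {a : EntryIndex m N →₀ ℕ} (ha : IsYamanouchi (rowLetter m N) a) (j : Fin N)
    (s : Fin m ×ₗ Fin (N + 1)) : pairedLeft j a s ≤ a (columnLetter m N (s, j.castSucc)) := by
  obtain ⟨⟨l, i⟩, rfl⟩ := toLex.surjective s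
  induction i using Fin.lastCases with
  | last => simp
  | cast i =>
    have h := isYamanouchi_rowLetter_iff.mp ha i l j.succ
    rw [rowPrefix_succ a i.castSucc] at h
    rw [pairedLeft_castSucc, columnLetter_apply, pairCount]
    lia

lemma pairedRight_le {a : EntryIndex m N →₀ ℕ} (ha : IsYamanouchi (rowLetter m N) a) (j : Fin N)
    (s : Fin m ×ₗ Fin (N + 1)) : pairedRight j a s ≤ a (columnLetter m N (s, j.succ)) := by
  obtain ⟨⟨l, i⟩, rfl⟩ := toLex.surjective s
  induction i using Fin.cases with
  | zero => simp
  | succ i =>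
    have h := isYamanouchi_rowLetter_iff.mp ha i l j.castSucc
    rw [pairedRight_succ, columnLetter_apply, pairCount, rowPrefix_succ]
    lia

section replaceColumnLetters

variable {j : Fin N} {A B : Fin m ×ₗ Fin (N + 1) → ℕ} {a : EntryIndex m N →₀ ℕ}

lemma rowPrefix_replaceLetters_columnLetter
    (h : ∀ r, A r + B r =
      a (columnLetter m N (r, j.castSucc)) + a (columnLetter m N (r, j.succ)))
    (i : Fin (N + 1)) (l : Fin m) {c : Fin (N + 1)} (hc : c ≠ j.succ) :
    rowPrefix (replaceLetters (columnLetter m N) j A B a) i l c = rowPrefix a i l c := by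
  rw [rowPrefix_eq, rowPrefix_eq]
  congr 1
  · exact Finset.sum_congr rfl fun l' _ => sum_replaceLetters (h (toLex (l', i)))
  · refine sum_filter_lt_eq_of_adjacent j ?_ (fun k hk hk' => ?_) hc
    · simpa only [← columnLetter_apply, replaceLetters_castSucc, replaceLetters_succ]
        using h (toLex (l, i))
    · simpa only [← columnLetter_apply]
        using replaceLetters_of_ne (columnLetter m N) j A B a (toLex (l, i)) hk hk'

lemma pairCount_replaceLetters_columnLetter
    (h : ∀ r, A r + B r =
      a (columnLetter m N (r, j.castSucc)) + a (columnLetter m N (r, j.succ))) :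
    pairCount j (replaceLetters (columnLetter m N) j A B a) = pairCount j a := by
  funext l i
  have h_pair := h (toLex (l, i.succ))
  simp only [pairCount, rowPrefix_succ,
    rowPrefix_replaceLetters_columnLetter h _ _ (Fin.castSucc_lt_succ (i := j)).ne]
  rw [add_assoc, add_assoc, ← columnLetter_apply, ← columnLetter_apply, replaceLetters_castSucc,
    replaceLetters_succ, h_pair]

lemma pairedLeft_replaceLetters_columnLetter
    (h : ∀ r, A r + B r =
      a (columnLetter m N (r, j.castSucc)) + a (columnLetter m N (r, j.succ))) :
    pairedLeft j (replaceLetters (columnLetter m N) j A B a) = pairedLeft j a := by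
  funext s
  rw [pairedLeft, pairedLeft, pairCount_replaceLetters_columnLetter h]

lemma pairedRight_replaceLetters_columnLetter
    (h : ∀ r, A r + B r =
      a (columnLetter m N (r, j.castSucc)) + a (columnLetter m N (r, j.succ))) :
    pairedRight j (replaceLetters (columnLetter m N) j A B a) = pairedRight j a := by
  funext s
  rw [pairedRight, pairedRight, pairCount_replaceLetters_columnLetter h]

lemma multidegree_replaceLetters_columnLetter
    (h : ∀ r, A r + B r =
      a (columnLetter m N (r, j.castSucc)) + a (columnLetter m N (r, j.succ))) :
    multidegree (replaceLetters (columnLetter m N) j A B a) = multidegree a :=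
  funext fun l => Finset.sum_congr rfl fun i _ => sum_replaceLetters (h (toLex (l, i)))

lemma content_rowLetter_replaceLetters_columnLetter
    (h : ∀ r, A r + B r =
      a (columnLetter m N (r, j.castSucc)) + a (columnLetter m N (r, j.succ))) :
    content (rowLetter m N) (replaceLetters (columnLetter m N) j A B a) =
      content (rowLetter m N) a := by
  funext i
  rw [content_rowLetter, content_rowLetter]
  exact Finset.sum_congr rfl fun l _ => sum_replaceLetters (h (toLex (l, i)))

lemma isYamanouchi_replaceLetters_columnLetter (ha : IsYamanouchi (rowLetter m N) a)
    (h : ∀ r, A r + B r =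
      a (columnLetter m N (r, j.castSucc)) + a (columnLetter m N (r, j.succ)))
    (hA : ∀ r, pairedLeft j a r ≤ A r) (hB : ∀ r, pairedRight j a r ≤ B r) :
    IsYamanouchi (rowLetter m N) (replaceLetters (columnLetter m N) j A B a) := by
  rw [isYamanouchi_rowLetter_iff] at ha ⊢
  intro i l c
  have h_before := fun i => rowPrefix_replaceLetters_columnLetter h i l (c := j.castSucc)
    (Fin.castSucc_lt_succ (i := j)).ne
  have h_left : ∀ i, replaceLetters (columnLetter m N) j A B a (l, i, j.castSucc) =
    A (toLex (l, i)) := fun i => replaceLetters_castSucc (columnLetter m N) j A B a (toLex (l, i))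
  have h_right : ∀ i, replaceLetters (columnLetter m N) j A B a (l, i, j.succ) =
    B (toLex (l, i)) := fun i => replaceLetters_succ (columnLetter m N) j A B a (toLex (l, i))
  have h_pair := h (toLex (l, i.succ))
  rw [columnLetter_apply, columnLetter_apply] at h_pair
  rcases eq_or_ne c j.castSucc with rfl | hc
  · have h_locked := hB (toLex (l, i.succ))
    rw [pairedRight_succ, pairCount, rowPrefix_succ] at h_locked
    rw [h_before, h_before, h_left]
    lia
  rcases eq_or_ne c j.succ with rfl | hc'
  · have h_locked := hA (toLex (l, i.castSucc))
    rw [pairedLeft_castSucc, pairCount, rowPrefix_succ] at h_locked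
    rw [rowPrefix_succ, rowPrefix_succ, h_before, h_before, h_left, h_left, h_right]
    lia
  · rw [rowPrefix_replaceLetters_columnLetter h _ _ hc',
      rowPrefix_replaceLetters_columnLetter h _ _ hc', ← columnLetter_apply,
      replaceLetters_of_ne (columnLetter m N) j A B a _ hc hc']
    exact ha i l c

end replaceColumnLetters

open Classical in
/-- The monomials of `monomials m N d P` that are Yamanouchi in the row letters, of content `lam`
in them. -/
noncomputable def rowYamanouchiMonomials (m N d : ℕ) (P : (Fin m → ℕ) → Prop)
    (lam : Fin (N + 1) → ℕ) : Finset (EntryIndex m N →₀ ℕ) :=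
  {a ∈ monomials m N d P | IsYamanouchi (rowLetter m N) a ∧ content (rowLetter m N) a = lam}

lemma mem_rowYamanouchiMonomials {d : ℕ} {P : (Fin m → ℕ) → Prop} {lam : Fin (N + 1) → ℕ}
    {a : EntryIndex m N →₀ ℕ} : a ∈ rowYamanouchiMonomials m N d P lam ↔
      a ∈ monomials m N d P ∧ IsYamanouchi (rowLetter m N) a ∧ content (rowLetter m N) a = lam := by
  classical
  rw [rowYamanouchiMonomials, Finset.mem_filter]

section matching

variable {d : ℕ} {P : (Fin m → ℕ) → Prop} {lam : Fin (N + 1) → ℕ}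

lemma paired_add_eq_of_free {j : Fin N} {a : EntryIndex m N →₀ ℕ}
    {u v : Fin m ×ₗ Fin (N + 1) → ℕ}
    (ha : IsYamanouchi (rowLetter m N) a)
    (h : ∀ r, u r + v r = (a (columnLetter m N (r, j.castSucc)) - pairedLeft j a r) +
      (a (columnLetter m N (r, j.succ)) - pairedRight j a r)) (r : Fin m ×ₗ Fin (N + 1)) :
    (pairedLeft j a + u) r + (pairedRight j a + v) r =
      a (columnLetter m N (r, j.castSucc)) + a (columnLetter m N (r, j.succ)) := by
  have := h r
  have := pairedLeft_le ha j r
  have := pairedRight_le ha j r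
  simp only [Pi.add_apply]
  lia

variable (d P lam) in
/-- The crystal structures on the row and the column letters commute: column letters can be changed
without leaving the set of monomials that are Yamanouchi in the row letters. -/
noncomputable def rowYamanouchiMatching (j : Fin N) :
    LetterMatching (columnLetter m N)
      (rowYamanouchiMonomials m N d P lam : Set (EntryIndex m N →₀ ℕ)) j where
  lockedLeft := pairedLeft j
  lockedRight := pairedRight j
  freeLeft a r := a (columnLetter m N (r, j.castSucc)) - pairedLeft j a r
  freeRight a r := a (columnLetter m N (r, j.succ)) - pairedRight j a r
  apply_castSucc a ha r := (Nat.add_sub_of_le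
    (pairedLeft_le (mem_rowYamanouchiMonomials.mp ha).2.1 j r)).symm
  apply_succ a ha r := (Nat.add_sub_of_le
    (pairedRight_le (mem_rowYamanouchiMonomials.mp ha).2.1 j r)).symm
  sum_locked_lt a _ r := by
    obtain ⟨⟨l, i⟩, rfl⟩ := toLex.surjective r
    rw [sum_filter_le_eq_sum_filter_lt_add, sum_lex_lt, sum_lex_lt, add_assoc,
      ← sum_filter_le_eq_sum_filter_lt_add (fun k => pairedRight j a (toLex (l, k))),
      sum_pairedLeft_lt_eq_sum_pairedRight_le]
    simp only [sum_pairedLeft_eq_sum_pairedRight]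
  sum_locked a _ := by
    rw [sum_lex, sum_lex]
    simp only [sum_pairedLeft_eq_sum_pairedRight]
  move_mem a ha u v h := by
    obtain ⟨h_mem, h_yam, h_content⟩ := mem_rowYamanouchiMonomials.mp ha
    have h_sum := paired_add_eq_of_free h_yam h
    refine mem_rowYamanouchiMonomials.mpr
      ⟨(mem_monomials_congr (multidegree_replaceLetters_columnLetter h_sum)).mpr h_mem,
        isYamanouchi_replaceLetters_columnLetter h_yam h_sum (fun _ => Nat.le_add_right _ _)
          fun _ => Nat.le_add_right _ _, ?_⟩
    rw [content_rowLetter_replaceLetters_columnLetter h_sum, h_content]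
  lockedLeft_move a ha u v h := pairedLeft_replaceLetters_columnLetter
    (paired_add_eq_of_free (mem_rowYamanouchiMonomials.mp ha).2.1 h)
  lockedRight_move a ha u v h := pairedRight_replaceLetters_columnLetter
    (paired_add_eq_of_free (mem_rowYamanouchiMonomials.mp ha).2.1 h)

end matching

end BiYamanouchi

/-! ### Counting by semistandard tableaux -/

section Tableaux

variable {N : ℕ}

lemma IsYamanouchi.antitone_content {σ ι : Type*} [Fintype ι] [LinearOrder ι]
    {e : ι × Fin (N + 1) ≃ σ} {a : σ →₀ ℕ} (h : IsYamanouchi e a) : Antitone (content e a) := by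
  refine Fin.antitone_iff_succ_le.mpr fun j => ?_
  rcases isEmpty_or_nonempty ι with _ | _
  · simp [content_apply]
  · obtain ⟨r, hr⟩ := Finite.exists_max fun s : ι => s
    have h_last := not_lt.mp (h j r)
    rw [Finset.filter_true_of_mem fun s _ => hr s] at h_last
    exact h_last.trans (Finset.sum_le_sum_of_subset (Finset.filter_subset _ _))

variable {e : (Fin 1 ×ₗ Fin (N + 1)) × Fin (N + 1) ≃ EntryIndex 1 N}
  {a : EntryIndex 1 N →₀ ℕ}

lemma violates_fin_one_iff {i : Fin (N + 1)} {j : Fin N} :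
    Violates e a (toLex (0, i)) j ↔
      ∑ k with k < i, a (e (toLex (0, k), j.castSucc)) <
        ∑ k with k ≤ i, a (e (toLex (0, k), j.succ)) := by
  rw [Violates, sum_filter_le_eq_sum_filter_lt_add, sum_filter_le_eq_sum_filter_lt_add,
    sum_lex_lt, sum_lex_lt]
  simp

/-- In a single word of places the first letter `k` of a Yamanouchi monomial comes no earlier than
the `k`-th place. -/
lemma IsYamanouchi.apply_eq_zero_of_lt (h : IsYamanouchi e a) {i k : Fin (N + 1)} (hik : i < k) :
    a (e (toLex (0, i), k)) = 0 := by
  have h_sum : ∑ i with i < k, a (e (toLex (0, i), k)) = 0 := by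
    clear hik
    induction k using Fin.induction with
    | zero => simp
    | succ k ih =>
      have h_step := h k (toLex (0, k.castSucc))
      rw [violates_fin_one_iff, ih] at h_step
      simp only [Fin.le_castSucc_iff] at h_step
      exact Nat.eq_zero_of_not_pos h_step
  exact Finset.sum_eq_zero_iff.mp h_sum i (by simpa using hik)

lemma isYamanouchi_of_diagonal {mu : Fin (N + 1) → ℕ} (hmu : Antitone mu)
    (ha : ∀ i k, a (e (toLex (0, i), k)) = if i = k then mu k else 0) : IsYamanouchi e a := by
  intro j r
  obtain ⟨⟨l, i⟩, rfl⟩ := toLex.surjective r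
  obtain rfl : l = 0 := Subsingleton.elim _ _
  simp only [violates_fin_one_iff, not_lt, ha, Finset.sum_ite_eq', Finset.mem_filter,
    Finset.mem_univ, true_and, Fin.castSucc_lt_iff_succ_le]
  split_ifs
  exacts [hmu Fin.castSucc_lt_succ.le, le_rfl]

/-- The semistandard tableaux of shape `mu`, encoded by the monomial whose exponent at `(0, i, j)`
is the number of entries `j` in row `i`. -/
noncomputable def tableaux (mu : Fin (N + 1) → ℕ) : Finset (EntryIndex 1 N →₀ ℕ) :=
  rowYamanouchiMonomials 1 N (∑ i, mu i) (fun _ => True) mu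

/-- The tableau whose row `i` is filled with the letter `i`. -/
noncomputable def diagonalTableau (mu : Fin (N + 1) → ℕ) : EntryIndex 1 N →₀ ℕ :=
  Finsupp.equivFunOnFinite.symm fun v => if v.2.1 = v.2.2 then mu v.2.2 else 0

lemma diagonalTableau_apply (mu : Fin (N + 1) → ℕ) (v : EntryIndex 1 N) :
    diagonalTableau mu v = if v.2.1 = v.2.2 then mu v.2.2 else 0 := rfl

lemma mem_tableaux {mu : Fin (N + 1) → ℕ} : a ∈ tableaux mu ↔
    IsYamanouchi (rowLetter 1 N) a ∧ content (rowLetter 1 N) a = mu := by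
  rw [tableaux, mem_rowYamanouchiMonomials, mem_monomials]
  refine ⟨And.right, fun h => ⟨⟨?_, trivial⟩, h⟩⟩
  simp only [← h.2, content_rowLetter, multidegree, Finset.univ_unique, Finset.sum_singleton]

@[simp] lemma content_rowLetter_diagonalTableau (mu : Fin (N + 1) → ℕ) :
    content (rowLetter 1 N) (diagonalTableau mu) = mu := by
  funext k
  simp [content_rowLetter, diagonalTableau_apply]

@[simp] lemma content_columnLetter_diagonalTableau (mu : Fin (N + 1) → ℕ) :
    content (columnLetter 1 N) (diagonalTableau mu) = mu := by
  funext k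
  simp [content_columnLetter, diagonalTableau_apply]

lemma isYamanouchi_columnLetter_diagonalTableau {mu : Fin (N + 1) → ℕ} (hmu : Antitone mu) :
    IsYamanouchi (columnLetter 1 N) (diagonalTableau mu) :=
  isYamanouchi_of_diagonal hmu fun _ _ => rfl

lemma diagonalTableau_mem_tableaux {mu : Fin (N + 1) → ℕ} (hmu : Antitone mu) :
    diagonalTableau mu ∈ tableaux mu := by
  refine mem_tableaux.mpr ⟨isYamanouchi_of_diagonal hmu fun i k => ?_, by simp⟩
  rw [rowLetter_apply, diagonalTableau_apply]
  rcases eq_or_ne i k with rfl | h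
  · simp
  · rw [if_neg h, if_neg h.symm]

lemma eq_diagonalTableau_of_isYamanouchi (h_row : IsYamanouchi (rowLetter 1 N) a)
    (h_column : IsYamanouchi (columnLetter 1 N) a) :
    a = diagonalTableau (content (rowLetter 1 N) a) := by
  have h_off : ∀ i j, i ≠ j → a (0, i, j) = 0 := fun i j hij =>
    hij.lt_or_gt.elim (fun h => h_column.apply_eq_zero_of_lt h) fun h => h_row.apply_eq_zero_of_lt h
  ext ⟨l, i, j⟩
  obtain rfl : l = 0 := Subsingleton.elim _ _
  rw [diagonalTableau_apply]
  split_ifs with hij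
  · obtain rfl : i = j := hij
    rw [content_rowLetter, Fin.sum_univ_one, Fintype.sum_eq_single i fun j hj => h_off i j hj.symm]
  · exact h_off i j hij

open Classical in
lemma filter_isYamanouchi_tableaux {mu : Fin (N + 1) → ℕ} (hmu : Antitone mu) :
    (tableaux mu).filter (IsYamanouchi (columnLetter 1 N)) = {diagonalTableau mu} := by
  ext a
  rw [Finset.mem_filter, Finset.mem_singleton]
  constructor
  · rintro ⟨h_mem, h_column⟩
    obtain ⟨h_row, h_content⟩ := mem_tableaux.mp h_mem
    exact h_content ▸ eq_diagonalTableau_of_isYamanouchi h_row h_column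
  · rintro rfl
    exact ⟨diagonalTableau_mem_tableaux hmu, isYamanouchi_columnLetter_diagonalTableau hmu⟩

lemma alternant_staircase_mul_contentEnumerator_tableaux {mu : Fin (N + 1) → ℕ}
    (hmu : Antitone mu) :
    alternant staircase * contentEnumerator (columnLetter 1 N) (tableaux mu) =
      alternant fun j => mu j + staircase j := by
  classical
  rw [alternant_staircase_mul_contentEnumerator (S := tableaux mu) (rowYamanouchiMatching _ _ _),
    filter_isYamanouchi_tableaux hmu, Finset.sum_singleton, content_columnLetter_diagonalTableau]

end Tableaux

section Count

variable {N : ℕ} {σ ι : Type*} [Fintype ι] (e : ι × Fin (N + 1) ≃ σ)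

lemma eval_one_contentEnumerator (S : Finset (σ →₀ ℕ)) :
    MvPolynomial.eval (fun _ => (1 : ℤ)) (contentEnumerator e S) = S.card := by
  simp [contentEnumerator]

variable [LinearOrder ι] [Finite σ] {S : Finset (σ →₀ ℕ)}

open Classical in
theorem card_eq_sum_card_tableaux (matching : ∀ j, LetterMatching e (S : Set (σ →₀ ℕ)) j) :
    S.card = ∑ a ∈ S with IsYamanouchi e a, (tableaux (content e a)).card := by
  have h_schur : contentEnumerator e S = ∑ a ∈ S with IsYamanouchi e a,
      contentEnumerator (columnLetter 1 N) (tableaux (content e a)) := by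
    refine mul_left_cancel₀ (alternant_staircase_ne_zero (N := N)) ?_
    rw [alternant_staircase_mul_contentEnumerator matching, Finset.mul_sum]
    refine Finset.sum_congr rfl fun a ha => ?_
    rw [alternant_staircase_mul_contentEnumerator_tableaux
      (Finset.mem_filter.mp ha).2.antitone_content]
  have h_eval := congrArg (MvPolynomial.eval fun _ => (1 : ℤ)) h_schur
  simp only [map_sum, eval_one_contentEnumerator] at h_eval
  exact_mod_cast h_eval

end Count

/-! ### Leading exponents -/

section LeadingExponents

open MonomialOrder

variable {σ K : Type*} [Field K] {M : Submodule K (MvPolynomial σ K)} {T : Finset (σ →₀ ℕ)}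

/-- The exponents of the leading monomials of the nonzero elements of `M`. -/
def leadingExponents (o : MonomialOrder σ) (M : Submodule K (MvPolynomial σ K)) : Set (σ →₀ ℕ) :=
  {b | ∃ f ∈ M, f ≠ 0 ∧ o.degree f = b}

lemma mem_of_mem_restrictSupport {s : Set (σ →₀ ℕ)} (hM : M ≤ restrictSupport K s)
    {f : MvPolynomial σ K} (hf : f ∈ M) {b : σ →₀ ℕ} (hb : coeff b f ≠ 0) : b ∈ s :=
  (mem_restrictSupport_iff K).1 (hM hf) (mem_support_iff.2 hb)

lemma leadingExponents_subset (o : MonomialOrder σ) {s : Set (σ →₀ ℕ)}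
    (hM : M ≤ restrictSupport K s) : leadingExponents o M ⊆ s := by
  rintro _ ⟨f, hf, hf0, rfl⟩
  exact mem_of_mem_restrictSupport hM hf (o.coeff_degree_ne_zero_iff.2 hf0)

lemma finite_of_le_restrictSupport (hM : M ≤ restrictSupport K (T : Set (σ →₀ ℕ))) :
    Module.Finite K M :=
  have := Module.Finite.of_basis (basisRestrictSupport K (T : Set (σ →₀ ℕ)))
  Submodule.finiteDimensional_of_le hM

lemma linearIndependent_of_injective_degree (o : MonomialOrder σ) {ι : Type*}
    {f : ι → MvPolynomial σ K} (h_ne : ∀ i, f i ≠ 0)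
    (h_inj : Function.Injective fun i => o.degree (f i)) : LinearIndependent K f := by
  classical
  rw [linearIndependent_iff']
  by_contra! h
  obtain ⟨s, g, hg, i₀, hi₀, hgi₀⟩ := h
  obtain ⟨i, hi, h_max⟩ := (s.filter (g · ≠ 0)).exists_max_image (fun i => o.toSyn (o.degree (f i)))
    ⟨i₀, Finset.mem_filter.2 ⟨hi₀, hgi₀⟩⟩
  obtain ⟨his, hgi⟩ := Finset.mem_filter.1 hi
  have h_coeff := congrArg (coeff (o.degree (f i))) hg
  rw [coeff_sum, Finset.sum_eq_single_of_mem i his, coeff_smul, coeff_zero] at h_coeff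
  · exact mul_ne_zero hgi (o.coeff_degree_ne_zero_iff.2 (h_ne i)) h_coeff
  · intro k hk hki
    by_cases hgk : g k = 0
    · rw [hgk, zero_smul, coeff_zero]
    · have h_le := h_max k (Finset.mem_filter.2 ⟨hk, hgk⟩)
      have h_lt := h_le.lt_of_ne fun h => hki (h_inj (o.toSyn.injective h))
      rw [coeff_smul, o.coeff_eq_zero_of_lt h_lt, smul_zero]

lemma finrank_eq_card_leadingExponents (o : MonomialOrder σ)
    (hM : M ≤ restrictSupport K (T : Set (σ →₀ ℕ))) {S : Finset (σ →₀ ℕ)}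
    (hS : (S : Set (σ →₀ ℕ)) = leadingExponents o M) : Module.finrank K M = S.card := by
  have := finite_of_le_restrictSupport hM
  apply le_antisymm
  · let coeffs : M →ₗ[K] S → K := LinearMap.pi fun b => (lcoeff K b.1).comp M.subtype
    have h_inj : Function.Injective coeffs := by
      rw [← LinearMap.ker_eq_bot, LinearMap.ker_eq_bot']
      intro f hf
      by_contra hf0
      rw [← Ne, Ne, ← Submodule.coe_eq_zero] at hf0
      have h_mem : o.degree f.1 ∈ S := by
        rw [← Finset.mem_coe, hS]
        exact ⟨f, f.2, hf0, rfl⟩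
      exact o.coeff_degree_ne_zero_iff.2 hf0 (congrFun hf ⟨_, h_mem⟩)
    simpa using LinearMap.finrank_le_finrank_of_injective h_inj
  · have h_lead (b : S) : ∃ f ∈ M, f ≠ 0 ∧ o.degree f = b.1 := hS.subset b.2
    choose f hfM hf0 hf_degree using h_lead
    have h_indep := linearIndependent_of_injective_degree o hf0 fun b c h =>
      Subtype.ext (by simpa only [hf_degree] using h)
    have h_indep' : LinearIndependent K fun b => (⟨f b, hfM b⟩ : M) :=
      LinearIndependent.of_comp M.subtype h_indep
    simpa using h_indep'.fintype_card_le_finrank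

end LeadingExponents

section PlaceLetterOrder

open MonomialOrder

/-- `o` decides as soon as two exponents agree at all later places and all larger letters. -/
def IsPlaceLetterOrder {σ ι : Type*} [LT ι] {N : ℕ} (o : MonomialOrder σ)
    (e : ι × Fin (N + 1) ≃ σ) : Prop :=
  ∀ (a b : σ →₀ ℕ) (r : ι) (j : Fin (N + 1)),
    (∀ s k, r < s ∨ j < k → a (e (s, k)) = b (e (s, k))) → a (e (r, j)) < b (e (r, j)) → a ≺[o] b

variable (m N : ℕ)

/-- The position of a matrix entry in the reversed lexicographic order. -/
def entryPosition : EntryIndex m N ≃ (Fin m ×ₗ Fin (N + 1) ×ₗ Fin (N + 1))ᵒᵈ :=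
  ((Equiv.refl _).prodCongr toLex).trans (toLex.trans OrderDual.toDual)

/-- The lexicographic order on exponents in which the last matrix entries are the most
significant ones. -/
noncomputable def entryOrder : MonomialOrder (EntryIndex m N) where
  syn := Lex ((Fin m ×ₗ Fin (N + 1) ×ₗ Fin (N + 1))ᵒᵈ →₀ ℕ)
  toSyn := (Finsupp.domCongr (entryPosition m N)).trans
    { toEquiv := toLex, map_add' := toLex_add }
  toSyn_monotone _ _ hab := Finsupp.toLex_monotone fun v => hab ((entryPosition m N).symm v)

variable {m N}

lemma entryOrder_lt {a b : EntryIndex m N →₀ ℕ} (v : EntryIndex m N)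
    (h_eq : ∀ w : EntryIndex m N, toLex (v.1, toLex v.2) < toLex (w.1, toLex w.2) → a w = b w)
    (h_lt : a v < b v) : a ≺[entryOrder m N] b :=
  ⟨OrderDual.toDual (toLex (v.1, toLex v.2)), fun w hw => h_eq (w.1, w.2.1, w.2.2) hw, h_lt⟩

lemma isPlaceLetterOrder_rowLetter : IsPlaceLetterOrder (entryOrder m N) (rowLetter m N) := by
  intro a b r i h_eq h_lt
  refine entryOrder_lt (rowLetter m N (r, i)) (fun w hw => ?_) h_lt
  refine h_eq (toLex (w.1, w.2.2)) w.2.1 ?_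
  obtain ⟨⟨l, c⟩, rfl⟩ := toLex.surjective r
  simp only [rowLetter_apply, Prod.Lex.toLex_lt_toLex] at hw ⊢
  grind

lemma isPlaceLetterOrder_columnLetter :
    IsPlaceLetterOrder (entryOrder m N) (columnLetter m N) := by
  intro a b r j h_eq h_lt
  refine entryOrder_lt (columnLetter m N (r, j)) (fun w hw => ?_) h_lt
  refine h_eq (toLex (w.1, w.2.1)) w.2.2 ?_
  obtain ⟨⟨l, i⟩, rfl⟩ := toLex.surjective r
  simp only [columnLetter_apply, Prod.Lex.toLex_lt_toLex] at hw ⊢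
  grind

end PlaceLetterOrder

/-! ### Linear substitutions of letters -/

section LetterAction

variable {σ ι A B : Type*} [CommRing A] [CommRing B] {N : ℕ} (e : ι × Fin (N + 1) ≃ σ)

/-- The action of a matrix on polynomials: the variable with letter `j` at place `s` is replaced
by the combination of the letters at place `s` given by the `j`-th column of `g`. -/
noncomputable def letterAction (g : Matrix (Fin (N + 1)) (Fin (N + 1)) A) :
    MvPolynomial σ A →ₐ[A] MvPolynomial σ A :=
  aeval fun v => ∑ k, C (g k (e.symm v).2) * X (e ((e.symm v).1, k))

variable (g h : Matrix (Fin (N + 1)) (Fin (N + 1)) A) (f : MvPolynomial σ A)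

lemma letterAction_X (s : ι) (j : Fin (N + 1)) :
    letterAction e g (X (e (s, j))) = ∑ k, C (g k j) * X (e (s, k)) := by
  simp [letterAction]

lemma letterAction_mul : letterAction e (g * h) f = letterAction e g (letterAction e h f) := by
  suffices letterAction e (g * h) = (letterAction e g).comp (letterAction e h) from
    DFunLike.congr_fun this f
  ext1 v
  obtain ⟨⟨s, j⟩, rfl⟩ := e.surjective v
  simp only [AlgHom.comp_apply, letterAction_X, map_sum, map_mul, algHom_C, algebraMap_eq,
    mul_apply, Finset.sum_mul, Finset.mul_sum]
  rw [Finset.sum_comm]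
  exact Finset.sum_congr rfl fun k _ => Finset.sum_congr rfl fun l _ => by ring

lemma letterAction_one : letterAction e (1 : Matrix _ _ A) f = f := by
  suffices letterAction e (1 : Matrix _ _ A) = AlgHom.id A _ from DFunLike.congr_fun this f
  ext1 v
  obtain ⟨⟨s, j⟩, rfl⟩ := e.surjective v
  simp [letterAction_X, one_apply]

lemma map_letterAction (ψ : A →+* B) :
    MvPolynomial.map ψ (letterAction e g f) =
      letterAction e (g.map ψ) (MvPolynomial.map ψ f) := by
  suffices (MvPolynomial.map ψ).comp (letterAction e g).toRingHom =
      (letterAction e (g.map ψ)).toRingHom.comp (MvPolynomial.map ψ) from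
    DFunLike.congr_fun this f
  apply ringHom_ext
  · simp
  · intro v
    obtain ⟨⟨s, j⟩, rfl⟩ := e.surjective v
    simp [letterAction_X]

variable [Fintype ι]

lemma content_single (s : ι) (k : Fin (N + 1)) :
    content e (Finsupp.single (e (s, k)) 1) = Pi.single k 1 := by
  classical
  funext j
  rcases eq_or_ne j k with rfl | h
  · simp [content_apply, Finsupp.single_apply]
  · simp [content_apply, h]

/-- The polynomials all of whose monomials have content `mu`. -/
noncomputable def weightSpace (A : Type*) [CommRing A] (mu : Fin (N + 1) → ℕ) :
    Submodule A (MvPolynomial σ A) :=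
  weightedHomogeneousSubmodule A (fun v => (Pi.single (e.symm v).2 1 : Fin (N + 1) → ℕ)) mu

lemma content_eq_weight (b : σ →₀ ℕ) :
    content e b = Finsupp.weight (fun v => (Pi.single (e.symm v).2 1 : Fin (N + 1) → ℕ)) b := by
  refine DFunLike.congr_fun (Finsupp.addHom_ext' fun v => AddMonoidHom.ext_nat ?_) b
  obtain ⟨⟨s, k⟩, rfl⟩ := e.surjective v
  simp [content_single, Finsupp.weight_apply]

variable {e f}

lemma mem_weightSpace {mu : Fin (N + 1) → ℕ} :
    f ∈ weightSpace e A mu ↔ ∀ b, coeff b f ≠ 0 → content e b = mu := by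
  simp only [content_eq_weight]
  rfl

variable (e)

lemma letterAction_diagonal_monomial (d : Fin (N + 1) → A) (b : σ →₀ ℕ) (c : A) :
    letterAction e (diagonal d) (monomial b c) = monomial b ((∏ j, d j ^ content e b j) * c) := by
  have h_prod (b : σ →₀ ℕ) : (b.prod fun v k => (C (d (e.symm v).2) * X v : MvPolynomial σ A) ^ k) =
      monomial b (∏ j, d j ^ content e b j) := by
    induction b using Finsupp.induction_linear with
    | zero => simp
    | add b b' hb hb' =>
      rw [Finsupp.prod_add_index' (by simp) fun _ _ _ => pow_add _ _ _, hb, hb', monomial_mul]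
      simp only [map_add, Pi.add_apply, pow_add, Finset.prod_mul_distrib]
    | single v k =>
      have h_content : content e (Finsupp.single v k) = k • Pi.single (e.symm v).2 1 := by
        rw [← content_single e (e.symm v).1, ← map_nsmul]
        simp
      rw [Finsupp.prod_single_index (by simp), mul_pow, h_content, ← C_pow, X_pow_eq_monomial,
        C_mul_monomial, mul_one]
      simp [Pi.single_apply, mul_ite, pow_ite]
  have h_X (v : σ) : letterAction e (diagonal d) (X v) = C (d (e.symm v).2) * X v := by
    simp [letterAction, diagonal_apply, apply_ite C, ite_mul]
  rw [monomial_eq, map_mul, Finsupp.prod, map_prod]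
  simp only [map_pow, h_X, algHom_C, algebraMap_eq]
  rw [← Finsupp.prod, h_prod, C_mul_monomial, mul_comm]

lemma coeff_letterAction_diagonal (d : Fin (N + 1) → A) (f : MvPolynomial σ A) (b : σ →₀ ℕ) :
    coeff b (letterAction e (diagonal d) f) = (∏ j, d j ^ content e b j) * coeff b f := by
  classical
  induction f using MvPolynomial.induction_on' with
  | monomial u a =>
    rw [letterAction_diagonal_monomial, coeff_monomial, coeff_monomial]
    split_ifs with h
    · rw [h]
    · simp
  | add p q hp hq => rw [map_add, coeff_add, hp, hq, coeff_add, mul_add]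

end LetterAction

section Shear

variable {σ ι A : Type*} [CommRing A] {N : ℕ} (e : ι × Fin (N + 1) ≃ σ)

open Classical in
/-- The substitution adding `t s` times the letter `i` to the letter `j` at each place `s`. -/
noncomputable def shear (i j : Fin (N + 1)) (t : ι → A) : MvPolynomial σ A →ₐ[A] MvPolynomial σ A :=
  aeval fun v => X v + if (e.symm v).2 = j then C (t (e.symm v).1) * X (e ((e.symm v).1, i)) else 0

lemma shear_X (i j : Fin (N + 1)) (t : ι → A) (s : ι) (k : Fin (N + 1)) :
    shear e i j t (X (e (s, k))) = X (e (s, k)) + if k = j then C (t s) * X (e (s, i)) else 0 := by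
  simp [shear]

lemma letterAction_transvection (i j : Fin (N + 1)) (t : A) :
    letterAction e (transvection i j t) = shear e i j fun _ => t := by
  ext1 v
  obtain ⟨⟨s, k⟩, rfl⟩ := e.surjective v
  rw [letterAction_X, shear_X]
  rcases eq_or_ne k j with rfl | hk
  · simp [transvection, add_mul, Finset.sum_add_distrib, one_apply, single_apply,
      apply_ite C]
  · simp [transvection, one_apply, apply_ite C, hk, hk.symm]

/-- The exponent with `kappa s` letters `j` at each place `s`. -/
noncomputable def placedLetters (j : Fin (N + 1)) (kappa : ι →₀ ℕ) : σ →₀ ℕ :=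
  kappa.mapDomain fun s => e (s, j)

lemma placedLetters_add (j : Fin (N + 1)) (kappa kappa' : ι →₀ ℕ) :
    placedLetters e j (kappa + kappa') = placedLetters e j kappa + placedLetters e j kappa' :=
  Finsupp.mapDomain_add

lemma placedLetters_apply (j k : Fin (N + 1)) (kappa : ι →₀ ℕ) (s : ι) :
    placedLetters e j kappa (e (s, k)) = if k = j then kappa s else 0 := by
  split_ifs with hk
  · subst hk
    exact Finsupp.mapDomain_apply (fun s s' h => by simpa using h) kappa s
  · exact Finsupp.mapDomain_of_notMem_range _ _ (by simp [Ne.symm hk])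

lemma content_placedLetters [Fintype ι] (j : Fin (N + 1)) (kappa : ι →₀ ℕ) :
    content e (placedLetters e j kappa) = (∑ s, kappa s) • Pi.single j 1 := by
  funext k
  by_cases hk : k = j <;> simp [content_apply, placedLetters_apply, hk]

/-- The exponent `m` arises from `b` by replacing some letters `j` at places in `S`, at least one
of them, by the letter `i`. -/
def IsShearTerm (i j : Fin (N + 1)) (S : Set ι) (m b : σ →₀ ℕ) : Prop :=
  ∃ kappa : ι →₀ ℕ, kappa ≠ 0 ∧ (kappa.support : Set ι) ⊆ S ∧
    m + placedLetters e j kappa = b + placedLetters e i kappa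

variable {e} {i j : Fin (N + 1)} {S : Set ι} {m m' b b' : σ →₀ ℕ}

lemma IsShearTerm.add_right (h : IsShearTerm e i j S m b) (c : σ →₀ ℕ) :
    IsShearTerm e i j S (m + c) (b + c) := by
  obtain ⟨kappa, h_ne, h_supp, h_eq⟩ := h
  exact ⟨kappa, h_ne, h_supp, by rw [add_right_comm, h_eq, add_right_comm]⟩

lemma IsShearTerm.add (h : IsShearTerm e i j S m b) (h' : IsShearTerm e i j S m' b') :
    IsShearTerm e i j S (m + m') (b + b') := by
  classical
  obtain ⟨kappa, h_ne, h_supp, h_eq⟩ := h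
  obtain ⟨kappa', -, h_supp', h_eq'⟩ := h'
  refine ⟨kappa + kappa', by simp [h_ne], fun s hs => ?_, ?_⟩
  · rcases Finset.mem_union.1 (Finsupp.support_add hs) with hs | hs
    exacts [h_supp hs, h_supp' hs]
  · rw [placedLetters_add, placedLetters_add, add_add_add_comm, h_eq, h_eq', add_add_add_comm]

lemma isShearTerm_single {s : ι} (hs : s ∈ S) :
    IsShearTerm e i j S (Finsupp.single (e (s, i)) 1) (Finsupp.single (e (s, j)) 1) := by
  refine ⟨Finsupp.single s 1, by simp, by simpa using Set.singleton_subset_iff.2 hs, ?_⟩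
  simp [placedLetters, Finsupp.mapDomain_single, add_comm]

lemma IsShearTerm.exists_content [Fintype ι] (h : IsShearTerm e i j S m b) :
    ∃ k > 0, content e m + k • Pi.single j 1 = content e b + k • Pi.single i 1 := by
  obtain ⟨kappa, h_ne, -, h_eq⟩ := h
  refine ⟨∑ s, kappa s, Nat.pos_of_ne_zero fun h => h_ne ?_, ?_⟩
  · ext s
    exact Finset.sum_eq_zero_iff.1 h s (Finset.mem_univ s)
  · simpa only [map_add, content_placedLetters] using congrArg (content e) h_eq

section correction

variable {t : ι → A}

lemma coeff_mul_ne_zero {f g : MvPolynomial σ A} (h : coeff m (f * g) ≠ 0) :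
    ∃ a b, coeff a f ≠ 0 ∧ coeff b g ≠ 0 ∧ a + b = m := by
  classical
  obtain ⟨a, ha, b, hb, h_add⟩ := Finset.mem_add.1 (support_mul f g (mem_support_iff.2 h))
  exact ⟨a, b, mem_support_iff.1 ha, mem_support_iff.1 hb, h_add⟩

lemma coeff_add_ne_zero {f g : MvPolynomial σ A} (h : coeff m (f + g) ≠ 0) :
    coeff m f ≠ 0 ∨ coeff m g ≠ 0 := by
  rw [coeff_add] at h
  contrapose! h
  rw [h.1, h.2, add_zero]

variable (e i j t) in
/-- The part of the shear of a monomial which differs from that monomial. -/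
noncomputable def shearCorrection (b : σ →₀ ℕ) : MvPolynomial σ A :=
  shear e i j t (monomial b 1) - monomial b 1

lemma shearCorrection_add (b c : σ →₀ ℕ) : shearCorrection e i j t (b + c) =
    shearCorrection e i j t b * shearCorrection e i j t c +
      (shearCorrection e i j t b * monomial c 1 + shearCorrection e i j t c * monomial b 1) := by
  have h_monomial : (monomial (b + c) 1 : MvPolynomial σ A) = monomial b 1 * monomial c 1 := by
    rw [monomial_mul, one_mul]
  rw [shearCorrection, h_monomial, map_mul, shearCorrection, shearCorrection]
  ring

lemma coeff_mul_monomial_ne_zero {f : MvPolynomial σ A} (h : coeff m (f * monomial b 1) ≠ 0) :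
    ∃ a, coeff a f ≠ 0 ∧ a + b = m := by
  classical
  obtain ⟨a, c, ha, hc, h_add⟩ := coeff_mul_ne_zero h
  rw [coeff_monomial] at hc
  exact ⟨a, ha, by rwa [(ite_ne_right_iff.1 hc).1]⟩

lemma isShearTerm_add_of_coeff {c : σ →₀ ℕ}
    (hb : ∀ {m}, coeff m (shearCorrection e i j t b) ≠ 0 →
      IsShearTerm e i j (Function.support t) m b)
    (hc : ∀ {m}, coeff m (shearCorrection e i j t c) ≠ 0 →
      IsShearTerm e i j (Function.support t) m c)
    (hm : coeff m (shearCorrection e i j t (b + c)) ≠ 0) :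
    IsShearTerm e i j (Function.support t) m (b + c) := by
  rw [shearCorrection_add] at hm
  rcases coeff_add_ne_zero hm with hm | hm
  · obtain ⟨a, a', ha, ha', rfl⟩ := coeff_mul_ne_zero hm
    exact (hb ha).add (hc ha')
  rcases coeff_add_ne_zero hm with hm | hm <;>
    obtain ⟨a, ha, rfl⟩ := coeff_mul_monomial_ne_zero hm
  · exact (hb ha).add_right c
  · rw [add_comm b c]
    exact (hc ha).add_right b

lemma isShearTerm_single_of_coeff {v : σ}
    (hm : coeff m (shearCorrection e i j t (Finsupp.single v 1)) ≠ 0) :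
    IsShearTerm e i j (Function.support t) m (Finsupp.single v 1) := by
  classical
  obtain ⟨⟨s, k⟩, rfl⟩ := e.surjective v
  have h_eq : shearCorrection e i j t (Finsupp.single (e (s, k)) 1) =
      if k = j then monomial (Finsupp.single (e (s, i)) 1) (t s) else 0 := by
    rw [shearCorrection, ← X, shear_X]
    simp [C_mul_X_eq_monomial]
  rw [h_eq] at hm
  split_ifs at hm with hk
  · rw [coeff_monomial, ite_ne_right_iff] at hm
    obtain ⟨rfl, hts⟩ := hm
    exact hk ▸ isShearTerm_single hts
  · exact absurd (coeff_zero m) hm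

lemma isShearTerm_of_coeff_shearCorrection (hm : coeff m (shearCorrection e i j t b) ≠ 0) :
    IsShearTerm e i j (Function.support t) m b := by
  induction b using Finsupp.induction_linear generalizing m with
  | zero => simp [shearCorrection, ← C_apply] at hm
  | add b c hb hc => exact isShearTerm_add_of_coeff hb hc hm
  | single v k =>
    induction k generalizing m with
    | zero => simp [shearCorrection, ← C_apply] at hm
    | succ k ih =>
      rw [Finsupp.single_add] at hm ⊢
      exact isShearTerm_add_of_coeff ih isShearTerm_single_of_coeff hm

lemma coeff_shear_eq (F : MvPolynomial σ A)
    (hF : ∀ b, coeff b F ≠ 0 → ¬ IsShearTerm e i j (Function.support t) m b) :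
    coeff m (shear e i j t F) = coeff m F := by
  have h_sum : shear e i j t F =
      F + ∑ b ∈ F.support, C (coeff b F) * shearCorrection e i j t b := by
    conv_lhs => rw [F.as_sum]
    conv_rhs => enter [1]; rw [F.as_sum]
    rw [map_sum, ← Finset.sum_add_distrib]
    refine Finset.sum_congr rfl fun b _ => ?_
    rw [shearCorrection, ← mul_one (coeff b F), ← C_mul_monomial, map_mul, algHom_C, mul_one]
    simp only [algebraMap_eq]
    ring
  rw [h_sum, coeff_add, coeff_sum, Finset.sum_eq_zero, add_zero]
  intro b hb
  rw [coeff_C_mul]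
  by_contra h
  exact hF b (mem_support_iff.1 hb)
    (isShearTerm_of_coeff_shearCorrection (right_ne_zero_of_mul h))

lemma coeff_letterAction_transvection [Fintype ι] (t : A) (F : MvPolynomial σ A)
    (hF : ∀ b, coeff b F ≠ 0 → ∀ k > 0,
      content e m + k • Pi.single j 1 ≠ content e b + k • Pi.single i 1) :
    coeff m (letterAction e (transvection i j t) F) = coeff m F := by
  rw [letterAction_transvection]
  refine coeff_shear_eq F fun b hb h => ?_
  obtain ⟨k, hk, h_eq⟩ := h.exists_content
  exact hF b hb k hk h_eq

end correction

end Shear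

/-! ### Leading monomials of highest weight vectors -/

section MonomialSubstitution

variable {σ τ K B : Type*} [CommRing K] [CommRing B] [Algebra K B]

/-- The substitution sending the monomial with exponent `b` to the monomial with exponent `Φ b`
and coefficient `c b`. -/
noncomputable def monomialSubst (Φ : (σ →₀ ℕ) →+ (τ →₀ ℕ)) (c : Multiplicative (σ →₀ ℕ) →* B) :
    MvPolynomial σ K →ₐ[K] MvPolynomial τ B :=
  aeval fun v =>
    monomial (Φ (Finsupp.single v 1)) (c (Multiplicative.ofAdd (Finsupp.single v 1)))

variable (Φ : (σ →₀ ℕ) →+ (τ →₀ ℕ)) (c : Multiplicative (σ →₀ ℕ) →* B)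

lemma monomialSubst_monomial (b : σ →₀ ℕ) (k : K) :
    monomialSubst Φ c (monomial b k) = monomial (Φ b) (k • c (Multiplicative.ofAdd b)) := by
  suffices h : ∀ b, monomialSubst Φ c (monomial b (1 : K)) =
      monomial (Φ b) (c (Multiplicative.ofAdd b)) by
    rw [← mul_one k, ← smul_eq_mul, ← smul_monomial, map_smul, h, smul_monomial, smul_eq_mul,
      mul_one]
  intro b
  induction b using Finsupp.induction_linear with
  | zero => simp
  | add b b' hb hb' =>
    rw [← one_mul (1 : K), ← monomial_mul, map_mul, hb, hb', monomial_mul, map_add, ofAdd_add,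
      map_mul c]
  | single v k =>
    have h_nsmul : Finsupp.single v k = k • Finsupp.single v 1 := by simp
    rw [← X_pow_eq_monomial, map_pow, monomialSubst, aeval_X, monomial_pow, h_nsmul, map_nsmul,
      ofAdd_nsmul, map_pow c]

open Classical in
lemma coeff_monomialSubst (f : MvPolynomial σ K) (m : τ →₀ ℕ) :
    coeff m (monomialSubst Φ c f) =
      ∑ b ∈ f.support with Φ b = m, coeff b f • c (Multiplicative.ofAdd b) := by
  conv_lhs => rw [f.as_sum, map_sum]
  simp only [monomialSubst_monomial, coeff_sum, coeff_monomial, Finset.sum_filter]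

end MonomialSubstitution

section Specialization

variable {σ ι : Type*} [Finite σ] [LinearOrder ι] {N : ℕ} (e : ι × Fin (N + 1) ≃ σ)
  (j : Fin N) (r : ι)

/-- The effect on exponents of making the letters `j` and `j + 1` at the places before `r`
constant, and the letter `j + 1` at `r` a multiple of the letter `j`. -/
noncomputable def specializedExponent : (σ →₀ ℕ) →+ (σ →₀ ℕ) where
  toFun b := Finsupp.equivFunOnFinite.symm fun v =>
    if r < (e.symm v).1 ∨ ((e.symm v).2 ≠ j.castSucc ∧ (e.symm v).2 ≠ j.succ) then b v
    else if e.symm v = (r, j.castSucc) then b v + b (e (r, j.succ)) else 0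
  map_zero' := by ext; simp
  map_add' a b := by
    ext v
    simp only [Finsupp.equivFunOnFinite_symm_apply_apply, Finsupp.add_apply]
    split_ifs <;> ring

variable {e j r}

lemma specializedExponent_apply_of_eq {s : ι} {k : Fin (N + 1)}
    (h : r < s ∨ (k ≠ j.castSucc ∧ k ≠ j.succ)) (b : σ →₀ ℕ) :
    specializedExponent e j r b (e (s, k)) = b (e (s, k)) := by
  simp [specializedExponent, h]

lemma specializedExponent_apply_self (b : σ →₀ ℕ) :
    specializedExponent e j r b (e (r, j.castSucc)) =
      b (e (r, j.castSucc)) + b (e (r, j.succ)) := by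
  simp [specializedExponent]

section specialize

variable [Fintype ι]

variable (e j r) in
/-- The coefficient picked up by a monomial when the letters `j` and `j + 1` at the places before
`r` become `xi` and `eta`, and the letter `j + 1` at `r` becomes `z` times the letter `j`. -/
def specializedCoeff {B : Type*} [CommRing B] (xi eta : ι → B) (z : B) :
    Multiplicative (σ →₀ ℕ) →* B where
  toFun b := (∏ s with s < r,
      xi s ^ b.toAdd (e (s, j.castSucc)) * eta s ^ b.toAdd (e (s, j.succ))) *
    z ^ b.toAdd (e (r, j.succ))
  map_one' := by simp
  map_mul' a b := by
    simp only [toAdd_mul, Finsupp.add_apply, pow_add, Finset.prod_mul_distrib]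
    ring

variable (e j r) in
/-- The substitution with exponents `specializedExponent` and coefficients `specializedCoeff`. -/
noncomputable def specialize (K : Type*) [CommRing K] {B : Type*} [CommRing B] [Algebra K B]
    (xi eta : ι → B) (z : B) : MvPolynomial σ K →ₐ[K] MvPolynomial σ B :=
  monomialSubst (specializedExponent e j r) (specializedCoeff e j r xi eta z)

variable {K B : Type*} [CommRing K] [CommRing B] [Algebra K B] (xi eta : ι → B) (z : B)

omit [Fintype ι] in
lemma specializedExponent_single (s : ι) (k : Fin (N + 1)) :
    specializedExponent e j r (Finsupp.single (e (s, k)) 1) =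
      if s < r ∧ (k = j.castSucc ∨ k = j.succ) then 0
      else if s = r ∧ k = j.succ then Finsupp.single (e (r, j.castSucc)) 1
      else Finsupp.single (e (s, k)) 1 := by
  classical
  have h_ne : j.castSucc ≠ j.succ := (Fin.castSucc_lt_succ).ne
  ext v
  obtain ⟨⟨s', k'⟩, rfl⟩ := e.surjective v
  simp only [specializedExponent, AddMonoidHom.coe_mk, ZeroHom.coe_mk,
    Finsupp.equivFunOnFinite_symm_apply_apply, Equiv.symm_apply_apply, Finsupp.single_apply,
    EmbeddingLike.apply_eq_iff_eq, Prod.mk.injEq]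
  split_ifs <;>
    try simp only [Finsupp.single_apply, EmbeddingLike.apply_eq_iff_eq, Prod.mk.injEq,
      Finsupp.zero_apply]
  all_goals grind

omit [Finite σ] in
lemma specializedCoeff_single (s : ι) (k : Fin (N + 1)) :
    specializedCoeff e j r xi eta z (Multiplicative.ofAdd (Finsupp.single (e (s, k)) 1)) =
      if s < r ∧ k = j.castSucc then xi s else if s < r ∧ k = j.succ then eta s
      else if s = r ∧ k = j.succ then z else 1 := by
  classical
  simp only [specializedCoeff, MonoidHom.coe_mk, OneHom.coe_mk, toAdd_ofAdd, Finsupp.single_apply,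
    EmbeddingLike.apply_eq_iff_eq, Prod.mk.injEq, ite_and, pow_ite, pow_one, pow_zero]
  rw [Finset.prod_mul_distrib]
  simp only [Finset.prod_ite_eq, Finset.mem_filter, Finset.mem_univ, true_and]
  have h_ne : j.castSucc ≠ j.succ := (Fin.castSucc_lt_succ).ne
  split_ifs <;> grind

lemma specialize_X (s : ι) (k : Fin (N + 1)) :
    specialize e j r K xi eta z (X (e (s, k))) =
      if s < r ∧ k = j.castSucc then C (xi s) else if s < r ∧ k = j.succ then C (eta s)
      else if s = r ∧ k = j.succ then C z * X (e (r, j.castSucc)) else X (e (s, k)) := by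
  rw [specialize, monomialSubst, aeval_X, specializedExponent_single, specializedCoeff_single]
  split_ifs <;> first | rfl | exact C_mul_X_eq_monomial.symm | grind

-- At the place `r` the shear turns `j + 1` into `-j + j = 0`; before `r` it turns `eta` into
-- `eta + xi`; after `r` the substitutions leave the variables alone.
lemma specialize_letterAction (f : MvPolynomial σ K) :
    specialize e j r K xi eta (-1) (letterAction e (transvection j.castSucc j.succ 1) f) =
      shear e j.castSucc j.succ (Set.indicator (Set.Ioi r) 1)
        (specialize e j r K xi (eta + xi) 0 f) := by
  have h_ne : j.castSucc ≠ j.succ := (Fin.castSucc_lt_succ).ne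
  suffices (specialize e j r K xi eta (-1)).comp
        (letterAction e (transvection j.castSucc j.succ 1)) =
      ((shear e j.castSucc j.succ (Set.indicator (Set.Ioi r) 1)).restrictScalars K).comp
        (specialize e j r K xi (eta + xi) 0) from DFunLike.congr_fun this f
  ext1 v
  obtain ⟨⟨s, k⟩, rfl⟩ := e.surjective v
  simp only [letterAction_transvection, AlgHom.comp_apply, AlgHom.restrictScalars_apply, shear_X,
    map_add, apply_ite (specialize e j r K xi eta (-1)), map_one, one_mul, map_zero,
    specialize_X]
  rcases lt_trichotomy s r with hs | rfl | hs <;> rcases eq_or_ne k j.succ with rfl | hk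
  · simp [hs, h_ne.symm, add_comm]
  · by_cases hk' : k = j.castSucc <;> simp [hs, hs.ne, hk, hk', h_ne, shear_X]
  · simp [h_ne]
  · simp [hk, shear_X]
  · simp [hs.not_gt, hs.ne', hs, shear_X]
  · simp [hs.not_gt, hs.ne', hk, shear_X]

end specialize

section fiber

variable {a b : σ →₀ ℕ} (h : specializedExponent e j r b = specializedExponent e j r a)
include h

lemma apply_eq_of_specializedExponent_eq {s : ι} {k : Fin (N + 1)}
    (hs : r < s ∨ (k ≠ j.castSucc ∧ k ≠ j.succ)) : b (e (s, k)) = a (e (s, k)) := by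
  rw [← specializedExponent_apply_of_eq hs b, h, specializedExponent_apply_of_eq hs]

lemma apply_add_apply_eq_of_specializedExponent_eq :
    b (e (r, j.castSucc)) + b (e (r, j.succ)) = a (e (r, j.castSucc)) + a (e (r, j.succ)) := by
  rw [← specializedExponent_apply_self, h, specializedExponent_apply_self]

lemma sum_le_eq_of_specializedExponent_eq [Fintype ι] (h_content : content e b = content e a)
    (k : Fin (N + 1)) : ∑ s with s ≤ r, b (e (s, k)) = ∑ s with s ≤ r, a (e (s, k)) := by
  have h_total := congrFun h_content k
  simp only [content_apply] at h_total
  rw [← Finset.sum_filter_add_sum_filter_not _ (· ≤ r),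
    ← Finset.sum_filter_add_sum_filter_not (s := Finset.univ) (f := fun s => a _) (· ≤ r),
    Finset.sum_congr (s₁ := Finset.univ.filter (¬ · ≤ r)) rfl fun s hs =>
      apply_eq_of_specializedExponent_eq h (.inl (by simpa using hs))] at h_total
  exact Nat.add_right_cancel h_total

lemma eq_of_specializedExponent_eq [Fintype ι] (h_content : content e b = content e a)
    (h_before : ∀ s < r, ∀ k, k = j.castSucc ∨ k = j.succ → b (e (s, k)) = a (e (s, k))) :
    b = a := by
  refine letterPlace_ext e fun s k => ?_
  by_cases hk : k = j.castSucc ∨ k = j.succ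
  · rcases lt_trichotomy s r with hs | rfl | hs
    · exact h_before s hs k hk
    · have h_sum := sum_le_eq_of_specializedExponent_eq h h_content k
      rw [sum_filter_le_eq_sum_filter_lt_add, sum_filter_le_eq_sum_filter_lt_add,
        Finset.sum_congr rfl fun s' hs' => h_before s' (Finset.mem_filter.1 hs').2 k hk] at h_sum
      exact Nat.add_left_cancel h_sum
    · exact apply_eq_of_specializedExponent_eq h (.inl hs)
  · exact apply_eq_of_specializedExponent_eq h (.inr (not_or.1 hk))

end fiber

section order

open MonomialOrder

variable {o : MonomialOrder σ} (ho : IsPlaceLetterOrder o e) {a b : σ →₀ ℕ}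
include ho

lemma lt_of_specializedExponent_eq
    (h : specializedExponent e j r b = specializedExponent e j r a)
    (h_lt : a (e (r, j.succ)) < b (e (r, j.succ))) : a ≺[o] b := by
  refine ho a b r j.succ (fun s k hsk => (apply_eq_of_specializedExponent_eq h ?_).symm) h_lt
  exact hsk.imp_right fun hk => ⟨(Fin.castSucc_lt_succ.trans hk).ne', hk.ne'⟩

lemma lt_of_isShearTerm_specializedExponent
    (h : IsShearTerm e j.castSucc j.succ (Set.Ioi r) (specializedExponent e j r a)
      (specializedExponent e j r b)) : a ≺[o] b := by
  obtain ⟨kappa, h_ne, h_supp, h_eq⟩ := h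
  have h_nonempty := Finsupp.support_nonempty_iff.2 h_ne
  set s₀ := kappa.support.max' h_nonempty
  have hs₀ : r < s₀ := h_supp (kappa.support.max'_mem h_nonempty)
  have h_apply (s : ι) (k : Fin (N + 1)) (hs : r < s ∨ (k ≠ j.castSucc ∧ k ≠ j.succ)) :
      a (e (s, k)) + (if k = j.succ then kappa s else 0) =
        b (e (s, k)) + if k = j.castSucc then kappa s else 0 := by
    have h_eq := DFunLike.congr_fun h_eq (e (s, k))
    simpa only [Finsupp.add_apply, placedLetters_apply, specializedExponent_apply_of_eq hs]
      using h_eq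
  refine ho a b s₀ j.succ (fun s k hsk => ?_) ?_
  · rcases hsk with hs | hk
    · have h_zero : kappa s = 0 := by
        by_contra hs'
        exact hs.not_ge (kappa.support.le_max' s (Finsupp.mem_support_iff.2 hs'))
      simpa [h_zero] using h_apply s k (.inl (hs₀.trans hs))
    · have hk' := Fin.castSucc_lt_succ.trans hk
      simpa [hk.ne', hk'.ne'] using h_apply s k (.inr ⟨hk'.ne', hk.ne'⟩)
  · have h_pos : kappa s₀ ≠ 0 := Finsupp.mem_support_iff.1 (kappa.support.max'_mem h_nonempty)
    have h_apply := h_apply s₀ j.succ (.inl hs₀)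
    simp only [if_true, Fin.castSucc_lt_succ.ne', if_false] at h_apply
    omega

end order

section leadingFiber

open MonomialOrder

variable {K B : Type*} [CommRing K] {o : MonomialOrder σ} {f : MvPolynomial σ K}

open Classical in
variable (e j r o f) in
/-- The exponents of `f` that are identified with the leading one by `specializedExponent`. -/
noncomputable def leadingFiber : Finset (σ →₀ ℕ) :=
  {b ∈ f.support | specializedExponent e j r b = specializedExponent e j r (o.degree f)}

lemma mem_leadingFiber {b : σ →₀ ℕ} : b ∈ leadingFiber e j r o f ↔ coeff b f ≠ 0 ∧
    specializedExponent e j r b = specializedExponent e j r (o.degree f) := by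
  classical
  rw [leadingFiber, Finset.mem_filter, mem_support_iff]

lemma degree_mem_leadingFiber (hf : f ≠ 0) : o.degree f ∈ leadingFiber e j r o f :=
  mem_leadingFiber.2 ⟨o.coeff_degree_ne_zero_iff.2 hf, rfl⟩

lemma apply_succ_le_of_mem_leadingFiber (ho : IsPlaceLetterOrder o e) {b : σ →₀ ℕ}
    (hb : b ∈ leadingFiber e j r o f) : b (e (r, j.succ)) ≤ o.degree f (e (r, j.succ)) := by
  obtain ⟨hb, h⟩ := mem_leadingFiber.1 hb
  exact le_of_not_gt fun h_lt =>
    (o.le_degree (mem_support_iff.2 hb)).not_gt (lt_of_specializedExponent_eq ho h h_lt)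

variable [Fintype ι] [CommRing B] [Algebra K B] (xi eta : ι → B)

lemma coeff_specialize_leading (z : B) :
    coeff (specializedExponent e j r (o.degree f)) (specialize e j r K xi eta z f) =
      ∑ b ∈ leadingFiber e j r o f,
        coeff b f • specializedCoeff e j r xi eta z (Multiplicative.ofAdd b) := by
  classical
  rw [specialize, coeff_monomialSubst, leadingFiber]

-- After specialization, invariance under the shear compares the terms with the leading exponent;
-- all other exponents would have to come from larger monomials of `f`.
lemma sum_specializedCoeff_eq (ho : IsPlaceLetterOrder o e)
    (hf : letterAction e (transvection j.castSucc j.succ 1) f = f) :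
    ∑ b ∈ leadingFiber e j r o f,
        coeff b f • specializedCoeff e j r xi eta (-1) (Multiplicative.ofAdd b) =
      ∑ b ∈ leadingFiber e j r o f,
        coeff b f • specializedCoeff e j r xi (eta + xi) 0 (Multiplicative.ofAdd b) := by
  classical
  have h_subst := specialize_letterAction (e := e) (j := j) (r := r) xi eta f
  rw [← coeff_specialize_leading, ← coeff_specialize_leading]
  conv_lhs => rw [← hf, h_subst, hf]
  refine coeff_shear_eq _ fun m hm h_shear => ?_
  rw [specialize, coeff_monomialSubst] at hm
  obtain ⟨b, hb, -⟩ := Finset.exists_ne_zero_of_sum_ne_zero hm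
  obtain ⟨hb_mem, rfl⟩ := Finset.mem_filter.1 hb
  refine (o.le_degree hb_mem).not_gt (lt_of_isShearTerm_specializedExponent (j := j) (r := r) ho ?_)
  obtain ⟨kappa, h_ne, h_supp, h_eq⟩ := h_shear
  exact ⟨kappa, h_ne, h_supp.trans (Set.support_indicator_subset), h_eq⟩

end leadingFiber

end Specialization

section GenericSpecialization

variable {σ ι : Type*} [Fintype ι] [LinearOrder ι] {N : ℕ} (e : ι × Fin (N + 1) ≃ σ) (j : Fin N)
  {r : ι} (K : Type*) [CommRing K]

/-- The value of the letter `j` at the place `s` under the generic specialization. With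
`genericEta` it is chosen so that the sum of both is a multiple of the auxiliary variable, and so
that setting the auxiliary variable to `1` recovers the original variables. -/
noncomputable def genericXi (s : ι) : Polynomial (MvPolynomial σ K) :=
  Polynomial.X * Polynomial.C (X (e (s, j.castSucc)) + X (e (s, j.succ))) -
    Polynomial.C (X (e (s, j.succ)))

/-- The value of the letter `j + 1` at the place `s` under the generic specialization. -/
noncomputable def genericEta (s : ι) : Polynomial (MvPolynomial σ K) :=
  Polynomial.C (X (e (s, j.succ)))

variable {e j}

lemma natDegree_specializedCoeff_le (b : σ →₀ ℕ) :
    (specializedCoeff e j r (genericXi e j K) (genericEta e j K) (-1)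
      (Multiplicative.ofAdd b)).natDegree ≤ ∑ s with s < r, b (e (s, j.castSucc)) := by
  have h_xi (s : ι) : (genericXi e j K s).natDegree ≤ 1 := by
    unfold genericXi
    compute_degree
  have h_sign : ((-1 : Polynomial (MvPolynomial σ K)) ^ b (e (r, j.succ))).natDegree ≤ 0 := by
    compute_degree
  refine Polynomial.natDegree_mul_le.trans ?_
  refine (add_le_add (Polynomial.natDegree_prod_le _ _) h_sign).trans ?_
  refine Finset.sum_le_sum fun s _ => Polynomial.natDegree_mul_le.trans ?_
  refine (add_le_add (Polynomial.natDegree_pow_le_of_le _ (h_xi s))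
    (Polynomial.natDegree_pow_le_of_le (m := 0) _ ?_)).trans ?_
  · rw [genericEta, Polynomial.natDegree_C]
  · simp

lemma X_pow_dvd_specializedCoeff (b : σ →₀ ℕ) :
    (Polynomial.X : Polynomial (MvPolynomial σ K)) ^ ∑ s with s ≤ r, b (e (s, j.succ)) ∣
      specializedCoeff e j r (genericXi e j K) (genericEta e j K + genericXi e j K) 0
        (Multiplicative.ofAdd b) := by
  simp only [specializedCoeff, MonoidHom.coe_mk, OneHom.coe_mk, toAdd_ofAdd]
  rw [sum_filter_le_eq_sum_filter_lt_add, pow_add, ← Finset.prod_pow_eq_pow_sum]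
  refine mul_dvd_mul (Finset.prod_dvd_prod_of_dvd _ _ fun s _ => ?_) ?_
  · refine Dvd.dvd.mul_left (pow_dvd_pow_of_dvd ?_ _) _
    exact ⟨Polynomial.C (X (e (s, j.castSucc)) + X (e (s, j.succ))), by
      simp [genericXi, genericEta]⟩
  · rcases eq_or_ne (b (e (r, j.succ))) 0 with h | h <;> simp [h]

variable (e j r) in
/-- The part of the exponent `b` at the letters `j` and `j + 1` and the places before `r`. -/
noncomputable def earlierExponent (b : σ →₀ ℕ) : σ →₀ ℕ :=
  ∑ s with s < r, (Finsupp.single (e (s, j.castSucc)) (b (e (s, j.castSucc))) +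
    Finsupp.single (e (s, j.succ)) (b (e (s, j.succ))))

lemma eval_one_specializedCoeff (b : σ →₀ ℕ) :
    Polynomial.eval 1 (specializedCoeff e j r (genericXi e j K) (genericEta e j K) (-1)
      (Multiplicative.ofAdd b)) =
      monomial (earlierExponent e j r b) ((-1) ^ b (e (r, j.succ))) := by
  simp only [specializedCoeff, MonoidHom.coe_mk, OneHom.coe_mk, toAdd_ofAdd, genericXi, genericEta,
    earlierExponent, Polynomial.eval_mul, Polynomial.eval_prod, Polynomial.eval_pow,
    Polynomial.eval_sub, Polynomial.eval_X, Polynomial.eval_C, Polynomial.eval_neg,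
    Polynomial.eval_one, one_mul, add_sub_cancel_right, X_pow_eq_monomial, monomial_mul, mul_one]
  rw [← monomial_sum_one, ← mul_one ((-1 : K) ^ _), ← C_mul_monomial, mul_comm]
  simp

lemma earlierExponent_apply {s : ι} (hs : s < r) {k : Fin (N + 1)}
    (hk : k = j.castSucc ∨ k = j.succ) (b : σ →₀ ℕ) :
    earlierExponent e j r b (e (s, k)) = b (e (s, k)) := by
  classical
  have h_ne : j.castSucc ≠ j.succ := (Fin.castSucc_lt_succ).ne
  simp only [earlierExponent, Finsupp.coe_finsetSum, Finset.sum_apply, Finsupp.add_apply,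
    Finsupp.single_apply, EmbeddingLike.apply_eq_iff_eq, Prod.mk.injEq]
  rw [Finset.sum_eq_single_of_mem s (by simpa using hs) (by simp +contextual)]
  rcases hk with rfl | rfl <;> simp [h_ne, h_ne.symm]

variable {K} in
lemma sum_specializedCoeff_ne_zero [Finite σ] {o : MonomialOrder σ} {f : MvPolynomial σ K}
    {mu : Fin (N + 1) → ℕ} (hf_mem : f ∈ weightSpace e K mu) (hf_ne : f ≠ 0) :
    ∑ b ∈ leadingFiber e j r o f, coeff b f • specializedCoeff e j r (genericXi e j K)
      (genericEta e j K) (-1) (Multiplicative.ofAdd b) ≠ 0 := by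
  classical
  intro h_zero
  have h_leading := degree_mem_leadingFiber (e := e) (j := j) (r := r) (o := o) hf_ne
  have h_coeff := congrArg (fun Q => coeff (earlierExponent e j r (o.degree f))
    (Polynomial.eval 1 Q)) h_zero
  simp only [Polynomial.eval_finsetSum, Polynomial.eval_smul, eval_one_specializedCoeff,
    coeff_sum, coeff_smul, coeff_monomial, Polynomial.eval_zero, coeff_zero] at h_coeff
  rw [Finset.sum_eq_single_of_mem _ h_leading, if_pos rfl] at h_coeff
  · rcases neg_one_pow_eq_or K (o.degree f (e (r, j.succ))) with h | h <;>
      simp_all [mem_leadingFiber]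
  · intro b hb h_ne
    rw [if_neg, smul_zero]
    intro h_earlier
    obtain ⟨hb, h_eq⟩ := mem_leadingFiber.1 hb
    refine h_ne (eq_of_specializedExponent_eq h_eq ?_ fun s hs k hk => ?_)
    · rw [mem_weightSpace.1 hf_mem b hb,
        mem_weightSpace.1 hf_mem _ (mem_leadingFiber.1 h_leading).1]
    · rw [← earlierExponent_apply hs hk b, h_earlier, earlierExponent_apply hs hk]

variable {K} in
-- In `K[x][T]` both sides of `sum_specializedCoeff_eq` are equal and nonzero, the left-hand side
-- has degree at most `∑ s < r, a (s, j)` and the right-hand side is divisible by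
-- `T ^ ∑ s ≤ r, a (s, j + 1)`, where `a` is the leading exponent.
theorem isYamanouchi_degree [Finite σ] [IsDomain K] {o : MonomialOrder σ}
    (ho : IsPlaceLetterOrder o e) {f : MvPolynomial σ K} {mu : Fin (N + 1) → ℕ}
    (hf_mem : f ∈ weightSpace e K mu) (hf_ne : f ≠ 0)
    (hf : ∀ j : Fin N, letterAction e (transvection j.castSucc j.succ 1) f = f) :
    IsYamanouchi e (o.degree f) := by
  intro j r h_lt
  have h_content {b : σ →₀ ℕ} (hb : b ∈ leadingFiber e j r o f) :
      content e b = content e (o.degree f) := by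
    rw [mem_weightSpace.1 hf_mem b (mem_leadingFiber.1 hb).1,
      mem_weightSpace.1 hf_mem _ (o.coeff_degree_ne_zero_iff.2 hf_ne)]
  set Q := ∑ b ∈ leadingFiber e j r o f, coeff b f • specializedCoeff e j r (genericXi e j K)
    (genericEta e j K) (-1) (Multiplicative.ofAdd b) with hQ
  have h_degree : Q.natDegree ≤ ∑ s with s < r, o.degree f (e (s, j.castSucc)) := by
    refine Polynomial.natDegree_sum_le_of_forall_le _ _ fun b hb => ?_
    refine (Polynomial.natDegree_smul_le _ _).trans
      ((natDegree_specializedCoeff_le K b).trans ?_)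
    have h_eq := (mem_leadingFiber.1 hb).2
    have h_sum := sum_le_eq_of_specializedExponent_eq h_eq (h_content hb) j.castSucc
    rw [sum_filter_le_eq_sum_filter_lt_add, sum_filter_le_eq_sum_filter_lt_add] at h_sum
    have h_add := apply_add_apply_eq_of_specializedExponent_eq h_eq
    have h_le := apply_succ_le_of_mem_leadingFiber ho hb
    omega
  have h_dvd : Polynomial.X ^ ∑ s with s ≤ r, o.degree f (e (s, j.succ)) ∣ Q := by
    rw [hQ, sum_specializedCoeff_eq _ _ ho (hf j)]
    refine Finset.dvd_sum fun b hb => dvd_smul_of_dvd _ ?_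
    rw [← sum_le_eq_of_specializedExponent_eq (mem_leadingFiber.1 hb).2 (h_content hb)]
    exact X_pow_dvd_specializedCoeff K b
  have h_le := Polynomial.natDegree_le_of_dvd h_dvd (sum_specializedCoeff_ne_zero hf_mem hf_ne)
  rw [Polynomial.natDegree_X_pow] at h_le
  exact (h_le.trans h_degree).not_gt h_lt

end GenericSpecialization

/-! ### Highest weight vectors -/

section WeightComponents

/-- A module over an infinite field containing all values of a vector-valued polynomial contains
the coefficients of that polynomial. -/
lemma mem_of_forall_sum_prod_pow_smul_mem {K V τ : Type*} [Field K] [Infinite K] [AddCommGroup V]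
    [Module K V] [Fintype τ] {M : Submodule K V} {W : Finset (τ → ℕ)} {v : (τ → ℕ) → V}
    (hM : ∀ d : τ → K, ∑ nu ∈ W, (∏ j, d j ^ nu j) • v nu ∈ M) {mu : τ → ℕ} (hmu : mu ∈ W) :
    v mu ∈ M := by
  classical
  by_contra h_notMem
  obtain ⟨φ, hφ, h_le⟩ := Submodule.exists_le_ker_of_notMem h_notMem
  have h_zero : ∑ nu ∈ W, monomial (Finsupp.equivFunOnFinite.symm nu) (φ (v nu)) = 0 := by
    refine MvPolynomial.funext fun d => ?_
    rw [map_zero, ← LinearMap.mem_ker.1 (h_le (hM d)), map_sum, map_sum]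
    refine Finset.sum_congr rfl fun nu _ => ?_
    rw [eval_monomial, map_smul, smul_eq_mul, mul_comm, Finsupp.prod_fintype _ _ (by simp)]
    rfl
  have h_coeff := congrArg (coeff (Finsupp.equivFunOnFinite.symm mu)) h_zero
  simp only [coeff_sum, coeff_monomial, EmbeddingLike.apply_eq_iff_eq, coeff_zero,
    Finset.sum_ite_eq', if_pos hmu] at h_coeff
  exact hφ h_coeff

lemma eq_of_forall_pow_eq {K : Type*} [Field K] [Infinite K] {a b : ℕ}
    (h : ∀ t : K, t ≠ 0 → t ^ a = t ^ b) : a = b := by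
  have h_X : (Polynomial.X ^ a : Polynomial K) = Polynomial.X ^ b :=
    Polynomial.eq_of_infinite_eval_eq _ _ <|
      (Set.finite_singleton (0 : K)).infinite_compl.mono fun t ht => by simpa using h t ht
  simpa using congrArg Polynomial.natDegree h_X

lemma prod_mulSingle_pow {τ A : Type*} [Fintype τ] [DecidableEq τ] [CommMonoid A] (j : τ) (t : A)
    (c : τ → ℕ) : ∏ k, (Pi.mulSingle j t : τ → A) k ^ c k = t ^ c j := by
  simp [Pi.mulSingle_apply, ite_pow]

variable {σ ι : Type*} {N : ℕ} (e : ι × Fin (N + 1) ≃ σ)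

/-- The part of content `mu` of a polynomial. -/
noncomputable def weightComponent (A : Type*) [CommRing A] (mu : Fin (N + 1) → ℕ) :
    MvPolynomial σ A →ₗ[A] MvPolynomial σ A :=
  weightedHomogeneousComponent (fun v => (Pi.single (e.symm v).2 1 : Fin (N + 1) → ℕ)) mu

lemma coeff_weightComponent [Fintype ι] {A : Type*} [CommRing A] (mu : Fin (N + 1) → ℕ)
    (f : MvPolynomial σ A) (b : σ →₀ ℕ) :
    coeff b (weightComponent e A mu f) = if content e b = mu then coeff b f else 0 := by
  classical
  rw [weightComponent, coeff_weightedHomogeneousComponent, content_eq_weight]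

lemma weightComponent_mem_weightSpace {A : Type*} [CommRing A] (mu : Fin (N + 1) → ℕ)
    (f : MvPolynomial σ A) : weightComponent e A mu f ∈ weightSpace e A mu :=
  weightedHomogeneousComponent_mem _ _ _

variable [Finite ι] {K : Type*} [Field K] [Infinite K]

lemma weightComponent_mem {M : Submodule K (MvPolynomial σ K)}
    (hM : ∀ d, ∀ f ∈ M, letterAction e (diagonal d) f ∈ M) {f : MvPolynomial σ K} (hf : f ∈ M)
    (mu : Fin (N + 1) → ℕ) : weightComponent e K mu f ∈ M := by
  classical
  have := Fintype.ofFinite ι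
  refine mem_of_forall_sum_prod_pow_smul_mem (W := insert mu (f.support.image (content e)))
    (v := fun nu => weightComponent e K nu f) (fun d => ?_) (Finset.mem_insert_self _ _)
  convert hM d f hf
  ext b
  simp only [coeff_letterAction_diagonal, coeff_sum, coeff_smul, coeff_weightComponent,
    smul_eq_mul, mul_ite, mul_zero, Finset.sum_ite_eq, Finset.mem_insert, Finset.mem_image,
    mem_support_iff]
  split_ifs with h
  · rfl
  · rw [show coeff b f = 0 by by_contra hb; exact h (Or.inr ⟨b, hb, rfl⟩), mul_zero]

lemma mem_weightSpace_of_letterAction_diagonal {mu : Fin (N + 1) → ℕ} {f : MvPolynomial σ K}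
    (hf : ∀ d, ∏ j, d j ≠ 0 → letterAction e (diagonal d) f = (∏ j, d j ^ mu j) • f) :
    f ∈ weightSpace e K mu := by
  have := Fintype.ofFinite ι
  refine mem_weightSpace.2 fun b hb => funext fun j => eq_of_forall_pow_eq (K := K) fun t ht => ?_
  have h_prod : ∏ k, (Pi.mulSingle j t : Fin (N + 1) → K) k = t := by simp
  have h_coeff := congrArg (coeff b) (hf (Pi.mulSingle j t) (h_prod.trans_ne ht))
  rw [coeff_letterAction_diagonal, coeff_smul, smul_eq_mul, prod_mulSingle_pow,
    prod_mulSingle_pow] at h_coeff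
  exact mul_right_cancel₀ hb h_coeff

end WeightComponents

section HighestWeight

variable {σ ι : Type*} {N : ℕ} (e : ι × Fin (N + 1) ≃ σ) (K : Type*) [Field K]

/-- The polynomials fixed by all upper unitriangular substitutions of letters. -/
noncomputable def unipotentInvariants : Submodule K (MvPolynomial σ K) :=
  ⨅ (i : Fin (N + 1)) (j : Fin (N + 1)) (_ : i < j) (t : K),
    LinearMap.eqLocus (letterAction e (transvection i j t)).toLinearMap LinearMap.id

variable {e K} in
lemma mem_unipotentInvariants {f : MvPolynomial σ K} : f ∈ unipotentInvariants e K ↔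
    ∀ i j, i < j → ∀ t, letterAction e (transvection i j t) f = f := by
  simp [unipotentInvariants, Submodule.mem_iInf]

variable {K}

/-- The highest weight vectors of weight `mu` in `M`, for the upper triangular Borel subgroup. -/
noncomputable def highestWeightSpace (M : Submodule K (MvPolynomial σ K)) (mu : Fin (N + 1) → ℕ) :
    Submodule K (MvPolynomial σ K) :=
  M ⊓ weightSpace e K mu ⊓ unipotentInvariants e K

lemma toLex_lt_toLex_of_add_smul_single {w w' : Fin (N + 1) → ℕ} {i j : Fin (N + 1)} {k : ℕ}
    (hij : i < j) (hk : 0 < k) (h : w + k • Pi.single j 1 = w' + k • Pi.single i 1) :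
    toLex w' < toLex w := by
  refine ⟨i, fun l hl => ?_, ?_⟩
  · simpa [hl.ne, (hl.trans hij).ne] using (congrFun h l).symm
  · have h_i : w i = w' i + k := by simpa [hij.ne] using congrFun h i
    change w' i < w i
    lia

variable {e}

/-- Raising letters only increases the content lexicographically, so a vector of maximal weight
is annihilated by the raising operators. -/
lemma highestWeightSpace_eq_of_forall_le [Fintype ι] {M : Submodule K (MvPolynomial σ K)}
    (hM : ∀ g, ∀ f ∈ M, letterAction e g f ∈ M) {mu : Fin (N + 1) → ℕ}
    (hmu : ∀ f ∈ M, ∀ b, coeff b f ≠ 0 → toLex (content e b) ≤ toLex mu) :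
    highestWeightSpace e M mu = M ⊓ weightSpace e K mu := by
  refine inf_eq_left.2 fun f hf => mem_unipotentInvariants.2 fun i j hij t => ?_
  ext b
  by_cases hb : toLex (content e b) ≤ toLex mu
  · refine coeff_letterAction_transvection t f fun b' hb' k hk h => ?_
    have h_lt := toLex_lt_toLex_of_add_smul_single hij hk h
    rw [mem_weightSpace.1 hf.2 b' hb'] at h_lt
    exact h_lt.not_ge hb
  · rw [not_imp_comm.1 (hmu _ (hM _ f hf.1) b) hb, not_imp_comm.1 (hmu f hf.1 b) hb]

end HighestWeight

section MatrixCoeff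

variable {σ ι : Type*} {N : ℕ} (e : ι × Fin (N + 1) ≃ σ)

lemma eval_letterAction {A : Type*} [CommRing A] (g : Matrix (Fin (N + 1)) (Fin (N + 1)) A)
    (f : MvPolynomial σ A) (x : σ → A) : eval x (letterAction e g f) =
      eval (fun v => ∑ k, g k (e.symm v).2 * x (e ((e.symm v).1, k))) f := by
  suffices (aeval x).comp (letterAction e g) =
      aeval fun v => ∑ k, g k (e.symm v).2 * x (e ((e.symm v).1, k)) by
    exact DFunLike.congr_fun this f
  ext1 v
  simp [letterAction]

variable {K : Type*} [Field K]

/-- The coefficient of the monomial `b` in `letterAction e g f`, as a polynomial in the entries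
of `g`. -/
noncomputable def matrixCoeff (b : σ →₀ ℕ) :
    MvPolynomial σ K →ₗ[K] MvPolynomial (EntryIndex 1 N) K where
  toFun f := coeff b (letterAction e (Matrix.of fun i j => X (0, i, j)) (MvPolynomial.map C f))
  map_add' f f' := by simp
  map_smul' c f := by
    simp only [smul_eq_C_mul, map_mul, map_C, algHom_C, algebraMap_eq, coeff_C_mul,
      RingHom.id_apply]

lemma eval_matrixCoeff (b : σ →₀ ℕ) (f : MvPolynomial σ K) (x : EntryIndex 1 N → K) :
    eval x (matrixCoeff e b f) =
      coeff b (letterAction e (Matrix.of fun i j => x (0, i, j)) f) := by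
  change eval x (coeff b (letterAction e _ (MvPolynomial.map C f))) = _
  have h_id : (eval x).comp C = RingHom.id K := by ext; simp
  rw [← coeff_map, map_letterAction, MvPolynomial.map_map, h_id, MvPolynomial.map_id]
  congr 3
  ext i j
  simp

lemma eval_letterAction_matrixCoeff_rowLetter (h : Matrix (Fin (N + 1)) (Fin (N + 1)) K)
    (b : σ →₀ ℕ) (f : MvPolynomial σ K) (x : EntryIndex 1 N → K) :
    eval x (letterAction (rowLetter 1 N) h (matrixCoeff e b f)) =
      coeff b (letterAction e hᵀ (letterAction e (Matrix.of fun i j => x (0, i, j)) f)) := by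
  rw [eval_letterAction, eval_matrixCoeff, ← letterAction_mul]
  congr 3

variable [Infinite K]

lemma matrixCoeff_letterAction (h : Matrix (Fin (N + 1)) (Fin (N + 1)) K) (b : σ →₀ ℕ)
    (f : MvPolynomial σ K) : matrixCoeff e b (letterAction e h f) =
      letterAction (columnLetter 1 N) h (matrixCoeff e b f) := by
  refine MvPolynomial.funext fun x => ?_
  rw [eval_letterAction, eval_matrixCoeff, eval_matrixCoeff, ← letterAction_mul]
  congr 3
  ext i j
  simp only [mul_apply, of_apply, mul_comm (h _ _)]
  rfl

variable [Fintype ι]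

lemma matrixCoeff_mem_weightSpace (b : σ →₀ ℕ) (f : MvPolynomial σ K) :
    matrixCoeff e b f ∈ weightSpace (rowLetter 1 N) K (content e b) := by
  refine mem_weightSpace_of_letterAction_diagonal _ fun d _ => MvPolynomial.funext fun x => ?_
  rw [eval_letterAction_matrixCoeff_rowLetter, diagonal_transpose, coeff_letterAction_diagonal,
    smul_eval, eval_matrixCoeff]

variable {e}

lemma matrixCoeff_mem_unipotentInvariants {b : σ →₀ ℕ} {f : MvPolynomial σ K}
    (hb : ∀ g b', coeff b' (letterAction e g f) ≠ 0 →
      toLex (content e b') ≤ toLex (content e b)) :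
    matrixCoeff e b f ∈ unipotentInvariants (rowLetter 1 N) K := by
  refine mem_unipotentInvariants.2 fun i j hij t => MvPolynomial.funext fun x => ?_
  have h_transpose : (transvection i j t)ᵀ = transvection j i t := by
    simp [transvection]
  rw [eval_letterAction_matrixCoeff_rowLetter, h_transpose, eval_matrixCoeff]
  exact coeff_letterAction_transvection t _ fun b' hb' k hk h =>
    (toLex_lt_toLex_of_add_smul_single hij hk h.symm).not_ge (hb _ b' hb')

end MatrixCoeff

section Bound

lemma finrank_le_finrank_inf_iInf_ker_add {K V V' κ : Type*} [Field K] [AddCommGroup V]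
    [Module K V] [AddCommGroup V'] [Module K V'] {M : Submodule K V} [FiniteDimensional K M]
    {P : Submodule K V'} [FiniteDimensional K P] {L : Finset κ} {φ : κ → V →ₗ[K] V'}
    (hφ : ∀ b ∈ L, M ≤ P.comap (φ b)) :
    Module.finrank K M ≤
      Module.finrank K ↥(M ⊓ ⨅ b ∈ L, LinearMap.ker (φ b)) + L.card * Module.finrank K P := by
  let ψ : M →ₗ[K] L → P := LinearMap.pi fun b =>
    ((φ b).comp M.subtype).codRestrict P fun v => hφ b b.2 v.2
  have h_ker : (LinearMap.ker ψ).map M.subtype = M ⊓ ⨅ b ∈ L, LinearMap.ker (φ b) := by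
    ext v
    simp [ψ, funext_iff, Submodule.mem_iInf, ← Submodule.coe_eq_zero, and_comm]
  have h_range : Module.finrank K (LinearMap.range ψ) ≤ L.card * Module.finrank K P := by
    refine (Submodule.finrank_le _).trans_eq ?_
    rw [Module.finrank_pi_fintype, Finset.sum_const, Finset.card_univ, Fintype.card_coe,
      smul_eq_mul]
  rw [← h_ker, Submodule.finrank_map_subtype_eq, ← ψ.finrank_range_add_finrank_ker]
  lia

section InducedModule

variable (K : Type*) [Field K] {N : ℕ} (mu : Fin (N + 1) → ℕ)

/-- The induced module of highest weight `mu`, realised as the polynomials in the entries of a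
matrix which transform by `mu` under the Borel subgroup acting on rows. -/
noncomputable def inducedModule : Submodule K (MvPolynomial (EntryIndex 1 N) K) :=
  weightSpace (rowLetter 1 N) K mu ⊓ unipotentInvariants (rowLetter 1 N) K

lemma inducedModule_le_restrictSupport : inducedModule K mu ≤
    restrictSupport K (monomials 1 N (∑ i, mu i) (fun _ => True) : Set (EntryIndex 1 N →₀ ℕ)) := by
  intro f hf
  refine (mem_restrictSupport_iff K).2 fun b hb => ?_
  rw [Finset.mem_coe, mem_monomials, ← mem_weightSpace.1 hf.1 b (mem_support_iff.1 hb)]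
  simp [multidegree, content_rowLetter]

lemma finrank_inducedModule_le : Module.finrank K (inducedModule K mu) ≤ (tableaux mu).card := by
  classical
  have h_sub : leadingExponents (entryOrder 1 N) (inducedModule K mu) ⊆ tableaux mu := by
    rintro _ ⟨f, hf, hf0, rfl⟩
    exact mem_tableaux.2 ⟨isYamanouchi_degree isPlaceLetterOrder_rowLetter hf.1 hf0
      fun j => mem_unipotentInvariants.1 hf.2 _ _ j.castSucc_lt_succ (1 : K),
      mem_weightSpace.1 hf.1 _ ((entryOrder 1 N).coeff_degree_ne_zero_iff.2 hf0)⟩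
  have h_fin := (tableaux mu).finite_toSet.subset h_sub
  rw [finrank_eq_card_leadingExponents _ (inducedModule_le_restrictSupport K mu) h_fin.coe_toFinset]
  exact Finset.card_le_card (h_fin.toFinset_subset.2 h_sub)

end InducedModule

variable {σ ι K : Type*} {N : ℕ} {e : ι × Fin (N + 1) ≃ σ} [Field K]
  {M : Submodule K (MvPolynomial σ K)} {T : Finset (σ →₀ ℕ)}

variable (e M) in
/-- The elements of `M` on which the matrix coefficients at the exponents in `L` vanish. -/
noncomputable def matrixCoeffKernel (L : Finset (σ →₀ ℕ)) : Submodule K (MvPolynomial σ K) :=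
  M ⊓ ⨅ b ∈ L, LinearMap.ker (matrixCoeff e b)

lemma mem_matrixCoeffKernel {L : Finset (σ →₀ ℕ)} {f : MvPolynomial σ K} :
    f ∈ matrixCoeffKernel e M L ↔ f ∈ M ∧ ∀ b ∈ L, matrixCoeff e b f = 0 := by
  simp [matrixCoeffKernel, Submodule.mem_iInf]

lemma matrixCoeffKernel_inf_weightSpace_eq_bot {o : MonomialOrder σ} {mu : Fin (N + 1) → ℕ}
    {L : Finset (σ →₀ ℕ)} (hL : leadingExponents o (M ⊓ weightSpace e K mu) ⊆ L) :
    matrixCoeffKernel e M L ⊓ weightSpace e K mu = ⊥ := by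
  refine (Submodule.eq_bot_iff _).2 fun f ⟨hf, hf_weight⟩ => ?_
  obtain ⟨hf_mem, hf_ker⟩ := mem_matrixCoeffKernel.1 hf
  by_contra hf_ne
  have h_eval := eval_matrixCoeff e (o.degree f) f
    fun v => (1 : Matrix (Fin (N + 1)) (Fin (N + 1)) K) v.2.1 v.2.2
  rw [hf_ker _ (hL ⟨f, ⟨hf_mem, hf_weight⟩, hf_ne, rfl⟩), map_zero] at h_eval
  change 0 = coeff _ (letterAction e 1 f) at h_eval
  rw [letterAction_one] at h_eval
  exact o.coeff_degree_ne_zero_iff.2 hf_ne h_eval.symm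

variable [Fintype ι]

lemma exists_maximal_content (e : ι × Fin (N + 1) ≃ σ) (hM_ne : M ≠ ⊥)
    (hT : M ≤ restrictSupport K (T : Set (σ →₀ ℕ))) :
    ∃ mu, (∃ f ∈ M, ∃ b, coeff b f ≠ 0 ∧ content e b = mu) ∧
      ∀ f ∈ M, ∀ b, coeff b f ≠ 0 → toLex (content e b) ≤ toLex mu := by
  classical
  obtain ⟨f₀, hf₀, hf₀_ne⟩ := Submodule.exists_mem_ne_zero_of_ne_bot hM_ne
  obtain ⟨b₀, hb₀⟩ := MvPolynomial.ne_zero_iff.1 hf₀_ne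
  have h_mem {f b} (hf : f ∈ M) (hb : coeff b f ≠ 0) : b ∈ T := mem_of_mem_restrictSupport hT hf hb
  obtain ⟨b, hb, h_max⟩ := (T.filter fun b => ∃ f ∈ M, coeff b f ≠ 0).exists_max_image
    (fun b => toLex (content e b)) ⟨b₀, Finset.mem_filter.2 ⟨h_mem hf₀ hb₀, f₀, hf₀, hb₀⟩⟩
  obtain ⟨-, f, hf, hbf⟩ := Finset.mem_filter.1 hb
  exact ⟨content e b, ⟨f, hf, b, hbf, rfl⟩, fun f' hf' b' hb' =>
    h_max b' (Finset.mem_filter.2 ⟨h_mem hf' hb', f', hf', hb'⟩)⟩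

variable [Infinite K]

/-- Evaluating the matrix coefficients at the leading exponents of the highest weight vectors of
maximal weight maps `M` to a sum of copies of the induced module. -/
lemma exists_stable_submodule_finrank_lt (o : MonomialOrder σ)
    (hT : M ≤ restrictSupport K (T : Set (σ →₀ ℕ)))
    (hM : ∀ g, ∀ f ∈ M, letterAction e g f ∈ M) (hM_ne : M ≠ ⊥) :
    ∃ mu ∈ T.image (content e), ∃ M' < M, (∀ g, ∀ f ∈ M', letterAction e g f ∈ M') ∧
      M' ⊓ weightSpace e K mu = ⊥ ∧
      Module.finrank K M ≤ Module.finrank K M' +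
        Module.finrank K (highestWeightSpace e M mu) * (tableaux mu).card := by
  classical
  obtain ⟨mu, ⟨f, hf, b, hb, rfl⟩, h_max⟩ := exists_maximal_content e hM_ne hT
  have hw_eq := highestWeightSpace_eq_of_forall_le hM h_max
  set mu := content e b with hmu
  have hT' : M ⊓ weightSpace e K mu ≤ restrictSupport K (T : Set (σ →₀ ℕ)) := inf_le_left.trans hT
  have h_fin := T.finite_toSet.subset (leadingExponents_subset o hT')
  set L := h_fin.toFinset
  have h_bot := matrixCoeffKernel_inf_weightSpace_eq_bot (L := L) h_fin.coe_toFinset.ge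
  have := finite_of_le_restrictSupport hT
  have := finite_of_le_restrictSupport (inducedModule_le_restrictSupport K mu)
  have h_induced : ∀ c ∈ L, M ≤ (inducedModule K mu).comap (matrixCoeff e c) := by
    intro c hc f' hf'
    obtain ⟨p, hp, hp_ne, hpc⟩ := h_fin.mem_toFinset.1 hc
    have h_content : content e c = mu :=
      mem_weightSpace.1 hp.2 c (hpc ▸ o.coeff_degree_ne_zero_iff.2 hp_ne)
    exact ⟨h_content ▸ matrixCoeff_mem_weightSpace e c f', matrixCoeff_mem_unipotentInvariants
      fun g b' hb' => h_content ▸ h_max _ (hM g f' hf') b' hb'⟩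
  refine ⟨mu, Finset.mem_image_of_mem _ (mem_of_mem_restrictSupport hT hf hb),
    matrixCoeffKernel e M L, inf_le_left.lt_of_ne fun h_eq => hb ?_, fun g f' hf' => ?_, h_bot, ?_⟩
  · have h_mem : weightComponent e K mu f ∈ matrixCoeffKernel e M L ⊓ weightSpace e K mu :=
      ⟨h_eq.ge <| weightComponent_mem e (fun d => hM _) hf mu,
        weightComponent_mem_weightSpace e mu f⟩
    rw [h_bot, Submodule.mem_bot] at h_mem
    simpa [coeff_weightComponent, hmu] using congrArg (coeff b) h_mem
  · rw [mem_matrixCoeffKernel] at hf' ⊢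
    exact ⟨hM g f' hf'.1, fun c hc => by rw [matrixCoeff_letterAction, hf'.2 c hc, map_zero]⟩
  · rw [hw_eq, finrank_eq_card_leadingExponents o hT' h_fin.coe_toFinset]
    exact (finrank_le_finrank_inf_iInf_ker_add h_induced).trans <| Nat.add_le_add_left
      (Nat.mul_le_mul_left _ (finrank_inducedModule_le K mu)) _

theorem finrank_le_sum_finrank_highestWeightSpace (o : MonomialOrder σ)
    (hT : M ≤ restrictSupport K (T : Set (σ →₀ ℕ)))
    (hM : ∀ g, ∀ f ∈ M, letterAction e g f ∈ M) :
    Module.finrank K M ≤ ∑ mu ∈ T.image (content e),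
      Module.finrank K (highestWeightSpace e M mu) * (tableaux mu).card := by
  classical
  have := finite_of_le_restrictSupport hT
  induction h_rank : Module.finrank K M using Nat.strong_induction_on generalizing M with
  | _ n ih =>
  subst h_rank
  rcases eq_or_ne M ⊥ with rfl | hM_ne
  · simp
  obtain ⟨mu, hmu, M', h_lt, hM', h_bot, h_le⟩ := exists_stable_submodule_finrank_lt o hT hM hM_ne
  have hT' := h_lt.le.trans hT
  have h_ih := ih _ (Submodule.finrank_lt_finrank_of_lt h_lt) hT' hM'
    (finite_of_le_restrictSupport hT') rfl
  have h_mu : highestWeightSpace e M' mu = ⊥ := by rw [highestWeightSpace, h_bot, bot_inf_eq]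
  have h_mono (nu) : Module.finrank K (highestWeightSpace e M' nu) ≤
      Module.finrank K (highestWeightSpace e M nu) := by
    have : Module.Finite K (highestWeightSpace e M nu) :=
      finite_of_le_restrictSupport ((inf_le_left.trans inf_le_left).trans hT)
    exact Submodule.finrank_mono (inf_le_inf_right _ (inf_le_inf_right _ h_lt.le))
  rw [← Finset.add_sum_erase _ _ hmu] at h_ih ⊢
  rw [h_mu, finrank_bot, zero_mul, zero_add] at h_ih
  have h_sum := Finset.sum_le_sum (s := (T.image (content e)).erase mu) fun nu _ =>
    Nat.mul_le_mul_right (tableaux nu).card (h_mono nu)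
  lia

end Bound

section LeadingHighestWeight

variable {σ ι K : Type*} [Fintype ι] [LinearOrder ι] [Finite σ] {N : ℕ}
  {e : ι × Fin (N + 1) ≃ σ} [Field K] {M : Submodule K (MvPolynomial σ K)}
  {o : MonomialOrder σ} {S : Finset (σ →₀ ℕ)}

lemma leadingExponents_highestWeightSpace_subset (ho : IsPlaceLetterOrder o e)
    (hS : (S : Set (σ →₀ ℕ)) = leadingExponents o M) (mu : Fin (N + 1) → ℕ) :
    leadingExponents o (highestWeightSpace e M mu) ⊆
      {a | a ∈ S ∧ IsYamanouchi e a ∧ content e a = mu} := by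
  rintro _ ⟨f, ⟨⟨hf_mem, hf_weight⟩, hf_inv⟩, hf_ne, rfl⟩
  refine ⟨?_, isYamanouchi_degree ho hf_weight hf_ne fun j =>
    mem_unipotentInvariants.1 hf_inv _ _ j.castSucc_lt_succ 1,
    mem_weightSpace.1 hf_weight _ (o.coeff_degree_ne_zero_iff.2 hf_ne)⟩
  rw [← Finset.mem_coe, hS]
  exact ⟨f, hf_mem, hf_ne, rfl⟩

open Classical in
lemma card_eq_sum_card_filter_mul_card_tableaux
    (matching : ∀ j, LetterMatching e (S : Set (σ →₀ ℕ)) j) {I : Finset (Fin (N + 1) → ℕ)}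
    (hI : ∀ a ∈ S, content e a ∈ I) : S.card = ∑ mu ∈ I,
      {a ∈ S | IsYamanouchi e a ∧ content e a = mu}.card * (tableaux mu).card := by
  rw [card_eq_sum_card_tableaux e matching, ← Finset.sum_fiberwise_of_maps_to
    fun a ha => hI a (Finset.mem_filter.1 ha).1]
  refine Finset.sum_congr rfl fun mu _ => ?_
  rw [Finset.filter_filter, ← smul_eq_mul]
  exact Finset.sum_eq_card_nsmul fun a ha => by rw [(Finset.mem_filter.1 ha).2.2]

/-- Counting `S` by tableaux and bounding the dimension of `M` by tableaux, one sees that no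
inclusion between leading exponents of highest weight vectors and Yamanouchi exponents is strict. -/
theorem leadingExponents_highestWeightSpace [Infinite K] {T : Finset (σ →₀ ℕ)}
    (ho : IsPlaceLetterOrder o e) (hT : M ≤ restrictSupport K (T : Set (σ →₀ ℕ)))
    (hM : ∀ g, ∀ f ∈ M, letterAction e g f ∈ M)
    (hS : (S : Set (σ →₀ ℕ)) = leadingExponents o M)
    (matching : ∀ j, LetterMatching e (S : Set (σ →₀ ℕ)) j) (mu : Fin (N + 1) → ℕ) :
    leadingExponents o (highestWeightSpace e M mu) =
      {a | a ∈ S ∧ IsYamanouchi e a ∧ content e a = mu} := by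
  classical
  let yamanouchi (nu : Fin (N + 1) → ℕ) := {a ∈ S | IsYamanouchi e a ∧ content e a = nu}
  have h_coe (nu) : leadingExponents o (highestWeightSpace e M nu) ⊆ yamanouchi nu := by
    simpa [yamanouchi] using leadingExponents_highestWeightSpace_subset ho hS nu
  have h_fin (nu) := (yamanouchi nu).finite_toSet.subset (h_coe nu)
  have h_sub (nu) : (h_fin nu).toFinset ⊆ yamanouchi nu := (h_fin nu).toFinset_subset.2 (h_coe nu)
  have h_rank (nu) :
      Module.finrank K (highestWeightSpace e M nu) = (h_fin nu).toFinset.card :=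
    finrank_eq_card_leadingExponents o ((inf_le_left.trans inf_le_left).trans hT)
      (h_fin nu).coe_toFinset
  have hI (a) (ha : a ∈ S) : content e a ∈ T.image (content e) := by
    rw [← Finset.mem_coe, hS] at ha
    exact Finset.mem_image_of_mem _ (leadingExponents_subset o hT ha)
  have h_le (nu) := Nat.mul_le_mul_right (tableaux nu).card (Finset.card_le_card (h_sub nu))
  have h_bound := finrank_le_sum_finrank_highestWeightSpace o hT hM
  simp only [finrank_eq_card_leadingExponents o hT hS, h_rank,
    card_eq_sum_card_filter_mul_card_tableaux matching hI] at h_bound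
  have h_eq := (Finset.sum_eq_sum_iff_of_le fun nu _ => h_le nu).1
    (h_bound.antisymm' (Finset.sum_le_sum fun nu _ => h_le nu))
  refine (leadingExponents_highestWeightSpace_subset ho hS mu).antisymm ?_
  rintro a ⟨ha, h_yam, h_mu⟩
  have h_pos : 0 < (tableaux mu).card :=
    Finset.card_pos.2 ⟨_, diagonalTableau_mem_tableaux (h_mu ▸ h_yam.antitone_content)⟩
  rw [← (h_fin mu).mem_toFinset, Finset.eq_of_subset_of_card_le (h_sub mu)
    (Nat.eq_of_mul_eq_mul_right h_pos (h_eq mu (h_mu ▸ hI a ha))).ge]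
  exact Finset.mem_filter.2 ⟨ha, h_yam, h_mu⟩

end LeadingHighestWeight

section Grading

variable {σ ι A G : Type*} [CommRing A] [AddCommMonoid G] {N : ℕ} {e : ι × Fin (N + 1) ≃ σ}
  {w : σ → G}

lemma isWeightedHomogeneous_letterAction_monomial
    (hw : ∀ s j k, w (e (s, j)) = w (e (s, k))) (g : Matrix (Fin (N + 1)) (Fin (N + 1)) A)
    (a : σ →₀ ℕ) (c : A) :
    IsWeightedHomogeneous w (letterAction e g (monomial a c)) (Finsupp.weight w a) := by
  have h_X (v : σ) : IsWeightedHomogeneous w (letterAction e g (X v)) (w v) := by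
    obtain ⟨⟨s, j⟩, rfl⟩ := e.surjective v
    rw [letterAction_X]
    refine IsWeightedHomogeneous.sum _ _ _ fun k _ => ?_
    rw [hw s j k, ← zero_add (w _)]
    exact (isWeightedHomogeneous_C w _).mul (isWeightedHomogeneous_X A w _)
  rw [monomial_eq, map_mul, algHom_C, Finsupp.prod, map_prod, ← zero_add (Finsupp.weight w a),
    Finsupp.weight_apply]
  refine (isWeightedHomogeneous_C w c).mul (IsWeightedHomogeneous.prod _ _ _ fun v _ => ?_)
  rw [map_pow]
  exact (h_X v).pow _

lemma exists_coeff_ne_zero_of_coeff_letterAction_ne_zero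
    (hw : ∀ s j k, w (e (s, j)) = w (e (s, k))) {g : Matrix (Fin (N + 1)) (Fin (N + 1)) A}
    {f : MvPolynomial σ A} {b : σ →₀ ℕ} (hb : coeff b (letterAction e g f) ≠ 0) :
    ∃ a, coeff a f ≠ 0 ∧ Finsupp.weight w b = Finsupp.weight w a := by
  rw [f.as_sum, map_sum, coeff_sum] at hb
  obtain ⟨a, ha, h⟩ := Finset.exists_ne_zero_of_sum_ne_zero hb
  exact ⟨a, mem_support_iff.1 ha, isWeightedHomogeneous_letterAction_monomial hw g a _ h⟩

end Grading

section BihighestWeight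

variable {m N : ℕ}

lemma letterAction_rowLetter_comm {A : Type*} [CommRing A]
    (g h : Matrix (Fin (N + 1)) (Fin (N + 1)) A) (f : MvPolynomial (EntryIndex m N) A) :
    letterAction (rowLetter m N) g (letterAction (columnLetter m N) h f) =
      letterAction (columnLetter m N) h (letterAction (rowLetter m N) g f) := by
  suffices (letterAction (rowLetter m N) g).comp (letterAction (columnLetter m N) h) =
      (letterAction (columnLetter m N) h).comp (letterAction (rowLetter m N) g) from
    DFunLike.congr_fun this f
  ext1 ⟨l, i, j⟩
  have h_row (i j) : letterAction (rowLetter m N) g (X (l, i, j)) = ∑ k, C (g k i) * X (l, k, j) :=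
    letterAction_X (rowLetter m N) g (toLex (l, j)) i
  have h_column (i j) :
      letterAction (columnLetter m N) h (X (l, i, j)) = ∑ k, C (h k j) * X (l, i, k) :=
    letterAction_X (columnLetter m N) h (toLex (l, i)) j
  simp only [AlgHom.comp_apply, h_row, h_column, map_sum, map_mul, algHom_C, algebraMap_eq,
    Finset.mul_sum]
  rw [Finset.sum_comm]
  exact Finset.sum_congr rfl fun k _ => Finset.sum_congr rfl fun k' _ => by ring

lemma multidegree_eq_weight (b : EntryIndex m N →₀ ℕ) :
    multidegree b = Finsupp.weight (fun v => (Pi.single v.1 1 : Fin m → ℕ)) b := by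
  funext l
  rw [Finsupp.weight_apply, Finsupp.sum_fintype _ _ (by simp), multidegree,
    Fintype.sum_prod_type]
  simp [Finset.sum_apply, Pi.single_apply, Fintype.sum_prod_type]

variable (K : Type*) [Field K] {d : ℕ} {P : (Fin m → ℕ) → Prop} {lam : Fin (N + 1) → ℕ}

lemma letterAction_mem_restrictSupport_monomials {ι : Type*} {e : ι × Fin (N + 1) ≃ EntryIndex m N}
    (he : ∀ s j k, (e (s, j)).1 = (e (s, k)).1) (g : Matrix (Fin (N + 1)) (Fin (N + 1)) K)
    {f : MvPolynomial (EntryIndex m N) K}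
    (hf : f ∈ restrictSupport K (monomials m N d P : Set (EntryIndex m N →₀ ℕ))) :
    letterAction e g f ∈ restrictSupport K (monomials m N d P : Set (EntryIndex m N →₀ ℕ)) := by
  refine (mem_restrictSupport_iff K).2 fun b hb => ?_
  obtain ⟨a, ha, h_weight⟩ := exists_coeff_ne_zero_of_coeff_letterAction_ne_zero
    (w := fun v => (Pi.single v.1 1 : Fin m → ℕ)) (fun s j k => by rw [he s j k])
    (mem_support_iff.1 hb)
  rw [← multidegree_eq_weight, ← multidegree_eq_weight] at h_weight
  exact (mem_monomials_congr h_weight).2 ((mem_restrictSupport_iff K).1 hf (mem_support_iff.2 ha))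

variable (m N d P lam) in
/-- The polynomials of degree `d` with multidegree satisfying `P` which are highest weight vectors
of weight `lam` both for the row action and for the column action. -/
noncomputable def bihighestWeightSpace : Submodule K (MvPolynomial (EntryIndex m N) K) :=
  highestWeightSpace (columnLetter m N) (highestWeightSpace (rowLetter m N)
    (restrictSupport K (monomials m N d P : Set (EntryIndex m N →₀ ℕ))) lam) lam

lemma letterAction_mem_highestWeightSpace_rowLetter (g : Matrix (Fin (N + 1)) (Fin (N + 1)) K)
    {f : MvPolynomial (EntryIndex m N) K}
    (hf : f ∈ highestWeightSpace (rowLetter m N)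
      (restrictSupport K (monomials m N d P : Set (EntryIndex m N →₀ ℕ))) lam) :
    letterAction (columnLetter m N) g f ∈ highestWeightSpace (rowLetter m N)
      (restrictSupport K (monomials m N d P : Set (EntryIndex m N →₀ ℕ))) lam := by
  obtain ⟨⟨hf_supp, hf_weight⟩, hf_inv⟩ := hf
  refine ⟨⟨letterAction_mem_restrictSupport_monomials K (fun _ _ _ => rfl) g hf_supp,
    mem_weightSpace.2 fun b hb => ?_⟩, mem_unipotentInvariants.2 fun i j hij t => ?_⟩
  · obtain ⟨a, ha, h_weight⟩ := exists_coeff_ne_zero_of_coeff_letterAction_ne_zero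
      (w := fun v => (Pi.single ((rowLetter m N).symm v).2 1 : Fin (N + 1) → ℕ))
      (fun _ _ _ => rfl) hb
    rw [content_eq_weight, h_weight, ← content_eq_weight, mem_weightSpace.1 hf_weight a ha]
  · rw [letterAction_rowLetter_comm, mem_unipotentInvariants.1 hf_inv i j hij t]

lemma leadingExponents_restrictSupport {σ : Type*} (o : MonomialOrder σ) (s : Set (σ →₀ ℕ)) :
    leadingExponents o (restrictSupport K s) = s := by
  classical
  refine (leadingExponents_subset o le_rfl).antisymm fun b hb => ⟨monomial b 1, ?_, ?_, ?_⟩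
  · rw [mem_restrictSupport_iff, support_monomial, if_neg one_ne_zero, Finset.coe_singleton]
    exact Set.singleton_subset_iff.2 hb
  · simp
  · rw [o.degree_monomial, if_neg one_ne_zero]

open Classical in
theorem finrank_bihighestWeightSpace [Infinite K] :
    Module.finrank K (bihighestWeightSpace m N K d P lam) =
      {a ∈ rowYamanouchiMonomials m N d P lam |
        IsYamanouchi (columnLetter m N) a ∧ content (columnLetter m N) a = lam}.card := by
  have h_row := leadingExponents_highestWeightSpace isPlaceLetterOrder_rowLetter le_rfl
    (fun g f hf => letterAction_mem_restrictSupport_monomials K (fun _ _ _ => rfl) g hf)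
    (leadingExponents_restrictSupport K (entryOrder m N) _).symm (monomialsMatching d P) lam
  simp only [← mem_rowYamanouchiMonomials] at h_row
  have h_column := leadingExponents_highestWeightSpace
    (M := highestWeightSpace (rowLetter m N) (restrictSupport K (monomials m N d P)) lam)
    isPlaceLetterOrder_columnLetter
    (inf_le_left.trans inf_le_left)
    (fun g f hf => letterAction_mem_highestWeightSpace_rowLetter K g hf) h_row.symm
    (rowYamanouchiMatching d P lam) lam
  refine finrank_eq_card_leadingExponents (entryOrder m N) (T := monomials m N d P) ?_ ?_
  · exact (inf_le_left.trans inf_le_left).trans (inf_le_left.trans inf_le_left)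
  · rw [bihighestWeightSpace, h_column, Finset.coe_filter]

end BihighestWeight

/-! ### Invariants of the special linear group -/

section RectangularWeight

lemma natDegree_eq_zero_of_forall_eval_inv_eq {K : Type*} [Field K] [Infinite K]
    {P Q : Polynomial K} (h : ∀ t : K, t ≠ 0 → P.eval t⁻¹ = Q.eval t) : P.natDegree = 0 := by
  have h_reverse : P.reverse = Q * Polynomial.X ^ P.natDegree := by
    refine Polynomial.eq_of_infinite_eval_eq _ _ <|
      (Set.finite_singleton (0 : K)).infinite_compl.mono fun t ht => ?_
    let := invertibleOfNonzero (inv_ne_zero ht)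
    have h_eval := Polynomial.eval₂_reverse_mul_pow (RingHom.id K) t⁻¹ P
    simp only [invOf_eq_inv, inv_inv, Polynomial.eval₂_id, h t ht] at h_eval
    rw [Set.mem_ofPred_eq, Polynomial.eval_mul, ← h_eval, Polynomial.eval_pow, Polynomial.eval_X,
      mul_assoc, ← mul_pow, inv_mul_cancel₀ ht, one_pow, mul_one]
  by_contra h_ne
  have h_lead : P.leadingCoeff = 0 := by
    rw [← Polynomial.coeff_zero_reverse, h_reverse, Polynomial.mul_coeff_zero,
      Polynomial.coeff_X_pow, if_neg (Ne.symm h_ne), mul_zero]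
  rw [Polynomial.leadingCoeff_eq_zero.1 h_lead] at h_ne
  exact h_ne Polynomial.natDegree_zero

variable {σ ι K : Type*} [Field K] {N : ℕ} {e : ι × Fin (N + 1) ≃ σ} {f : MvPolynomial σ K}

variable (e f) in
lemma exists_eval_eq_coeff_letterAction_transvection (i j : Fin (N + 1)) (b : σ →₀ ℕ) :
    ∃ P : Polynomial K, ∀ t, P.eval t = coeff b (letterAction e (transvection i j t) f) := by
  refine ⟨coeff b (letterAction e (transvection i j Polynomial.X) (map Polynomial.C f)),
    fun t => ?_⟩
  have h_matrix : (transvection i j (Polynomial.X : Polynomial K)).map (Polynomial.evalRingHom t) =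
      transvection i j t := by
    ext k l
    simp [transvection, one_apply, single_apply, apply_ite (Polynomial.eval t)]
  have h_id : (Polynomial.evalRingHom t).comp Polynomial.C = RingHom.id K := by
    ext
    simp
  rw [← Polynomial.coe_evalRingHom, ← coeff_map, map_letterAction, h_matrix,
    MvPolynomial.map_map, h_id, MvPolynomial.map_id]

/-- In the rows and columns `i` and `j` both sides are `!![1, -t; t⁻¹, 0]`, elsewhere the
identity. -/
lemma transvection_inv_mul_transvection {i j : Fin (N + 1)} (hij : i ≠ j) {t : K} (ht : t ≠ 0) :
    transvection j i t⁻¹ * transvection i j (-t) =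
      transvection i j t * (transvection i j (-1) * (transvection j i 1 * (transvection i j (-1) *
        diagonal (Pi.mulSingle i t⁻¹ * Pi.mulSingle j t)))) := by
  have h_diag : diagonal (Pi.mulSingle i t⁻¹ * Pi.mulSingle j t : Fin (N + 1) → K) =
      1 + (t⁻¹ - 1) • single i i (1 : K) + (t - 1) • single j j (1 : K) := by
    ext k l
    rcases eq_or_ne k l with rfl | hkl
    · rcases eq_or_ne k i with rfl | hki <;> rcases eq_or_ne k j with rfl | hkj <;>
        simp_all [eq_comm]
    · have h_ne (i : Fin (N + 1)) : ¬(i = k ∧ i = l) := fun h => hkl (h.1.symm.trans h.2)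
      simp [hkl, one_apply, h_ne]
  have h_trans (k l : Fin (N + 1)) (c : K) :
      transvection k l c = 1 + c • single k l (1 : K) := by
    rw [transvection, smul_single, smul_eq_mul, mul_one]
  have h_zero (k l : Fin (N + 1)) : single k i (1 : K) * single j l (1 : K) = 0 := by simp [hij]
  have h_zero' (k l : Fin (N + 1)) : single k j (1 : K) * single i l (1 : K) = 0 := by
    simp [hij.symm]
  simp only [h_diag, h_trans, mul_add, add_mul, mul_one, one_mul, smul_mul_assoc, mul_smul_comm,
    single_mul_single_same, h_zero, h_zero', smul_zero, add_zero]
  match_scalars <;> field_simp <;> ring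

variable [Finite ι] {k : ℕ}

lemma letterAction_diagonal_of_mem_weightSpace (hf : f ∈ weightSpace e K fun _ => k)
    (d : Fin (N + 1) → K) : letterAction e (diagonal d) f = (∏ j, d j) ^ k • f := by
  have := Fintype.ofFinite ι
  ext b
  rw [coeff_letterAction_diagonal, coeff_smul, smul_eq_mul]
  by_cases hb : coeff b f = 0
  · rw [hb, mul_zero, mul_zero]
  · rw [mem_weightSpace.1 hf b hb, Finset.prod_pow]

/-- By `transvection_inv_mul_transvection`, the lower transvections move `f` along a curve which is
polynomial both in the parameter and in its inverse, hence constant. -/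
lemma letterAction_transvection_of_gt [Infinite K] (hf : f ∈ weightSpace e K fun _ => k)
    (h_inv : f ∈ unipotentInvariants e K) {i j : Fin (N + 1)} (hij : i < j) (s : K) :
    letterAction e (transvection j i s) f = f := by
  rw [mem_unipotentInvariants] at h_inv
  ext b
  obtain ⟨P, hP⟩ := exists_eval_eq_coeff_letterAction_transvection e f j i b
  obtain ⟨Q, hQ⟩ := exists_eval_eq_coeff_letterAction_transvection e
    (letterAction e (transvection i j (-1)) (letterAction e (transvection j i 1) f)) i j b
  have h_deg : P.natDegree = 0 := by
    refine natDegree_eq_zero_of_forall_eval_inv_eq (Q := Q) fun t ht => ?_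
    have h_diag : letterAction e (diagonal (Pi.mulSingle i t⁻¹ * Pi.mulSingle j t)) f = f := by
      simp [letterAction_diagonal_of_mem_weightSpace hf, Finset.prod_mul_distrib, ht]
    have h_act := congrArg (letterAction e · f) (transvection_inv_mul_transvection hij.ne ht)
    simp only [letterAction_mul, h_inv i j hij, h_diag] at h_act
    rw [hP, hQ, h_act]
  rw [← hP, Polynomial.eq_C_of_natDegree_eq_zero h_deg, Polynomial.eval_C,
    Polynomial.coeff_zero_eq_eval_zero, hP, transvection_zero, letterAction_one]

theorem letterAction_eq_det_pow_smul [Infinite K] (hf : f ∈ weightSpace e K fun _ => k)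
    (h_inv : f ∈ unipotentInvariants e K) (g : Matrix (Fin (N + 1)) (Fin (N + 1)) K) :
    letterAction e g f = g.det ^ k • f := by
  refine diagonal_transvection_induction (fun g => letterAction e g f = g.det ^ k • f) g
    (fun d _ => ?_) (fun ⟨i, j, hij, c⟩ => ?_) fun A B hA hB => ?_
  · rw [letterAction_diagonal_of_mem_weightSpace hf, det_diagonal]
  · rw [TransvectionStruct.toMatrix_mk, det_transvection_of_ne _ _ hij, one_pow, one_smul]
    rcases lt_or_gt_of_ne hij with h | h
    · exact mem_unipotentInvariants.1 h_inv i j h c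
    · exact letterAction_transvection_of_gt hf h_inv h c
  · rw [letterAction_mul, hB, map_smul, hA, smul_smul, det_mul, mul_pow, mul_comm]

end RectangularWeight

section SpecialLinear

variable {σ ι K : Type*} [Field K] {N : ℕ} {e : ι × Fin (N + 1) ≃ σ} {f : MvPolynomial σ K}

lemma mem_unipotentInvariants_of_forall_det_eq_one
    (hf : ∀ g, g.det = 1 → letterAction e g f = f) : f ∈ unipotentInvariants e K :=
  mem_unipotentInvariants.2 fun _ _ hij _ => hf _ (det_transvection_of_ne _ _ hij.ne _)

lemma content_apply_eq_of_forall_det_eq_one [Fintype ι] [Infinite K]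
    (hf : ∀ g, g.det = 1 → letterAction e g f = f) {b : σ →₀ ℕ} (hb : coeff b f ≠ 0)
    (i j : Fin (N + 1)) : content e b i = content e b j := by
  refine eq_of_forall_pow_eq (K := K) fun t ht => ?_
  have h_coeff := congrArg (coeff b) (hf (diagonal (Pi.mulSingle i t * Pi.mulSingle j t⁻¹))
    (by simp [Finset.prod_mul_distrib, ht]))
  simp only [coeff_letterAction_diagonal, Pi.mul_apply, mul_pow, Finset.prod_mul_distrib,
    prod_mulSingle_pow] at h_coeff
  rw [mul_eq_right₀ hb, inv_pow] at h_coeff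
  exact (mul_inv_eq_one₀ (pow_ne_zero _ ht)).1 h_coeff

end SpecialLinear

section SemiInvariants

variable {K : Type} [Field K] {m N : ℕ}

lemma funext_matCoords [Infinite K] {f g : MvPolynomial (EntryIndex m N) K}
    (h : ∀ Y : Fin m → Matrix (Fin (N + 1)) (Fin (N + 1)) K,
      eval (matCoords Y) f = eval (matCoords Y) g) : f = g :=
  MvPolynomial.funext fun x => h fun l => Matrix.of fun i j => x (l, i, j)

lemma eval_letterAction_columnLetter (g : Matrix (Fin (N + 1)) (Fin (N + 1)) K)
    (f : MvPolynomial (EntryIndex m N) K) (Y : Fin m → Matrix (Fin (N + 1)) (Fin (N + 1)) K) :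
    eval (matCoords Y) (letterAction (columnLetter m N) g f) =
      eval (matCoords fun l => Y l * g) f := by
  rw [eval_letterAction]
  congr 2
  funext v
  simp only [matCoords, mul_apply, mul_comm]
  rfl

lemma eval_letterAction_rowLetter (g : Matrix (Fin (N + 1)) (Fin (N + 1)) K)
    (f : MvPolynomial (EntryIndex m N) K) (Y : Fin m → Matrix (Fin (N + 1)) (Fin (N + 1)) K) :
    eval (matCoords Y) (letterAction (rowLetter m N) g f) =
      eval (matCoords fun l => gᵀ * Y l) f := by
  rw [eval_letterAction]
  congr 2

lemma mem_matrixSemiInvariants {n : ℕ} {f : MvPolynomial (Fin m × Fin n × Fin n) K} :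
    f ∈ matrixSemiInvariants K n m ↔
      ∀ (A B : SpecialLinearGroup (Fin n) K) (Y : Fin m → Matrix (Fin n) (Fin n) K),
        eval (matCoords fun l => A.val * Y l * (B⁻¹).val) f = eval (matCoords Y) f := by
  simp only [matrixSemiInvariants, Algebra.mem_iInf, AlgHom.mem_equalizer, aeval_eq_eval]

lemma mem_matrixSemiInvariants_iff_letterAction [Infinite K]
    {f : MvPolynomial (EntryIndex m N) K} : f ∈ matrixSemiInvariants K (N + 1) m ↔
      (∀ g, g.det = 1 → letterAction (rowLetter m N) g f = f) ∧
        ∀ g, g.det = 1 → letterAction (columnLetter m N) g f = f := by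
  rw [mem_matrixSemiInvariants]
  refine ⟨fun h => ⟨fun g hg => funext_matCoords fun Y => ?_,
    fun g hg => funext_matCoords fun Y => ?_⟩, fun ⟨h_row, h_column⟩ A B Y => ?_⟩
  · rw [eval_letterAction_rowLetter]
    simpa using h ⟨gᵀ, by rw [det_transpose, hg]⟩ 1 Y
  · rw [eval_letterAction_columnLetter]
    obtain ⟨G, rfl⟩ : ∃ G : SpecialLinearGroup (Fin (N + 1)) K, G.val = g := ⟨⟨g, hg⟩, rfl⟩
    have h_eval := h 1 G⁻¹ Y
    rw [inv_inv] at h_eval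
    simpa using h_eval
  · nth_rw 2 [← h_row A.valᵀ (by rw [det_transpose, A.2]), ← h_column (B⁻¹).val (B⁻¹).2]
    simp only [eval_letterAction_rowLetter, eval_letterAction_columnLetter, transpose_transpose]

lemma mem_homogeneousSubmodule_iff_multidegree {d : ℕ} {f : MvPolynomial (EntryIndex m N) K} :
    f ∈ homogeneousSubmodule (EntryIndex m N) K d ↔
      ∀ b, coeff b f ≠ 0 → ∑ l, multidegree b l = d := by
  have h_weight (b : EntryIndex m N →₀ ℕ) : Finsupp.weight 1 b = ∑ l, multidegree b l := by
    rw [sum_multidegree, Finsupp.weight_apply, Finsupp.sum_fintype _ _ (by simp)]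
    simp
  simp only [← h_weight]
  rfl

lemma sum_content {ι : Type*} [Fintype ι] (e : ι × Fin (N + 1) ≃ EntryIndex m N)
    (b : EntryIndex m N →₀ ℕ) : ∑ j, content e b j = ∑ l, multidegree b l := by
  rw [sum_multidegree, ← e.sum_comp, Fintype.sum_prod_type_right]
  rfl

lemma sum_multidegree_eq_of_forall_det_eq_one {ι : Type*} [Fintype ι] [Infinite K]
    {e : ι × Fin (N + 1) ≃ EntryIndex m N} {f : MvPolynomial (EntryIndex m N) K}
    (hf : ∀ g, g.det = 1 → letterAction e g f = f) {b : EntryIndex m N →₀ ℕ} (hb : coeff b f ≠ 0)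
    (j : Fin (N + 1)) : ∑ l, multidegree b l = (N + 1) * content e b j := by
  rw [← sum_content e,
    Finset.sum_congr rfl fun i _ => content_apply_eq_of_forall_det_eq_one hf hb i j]
  simp

lemma letterAction_eq_det_pow_smul_of_forall_det_eq_one {ι : Type*} [Finite ι] [Infinite K] {k : ℕ}
    {e : ι × Fin (N + 1) ≃ EntryIndex m N} {f : MvPolynomial (EntryIndex m N) K}
    (h_hom : f ∈ homogeneousSubmodule (EntryIndex m N) K ((N + 1) * k))
    (hf : ∀ g, g.det = 1 → letterAction e g f = f) (g : Matrix (Fin (N + 1)) (Fin (N + 1)) K) :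
    letterAction e g f = g.det ^ k • f := by
  have := Fintype.ofFinite ι
  refine letterAction_eq_det_pow_smul (mem_weightSpace.2 fun b hb => funext fun j => ?_)
    (mem_unipotentInvariants_of_forall_det_eq_one hf) g
  refine Nat.eq_of_mul_eq_mul_left N.succ_pos ?_
  rw [← sum_multidegree_eq_of_forall_det_eq_one hf hb,
    mem_homogeneousSubmodule_iff_multidegree.1 h_hom b hb]

lemma mem_bihighestWeightSpace_rectangular [Infinite K] {k : ℕ} {P : (Fin m → ℕ) → Prop}
    {f : MvPolynomial (EntryIndex m N) K} :
    f ∈ bihighestWeightSpace m N K ((N + 1) * k) P (fun _ => k) ↔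
      (∀ b, coeff b f ≠ 0 → P (multidegree b)) ∧
      (∀ g, g.det ≠ 0 → letterAction (rowLetter m N) g f = g.det ^ k • f) ∧
      ∀ g, g.det ≠ 0 → letterAction (columnLetter m N) g f = g.det ^ k • f := by
  constructor
  · rintro ⟨⟨⟨⟨h_supp, h_row⟩, h_row_inv⟩, h_column⟩, h_column_inv⟩
    exact ⟨fun b hb => (mem_monomials.1
      ((mem_restrictSupport_iff K).1 h_supp (mem_support_iff.2 hb))).2,
      fun g _ => letterAction_eq_det_pow_smul h_row h_row_inv g,
      fun g _ => letterAction_eq_det_pow_smul h_column h_column_inv g⟩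
  · rintro ⟨hP, h_row, h_column⟩
    have h_weight {ι : Type} [Finite ι] {e : ι × Fin (N + 1) ≃ EntryIndex m N}
        (he : ∀ g, g.det ≠ 0 → letterAction e g f = g.det ^ k • f) :
        f ∈ weightSpace e K fun _ => k :=
      mem_weightSpace_of_letterAction_diagonal e fun d hd => by
        rw [he _ (by rwa [det_diagonal]), det_diagonal, Finset.prod_pow]
    have h_inv {ι : Type} {e : ι × Fin (N + 1) ≃ EntryIndex m N}
        (he : ∀ g, g.det ≠ 0 → letterAction e g f = g.det ^ k • f) :
        f ∈ unipotentInvariants e K :=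
      mem_unipotentInvariants_of_forall_det_eq_one fun g hg => by
        rw [he g (hg.trans_ne one_ne_zero), hg, one_pow, one_smul]
    refine ⟨⟨⟨⟨(mem_restrictSupport_iff K).2 fun b hb => mem_monomials.2 ⟨?_, ?_⟩,
      h_weight h_row⟩, h_inv h_row⟩, h_weight h_column⟩, h_inv h_column⟩
    · rw [← sum_content (rowLetter m N), mem_weightSpace.1 (h_weight h_row) b
        (mem_support_iff.1 hb)]
      simp
    · exact hP b (mem_support_iff.1 hb)

lemma matrixSemiInvariants_inf_homogeneousSubmodule [Infinite K] (k : ℕ) :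
    Subalgebra.toSubmodule (matrixSemiInvariants K (N + 1) m) ⊓
        homogeneousSubmodule (EntryIndex m N) K ((N + 1) * k) =
      bihighestWeightSpace m N K ((N + 1) * k) (fun _ => True) fun _ => k := by
  ext f
  rw [Submodule.mem_inf, Subalgebra.mem_toSubmodule, mem_matrixSemiInvariants_iff_letterAction]
  constructor
  · rintro ⟨⟨h_row, h_column⟩, h_hom⟩
    exact mem_bihighestWeightSpace_rectangular.2 ⟨fun _ _ => trivial,
      fun g _ => letterAction_eq_det_pow_smul_of_forall_det_eq_one h_hom h_row g,
      fun g _ => letterAction_eq_det_pow_smul_of_forall_det_eq_one h_hom h_column g⟩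
  · intro hf
    obtain ⟨-, h_row, h_column⟩ := mem_bihighestWeightSpace_rectangular.1 hf
    refine ⟨⟨fun g hg => ?_, fun g hg => ?_⟩, ?_⟩
    · rw [h_row g (hg.trans_ne one_ne_zero), hg, one_pow, one_smul]
    · rw [h_column g (hg.trans_ne one_ne_zero), hg, one_pow, one_smul]
    · exact mem_homogeneousSubmodule_iff_multidegree.2 fun b hb => (mem_monomials.1
        ((mem_restrictSupport_iff K).1 hf.1.1.1.1 (mem_support_iff.2 hb))).1

lemma matrixSemiInvariants_inf_homogeneousSubmodule_eq_bot [Infinite K] {d : ℕ}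
    (hd : ¬(N + 1) ∣ d) : Subalgebra.toSubmodule (matrixSemiInvariants K (N + 1) m) ⊓
      homogeneousSubmodule (EntryIndex m N) K d = ⊥ := by
  refine (Submodule.eq_bot_iff _).2 fun f ⟨h_semi, h_hom⟩ => MvPolynomial.ext _ _ fun b => ?_
  by_contra hb
  rw [Subalgebra.coe_toSubmodule, SetLike.mem_coe,
    mem_matrixSemiInvariants_iff_letterAction] at h_semi
  have h_deg := sum_multidegree_eq_of_forall_det_eq_one h_semi.1 hb 0
  rw [mem_homogeneousSubmodule_iff_multidegree.1 h_hom b hb] at h_deg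
  exact hd (Dvd.intro _ h_deg.symm)

theorem finrank_matrixSemiInvariants_inf_homogeneousSubmodule_eq (K L : Type) [Field K] [Field L]
    [Infinite K] [Infinite L] (m N d : ℕ) :
    Module.finrank K ↥(Subalgebra.toSubmodule (matrixSemiInvariants K (N + 1) m) ⊓
        homogeneousSubmodule (EntryIndex m N) K d) =
      Module.finrank L ↥(Subalgebra.toSubmodule (matrixSemiInvariants L (N + 1) m) ⊓
        homogeneousSubmodule (EntryIndex m N) L d) := by
  by_cases hd : (N + 1) ∣ d
  · obtain ⟨k, rfl⟩ := hd
    rw [matrixSemiInvariants_inf_homogeneousSubmodule, finrank_bihighestWeightSpace,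
      matrixSemiInvariants_inf_homogeneousSubmodule, finrank_bihighestWeightSpace]
  · rw [matrixSemiInvariants_inf_homogeneousSubmodule_eq_bot hd, finrank_bot,
      matrixSemiInvariants_inf_homogeneousSubmodule_eq_bot hd, finrank_bot]

end SemiInvariants

/-! ### From conjugation to left-right multiplication -/

section Scaling

variable {K : Type} [Field K] [Infinite K]

lemma isWeightedHomogeneous_iff_eval {σ : Type*} {w : σ → ℕ} {c : ℕ} {f : MvPolynomial σ K} :
    IsWeightedHomogeneous w f c ↔
      ∀ (t : K) x, eval (fun v => t ^ w v * x v) f = t ^ c * eval x f := by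
  have h_eval (t : K) (x : σ → K) : eval (fun v => t ^ w v * x v) f =
      eval x (∑ b ∈ f.support, monomial b (t ^ Finsupp.weight w b * coeff b f)) := by
    rw [eval_eq, map_sum]
    refine Finset.sum_congr rfl fun b _ => ?_
    have h_weight : Finsupp.weight w b = ∑ v ∈ b.support, w v * b v := by
      simp [Finsupp.weight_apply, Finsupp.sum, mul_comm]
    rw [eval_monomial, Finsupp.prod, h_weight, ← Finset.prod_pow_eq_pow_sum]
    simp only [mul_pow, Finset.prod_mul_distrib, pow_mul]
    ring
  simp only [h_eval]
  constructor
  · intro hf t x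
    rw [map_sum, eval_eq, Finset.mul_sum]
    refine Finset.sum_congr rfl fun b hb => ?_
    rw [hf (mem_support_iff.1 hb), eval_monomial, mul_assoc]
    rfl
  · intro hf b hb
    refine eq_of_forall_pow_eq (K := K) fun t _ => ?_
    have h_smul : ∑ b ∈ f.support, monomial b (t ^ Finsupp.weight w b * coeff b f) = t ^ c • f :=
      MvPolynomial.funext fun x => by rw [hf, smul_eval]
    have h_coeff := congrArg (coeff b) h_smul
    classical
    simp only [coeff_sum, coeff_monomial, Finset.sum_ite_eq', if_pos (mem_support_iff.2 hb),
      coeff_smul, smul_eq_mul] at h_coeff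
    exact mul_right_cancel₀ hb h_coeff

variable {m N d : ℕ}

lemma mem_homogeneousSubmodule_iff_eval_smul {f : MvPolynomial (EntryIndex m N) K} :
    f ∈ homogeneousSubmodule (EntryIndex m N) K d ↔
      ∀ (t : K) (Y : Fin m → Matrix (Fin (N + 1)) (Fin (N + 1)) K),
        eval (matCoords fun l => t • Y l) f = t ^ d * eval (matCoords Y) f := by
  have h_coords (t : K) (Y : Fin m → Matrix (Fin (N + 1)) (Fin (N + 1)) K) :
      (fun v => t ^ (1 : EntryIndex m N → ℕ) v * matCoords Y v) =
        matCoords fun l => t • Y l := by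
    funext v
    simp [matCoords]
  simp only [← h_coords]
  exact isWeightedHomogeneous_iff_eval.trans
    ⟨fun h t Y => h t _, fun h t x => h t fun l => of fun i j => x (l, i, j)⟩

lemma forall_multidegree_castSucc_iff_eval_snoc {f : MvPolynomial (EntryIndex (m + 1) N) K} :
    (∀ b, coeff b f ≠ 0 → ∑ l : Fin m, multidegree b l.castSucc = d) ↔
      ∀ (t : K) (Y : Fin m → Matrix (Fin (N + 1)) (Fin (N + 1)) K) (Z),
        eval (matCoords (Fin.snoc (fun l => t • Y l) Z)) f =
          t ^ d * eval (matCoords (Fin.snoc Y Z)) f := by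
  let w : EntryIndex (m + 1) N → ℕ := fun v => (Fin.snoc 1 0 : Fin (m + 1) → ℕ) v.1
  have h_weight (b : EntryIndex (m + 1) N →₀ ℕ) :
      Finsupp.weight w b = ∑ l : Fin m, multidegree b l.castSucc := by
    rw [Finsupp.weight_apply, Finsupp.sum_fintype _ _ (by simp), Fintype.sum_prod_type,
      Fin.sum_univ_castSucc]
    simp [w, multidegree, Fintype.sum_prod_type]
  have h_coords (t : K) (Y : Fin m → Matrix (Fin (N + 1)) (Fin (N + 1)) K) (Z) :
      (fun v => t ^ w v * matCoords (Fin.snoc Y Z) v) =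
        matCoords (Fin.snoc (fun l => t • Y l) Z) := by
    funext ⟨l, i, j⟩
    induction l using Fin.lastCases with
    | last => simp [w, matCoords]
    | cast l => simp [w, matCoords]
  simp only [← h_weight, ← h_coords]
  refine isWeightedHomogeneous_iff_eval.trans ⟨fun h t Y Z => h t _, fun h t x => ?_⟩
  let W : Fin (m + 1) → Matrix (Fin (N + 1)) (Fin (N + 1)) K := fun l => of fun i j => x (l, i, j)
  have h_snoc := h t (Fin.init W) (W (Fin.last m))
  rwa [Fin.snoc_init_self] at h_snoc

end Scaling

section Substitution

variable {K : Type} [Field K] {m N : ℕ}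

/-- The `l`-th generic matrix, whose entries are the coordinate functions of the `l`-th matrix of a
tuple. -/
noncomputable def genericMatrix (K : Type) [Field K] (m N : ℕ) (l : Fin m) :
    Matrix (Fin (N + 1)) (Fin (N + 1)) (MvPolynomial (EntryIndex m N) K) :=
  of fun i j => X (l, i, j)

/-- Substitution of a tuple of matrices over a `K`-algebra into a polynomial function of tuples. -/
noncomputable def substituteTuple {A : Type*} [CommRing A] [Algebra K A]
    (Z : Fin m → Matrix (Fin (N + 1)) (Fin (N + 1)) A) : MvPolynomial (EntryIndex m N) K →ₐ[K] A :=
  aeval fun v => Z v.1 v.2.1 v.2.2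

/-- The pullback of functions along `(Y₁, …, Yₘ) ↦ (Y₁, …, Yₘ, 1)`. -/
noncomputable def setLastOne (K : Type) [Field K] (m N : ℕ) :
    MvPolynomial (EntryIndex (m + 1) N) K →ₐ[K] MvPolynomial (EntryIndex m N) K :=
  substituteTuple (Fin.snoc (genericMatrix K m N) 1)

/-- The pullback of functions along `(Y₁, …, Yₘ, Z) ↦ (Y₁ * adj Z, …, Yₘ * adj Z)`. -/
noncomputable def mulAdjugateLast (K : Type) [Field K] (m N : ℕ) :
    MvPolynomial (EntryIndex m N) K →ₐ[K] MvPolynomial (EntryIndex (m + 1) N) K :=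
  substituteTuple fun l =>
    genericMatrix K (m + 1) N l.castSucc * (genericMatrix K (m + 1) N (Fin.last m)).adjugate

lemma mapMatrix_eval_genericMatrix (Y : Fin m → Matrix (Fin (N + 1)) (Fin (N + 1)) K) (l : Fin m) :
    (eval (matCoords Y)).mapMatrix (genericMatrix K m N l) = Y l := by
  ext i j
  simp [genericMatrix, matCoords]

lemma eval_substituteTuple {m' : ℕ} (Z : Fin m → Matrix (Fin (N + 1)) (Fin (N + 1))
      (MvPolynomial (EntryIndex m' N) K))
    (f : MvPolynomial (EntryIndex m N) K) (Y : Fin m' → Matrix (Fin (N + 1)) (Fin (N + 1)) K) :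
    eval (matCoords Y) (substituteTuple Z f) =
      eval (matCoords fun l => (eval (matCoords Y)).mapMatrix (Z l)) f := by
  suffices (aeval (matCoords Y)).comp (substituteTuple Z) =
      aeval (matCoords fun l => (eval (matCoords Y)).mapMatrix (Z l)) from DFunLike.congr_fun this f
  ext1 v
  simp [substituteTuple, matCoords]

lemma eval_setLastOne (f : MvPolynomial (EntryIndex (m + 1) N) K)
    (Y : Fin m → Matrix (Fin (N + 1)) (Fin (N + 1)) K) :
    eval (matCoords Y) (setLastOne K m N f) = eval (matCoords (Fin.snoc Y 1)) f := by
  rw [setLastOne, eval_substituteTuple]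
  congr 3
  funext l
  induction l using Fin.lastCases with
  | last => simp
  | cast l => simp only [Fin.snoc_castSucc, mapMatrix_eval_genericMatrix]

lemma eval_mulAdjugateLast (f : MvPolynomial (EntryIndex m N) K)
    (Y : Fin (m + 1) → Matrix (Fin (N + 1)) (Fin (N + 1)) K) :
    eval (matCoords Y) (mulAdjugateLast K m N f) =
      eval (matCoords fun l => Y l.castSucc * (Y (Fin.last m)).adjugate) f := by
  simp only [mulAdjugateLast, eval_substituteTuple, map_mul, RingHom.map_adjugate,
    mapMatrix_eval_genericMatrix]

lemma setLastOne_mulAdjugateLast [Infinite K] (f : MvPolynomial (EntryIndex m N) K) :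
    setLastOne K m N (mulAdjugateLast K m N f) = f :=
  funext_matCoords fun Y => by simp [eval_setLastOne, eval_mulAdjugateLast]

end Substitution

section Invariants

variable {K : Type} [Field K] {m N d : ℕ}

lemma mem_matrixInvariants {n : ℕ} {f : MvPolynomial (Fin m × Fin n × Fin n) K} :
    f ∈ matrixInvariants K n m ↔
      ∀ (A : GeneralLinearGroup (Fin n) K) (Y : Fin m → Matrix (Fin n) (Fin n) K),
        eval (matCoords fun l => A.val * Y l * (A⁻¹).val) f = eval (matCoords Y) f := by
  simp only [matrixInvariants, Algebra.mem_iInf, AlgHom.mem_equalizer, aeval_eq_eval]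

variable (K m N d) in
/-- The semi-invariants of weight `det ^ d` on both sides, of degree `d` in the first `m` of `m + 1`
matrices together. -/
noncomputable abbrev semiInvariantsOfWeight : Submodule K (MvPolynomial (EntryIndex (m + 1) N) K) :=
  bihighestWeightSpace (m + 1) N K ((N + 1) * d) (fun δ => ∑ l : Fin m, δ l.castSucc = d) fun _ => d

variable [Infinite K]

lemma letterAction_columnLetter_mulAdjugateLast {f : MvPolynomial (EntryIndex m N) K}
    (hf : f ∈ homogeneousSubmodule (EntryIndex m N) K d)
    (g : Matrix (Fin (N + 1)) (Fin (N + 1)) K) :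
    letterAction (columnLetter (m + 1) N) g (mulAdjugateLast K m N f) =
      g.det ^ d • mulAdjugateLast K m N f := by
  refine funext_matCoords fun Y => ?_
  rw [eval_letterAction_columnLetter, smul_eval, eval_mulAdjugateLast, eval_mulAdjugateLast,
    ← mem_homogeneousSubmodule_iff_eval_smul.1 hf]
  congr 3
  funext l
  rw [adjugate_mul_distrib, Matrix.mul_assoc, ← Matrix.mul_assoc g, mul_adjugate]
  simp

lemma letterAction_rowLetter_mulAdjugateLast {f : MvPolynomial (EntryIndex m N) K}
    (h_inv : f ∈ matrixInvariants K (N + 1) m)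
    (h_hom : f ∈ homogeneousSubmodule (EntryIndex m N) K d)
    {g : Matrix (Fin (N + 1)) (Fin (N + 1)) K} (hg : g.det ≠ 0) :
    letterAction (rowLetter (m + 1) N) g (mulAdjugateLast K m N f) =
      g.det ^ d • mulAdjugateLast K m N f := by
  refine funext_matCoords fun Y => ?_
  let A := GeneralLinearGroup.mkOfDetNeZero gᵀ (by rwa [det_transpose])
  have h_adjugate : gᵀ.adjugate = g.det • (A⁻¹).val := by
    calc gᵀ.adjugate = gᵀ.adjugate * gᵀ * (A⁻¹).val := by
          rw [Matrix.mul_assoc, show gᵀ * (A⁻¹).val = 1 from A.mul_inv, Matrix.mul_one]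
      _ = g.det • (A⁻¹).val := by rw [adjugate_mul, det_transpose, smul_mul, Matrix.one_mul]
  rw [eval_letterAction_rowLetter, smul_eval, eval_mulAdjugateLast, eval_mulAdjugateLast,
    ← mem_matrixInvariants.1 h_inv A fun l => Y l.castSucc * (Y (Fin.last m)).adjugate,
    ← mem_homogeneousSubmodule_iff_eval_smul.1 h_hom]
  congr 3
  funext l
  rw [adjugate_mul_distrib, h_adjugate]
  simp [A, Matrix.mul_assoc, GeneralLinearGroup.mkOfDetNeZero]

lemma mulAdjugateLast_mem {f : MvPolynomial (EntryIndex m N) K}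
    (hf : f ∈ Subalgebra.toSubmodule (matrixInvariants K (N + 1) m) ⊓
      homogeneousSubmodule (EntryIndex m N) K d) :
    mulAdjugateLast K m N f ∈ semiInvariantsOfWeight K m N d := by
  obtain ⟨h_inv, h_hom⟩ := hf
  refine mem_bihighestWeightSpace_rectangular.2 ⟨forall_multidegree_castSucc_iff_eval_snoc.2
    fun t Y Z => ?_, fun g => letterAction_rowLetter_mulAdjugateLast h_inv h_hom,
    fun g _ => letterAction_columnLetter_mulAdjugateLast h_hom g⟩
  simp only [eval_mulAdjugateLast, Fin.snoc_castSucc, Fin.snoc_last, smul_mul]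
  exact mem_homogeneousSubmodule_iff_eval_smul.1 h_hom t _

lemma setLastOne_mem {f : MvPolynomial (EntryIndex (m + 1) N) K}
    (hf : f ∈ semiInvariantsOfWeight K m N d) :
    setLastOne K m N f ∈ Subalgebra.toSubmodule (matrixInvariants K (N + 1) m) ⊓
      homogeneousSubmodule (EntryIndex m N) K d := by
  obtain ⟨h_deg, h_row, h_column⟩ := mem_bihighestWeightSpace_rectangular.1 hf
  refine ⟨mem_matrixInvariants.2 fun A Y => ?_,
    mem_homogeneousSubmodule_iff_eval_smul.2 fun t Y => ?_⟩
  · have h_conj : letterAction (rowLetter (m + 1) N) A.valᵀ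
        (letterAction (columnLetter (m + 1) N) (A⁻¹).val f) = f := by
      have h_transpose : A.valᵀ.det ≠ 0 := by rw [det_transpose]; exact A.det_ne_zero
      rw [h_column _ (A⁻¹).det_ne_zero, map_smul, h_row _ h_transpose, smul_smul, det_transpose,
        ← mul_pow, ← det_mul, ← Units.val_mul, inv_mul_cancel]
      simp
    rw [eval_setLastOne, eval_setLastOne]
    nth_rw 2 [← h_conj]
    rw [eval_letterAction_rowLetter, eval_letterAction_columnLetter]
    congr 3
    funext l
    induction l using Fin.lastCases with
    | last => simp
    | cast l => simp
  · simp only [eval_setLastOne]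
    exact forall_multidegree_castSucc_iff_eval_snoc.1 h_deg t Y 1

lemma eq_zero_of_setLastOne_eq_zero {f : MvPolynomial (EntryIndex (m + 1) N) K}
    (hf : f ∈ semiInvariantsOfWeight K m N d) (h_zero : setLastOne K m N f = 0) : f = 0 := by
  obtain ⟨-, -, h_column⟩ := mem_bihighestWeightSpace_rectangular.1 hf
  have h_det (Y) : eval (matCoords Y) (genericMatrix K (m + 1) N (Fin.last m)).det =
      (Y (Fin.last m)).det := by
    rw [RingHom.map_det, mapMatrix_eval_genericMatrix]
  have h_mul : (genericMatrix K (m + 1) N (Fin.last m)).det * f = 0 := by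
    refine funext_matCoords fun Y => ?_
    rw [map_mul, h_det, map_zero, mul_eq_zero]
    refine or_iff_not_imp_left.2 fun hY => ?_
    have h_factor : Y = fun l => (Fin.snoc (fun l => Y l.castSucc * (Y (Fin.last m))⁻¹) 1 :
        Fin (m + 1) → Matrix _ _ K) l * Y (Fin.last m) := by
      funext l
      induction l using Fin.lastCases with
      | last => simp
      | cast l => simp [Matrix.mul_assoc, nonsing_inv_mul _ (isUnit_iff_ne_zero.2 hY)]
    rw [h_factor, ← eval_letterAction_columnLetter, h_column _ hY, smul_eval, ← eval_setLastOne,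
      h_zero, map_zero, mul_zero]
  refine (mul_eq_zero.1 h_mul).resolve_left fun h => ?_
  simpa [h] using h_det fun _ => 1

lemma finrank_matrixInvariants_inf_homogeneousSubmodule :
    Module.finrank K ↥(Subalgebra.toSubmodule (matrixInvariants K (N + 1) m) ⊓
        homogeneousSubmodule (EntryIndex m N) K d) =
      Module.finrank K ↥(semiInvariantsOfWeight K m N d) := by
  let setOne := (setLastOne K m N).toLinearMap.restrict (p := semiInvariantsOfWeight K m N d)
    fun _ => setLastOne_mem
  refine (LinearEquiv.finrank_eq (LinearEquiv.ofBijective setOne ⟨?_, ?_⟩)).symm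
  · rw [← LinearMap.ker_eq_bot, LinearMap.ker_eq_bot']
    intro f hf
    exact Subtype.ext (eq_zero_of_setLastOne_eq_zero f.2 (congrArg Subtype.val hf))
  · rintro ⟨f, hf⟩
    exact ⟨⟨mulAdjugateLast K m N f, mulAdjugateLast_mem hf⟩,
      Subtype.ext (setLastOne_mulAdjugateLast f)⟩

theorem finrank_matrixInvariants_inf_homogeneousSubmodule_eq (K L : Type) [Field K] [Field L]
    [Infinite K] [Infinite L] (m N d : ℕ) :
    Module.finrank K ↥(Subalgebra.toSubmodule (matrixInvariants K (N + 1) m) ⊓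
        homogeneousSubmodule (EntryIndex m N) K d) =
      Module.finrank L ↥(Subalgebra.toSubmodule (matrixInvariants L (N + 1) m) ⊓
        homogeneousSubmodule (EntryIndex m N) L d) := by
  rw [finrank_matrixInvariants_inf_homogeneousSubmodule, finrank_bihighestWeightSpace,
    finrank_matrixInvariants_inf_homogeneousSubmodule, finrank_bihighestWeightSpace]

end Invariants

theorem stmt_15_general (K L : Type) [Field K] [Infinite K] [Field L] [Infinite L]
    (n m : ℕ) (hn : 0 < n) (d : ℕ) :
    Module.finrank K ↥(Subalgebra.toSubmodule (matrixSemiInvariants K n m) ⊓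
          homogeneousSubmodule (Fin m × Fin n × Fin n) K d)
        = Module.finrank L ↥(Subalgebra.toSubmodule (matrixSemiInvariants L n m) ⊓
          homogeneousSubmodule (Fin m × Fin n × Fin n) L d) ∧
      Module.finrank K ↥(Subalgebra.toSubmodule (matrixInvariants K n m) ⊓
          homogeneousSubmodule (Fin m × Fin n × Fin n) K d)
        = Module.finrank L ↥(Subalgebra.toSubmodule (matrixInvariants L n m) ⊓
          homogeneousSubmodule (Fin m × Fin n × Fin n) L d) := by
  obtain ⟨N, rfl⟩ := Nat.exists_eq_add_one.2 hn
  exact ⟨finrank_matrixSemiInvariants_inf_homogeneousSubmodule_eq K L m N d,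
    finrank_matrixInvariants_inf_homogeneousSubmodule_eq K L m N d⟩

/-- The Hilbert series of `R(n,m)` and `S(n,m)` are independent of the
underlying algebraically closed field: for every degree `d`, the dimensions of the degree-`d`
homogeneous components over `K` and over `L` agree. -/
theorem stmt_15 (K L : Type) [Field K] [IsAlgClosed K] [Field L] [IsAlgClosed L]
    (n m : ℕ) (hn : 0 < n) (hm : 0 < m) (d : ℕ) :
    Module.finrank K ↥(Subalgebra.toSubmodule (matrixSemiInvariants K n m) ⊓
          homogeneousSubmodule (Fin m × Fin n × Fin n) K d)
        = Module.finrank L ↥(Subalgebra.toSubmodule (matrixSemiInvariants L n m) ⊓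
          homogeneousSubmodule (Fin m × Fin n × Fin n) L d) ∧
      Module.finrank K ↥(Subalgebra.toSubmodule (matrixInvariants K n m) ⊓
          homogeneousSubmodule (Fin m × Fin n × Fin n) K d)
        = Module.finrank L ↥(Subalgebra.toSubmodule (matrixInvariants L n m) ⊓
          homogeneousSubmodule (Fin m × Fin n × Fin n) L d) :=
  stmt_15_general K L n m hn d
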